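/- arXiv:2009.00446 — 9 statements merged into one kernel-verified Lean document; each statement's English description precedes it below -/
import Mathlib

section
/- For every integer n ≥ 1 and every complex number s that is not a nonpositive integer, ∑_{j=0}^{n−1} Γ(2j+s) 𝓔(2j)/Γ(2j+1) = 2^{2n} Γ(s+2n) ∑_{k=0}^{2n−1} (2^{−k} − 2^{2n−2k}) B_{2n−k} / (Γ(k+1) Γ(2n−k+1) (2n−1+s−k)). -/
open Filter

/-- `E j` is the Euler number `𝓔(2j)`, characterized by the convergent series
`∑_{k=0}^∞ (-1)^k (k+1/2)^{-(2j+1)} = (-1)^j π^{2j+1} 𝓔(2j) / (2 Γ(2j+1))`. -/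
def eulerChar (E : ℕ → ℝ) : Prop :=
  ∀ j : ℕ, Filter.Tendsto
    (fun n => ∑ k ∈ Finset.range n, (-1 : ℝ) ^ k / ((k : ℝ) + 1/2) ^ (2*j+1))
    Filter.atTop
    (nhds ((-1 : ℝ) ^ j * Real.pi ^ (2*j+1) * E j / (2 * (Nat.factorial (2*j)))))

lemma gamma_partial (d : ℕ) : ∀ z : ℂ, (∀ k : ℕ, z ≠ -(k : ℂ)) →
    Complex.Gamma z * (d.factorial : ℂ) = Complex.Gamma (z + d + 1) *
      ∑ i ∈ Finset.range (d + 1), (d.choose i : ℂ) * ((-1) ^ i / (z + i)) := by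
  induction d with
  | zero =>
    intro z hz
    have h0 : z ≠ 0 := by simpa using hz 0
    simp [Complex.Gamma_add_one z h0]
    field_simp
  | succ d ih =>
    intro z hz
    have h0 : z ≠ 0 := by simpa using hz 0
    have hz1 : ∀ k : ℕ, z + 1 ≠ -(k : ℂ) := by
      intro k hk
      apply hz (k + 1)
      push_cast
      linear_combination hk
    have hd : z + d + 1 ≠ 0 := by
      intro hk
      apply hz (d + 1)
      push_cast
      linear_combination hk
    have e1 := ih z hz
    have e2 := ih (z + 1) hz1
    have key := Finset.sum_choose_succ_mul (R := ℂ) (fun i _ => (-1) ^ i / (z + i)) d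
    have e3 : ∑ i ∈ Finset.range (d + 1), (d.choose i : ℂ) * ((-1) ^ (i + 1) / (z + ((i + 1 : ℕ) : ℂ)))
        = - ∑ i ∈ Finset.range (d + 1), (d.choose i : ℂ) * ((-1) ^ i / (z + 1 + i)) := by
      rw [← Finset.sum_neg_distrib]
      apply Finset.sum_congr rfl
      intro i _
      push_cast
      rw [show z + ((i : ℂ) + 1) = z + 1 + i by ring]
      ring
    have g1 : Complex.Gamma (z + ((d + 1 : ℕ) : ℂ) + 1) = (z + d + 1) * Complex.Gamma (z + d + 1) := by
      rw [← Complex.Gamma_add_one _ hd]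
      push_cast
      ring_nf
    have g2 : Complex.Gamma (z + 1 + d + 1) = (z + d + 1) * Complex.Gamma (z + d + 1) := by
      rw [← Complex.Gamma_add_one _ hd]
      ring_nf
    rw [g2, Complex.Gamma_add_one z h0] at e2
    rw [key, e3, g1, Nat.factorial_succ]
    push_cast
    linear_combination (z + d + 1) * e1 - e2

lemma bernoulliFun_add (n : ℕ) : ∀ x y : ℝ, bernoulliFun n (x + y) =
    ∑ l ∈ Finset.range (n + 1), (n.choose l : ℝ) * bernoulliFun l x * y ^ (n - l) := by
  induction n with
  | zero => intro x y; simp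
  | succ n ih =>
    intro x y
    have hder : ∀ y : ℝ, HasDerivAt (fun y => bernoulliFun (n + 1) (x + y) -
        ∑ l ∈ Finset.range (n + 1 + 1), ((n + 1).choose l : ℝ) * bernoulliFun l x * y ^ (n + 1 - l))
        0 y := by
      intro y
      have h1 : HasDerivAt (fun y => bernoulliFun (n + 1) (x + y))
          (((n + 1 : ℕ) : ℝ) * bernoulliFun n (x + y)) y := by
        have := (hasDerivAt_bernoulliFun (n + 1) (x + y)).comp_const_add x y
        simpa using this
      have h2 : HasDerivAt (fun y : ℝ => ∑ l ∈ Finset.range (n + 1 + 1),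
          ((n + 1).choose l : ℝ) * bernoulliFun l x * y ^ (n + 1 - l))
          (∑ l ∈ Finset.range (n + 1 + 1), ((n + 1).choose l : ℝ) * bernoulliFun l x *
            (((n + 1 - l : ℕ) : ℝ) * y ^ (n + 1 - l - 1))) y := by
        apply HasDerivAt.fun_sum
        intro l _
        exact (hasDerivAt_pow _ _).const_mul _
      have h3 := h1.sub h2
      convert! h3 using 1
      rw [Finset.sum_range_succ, ih, Finset.mul_sum]
      simp only [Nat.sub_self, Nat.cast_zero, zero_mul, mul_zero, add_zero]
      rw [eq_comm, sub_eq_zero]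
      apply Finset.sum_congr rfl
      intro l hl
      have hl' : l ≤ n := by simpa [Nat.lt_succ_iff] using hl
      have hc : ((n + 1).choose l : ℝ) * ((n + 1 - l : ℕ) : ℝ) = ((n + 1 : ℕ) : ℝ) * n.choose l := by
        have := Nat.choose_mul_succ_eq n l
        rw [mul_comm ((n+1 : ℕ) : ℝ)]
        exact_mod_cast this.symm
      rw [show n + 1 - l - 1 = n - l by omega]
      linear_combination (-(bernoulliFun l x * y ^ (n - l))) * hc
    have hc := is_const_of_deriv_eq_zero (fun y => (hder y).differentiableAt)
      (fun y => (hder y).deriv) y 0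
    have h0 : ∑ l ∈ Finset.range (n + 1 + 1),
        ((n + 1).choose l : ℝ) * bernoulliFun l x * (0 : ℝ) ^ (n + 1 - l)
        = bernoulliFun (n + 1) x := by
      rw [Finset.sum_range_succ, Finset.sum_eq_zero]
      · simp
      · intro l hl
        have : l < n + 1 := by simpa using hl
        rw [zero_pow (by omega)]
        ring
    simp only [h0, add_zero, sub_self] at hc
    linarith

/-- Euler numbers, all indices. -/
noncomputable def eulerAll (k : ℕ) : ℝ :=
  4 ^ (k + 1) / (2 * (k + 1)) * (bernoulliFun (k + 1) (3 / 4) - bernoulliFun (k + 1) (1 / 4))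

lemma three_quarter (k : ℕ) : bernoulliFun k (3 / 4) = (-1) ^ k * bernoulliFun k (1 / 4) := by
  rw [← bernoulliFun_eval_one_sub]
  norm_num

lemma eulerAll_odd (k : ℕ) : eulerAll (2 * k + 1) = 0 := by
  rw [eulerAll, three_quarter]
  simp [pow_succ, pow_mul]

lemma eulerAll_sum (m : ℕ) :
    (-1) ^ m * ∑ a ∈ Finset.range (m + 1), (m.choose a : ℝ) * eulerAll a =
      2 ^ (m + 1) * (1 - 2 ^ (m + 1)) * (bernoulli (m + 1) : ℝ) / (m + 1) := by
  have h1 := bernoulliFun_add (m + 1) (3 / 4) (1 / 4)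
  have h2 := bernoulliFun_add (m + 1) (1 / 4) (1 / 4)
  rw [Finset.sum_range_succ'] at h1 h2
  have hs : ∑ a ∈ Finset.range (m + 1), (m.choose a : ℝ) * eulerAll a =
      4 ^ (m + 1) / (2 * (m + 1)) * (bernoulliFun (m + 1) 1 - bernoulliFun (m + 1) 2⁻¹) := by
    rw [show (1 : ℝ) = 3 / 4 + 1 / 4 by norm_num, show (2 : ℝ)⁻¹ = 1 / 4 + 1 / 4 by norm_num,
      h1, h2]
    simp only [bernoulliFun_zero]
    rw [add_sub_add_right_eq_sub, ← Finset.sum_sub_distrib, Finset.mul_sum]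
    apply Finset.sum_congr rfl
    intro a ha
    have ha' : a ≤ m := by simpa [Nat.lt_succ_iff] using ha
    obtain ⟨c, rfl⟩ := Nat.exists_eq_add_of_le ha'
    have hc : (((a + c) + 1 : ℕ) : ℝ) * (a + c).choose a = ((a + c + 1).choose (a + 1) : ℝ) * ((a + 1 : ℕ) : ℝ) := by
      exact_mod_cast Nat.add_one_mul_choose_eq (a + c) a
    rw [eulerAll, show a + c + 1 - (a + 1) = c by omega]
    have p1 : ((a : ℝ) + 1) ≠ 0 := by positivity
    have p2 : ((a : ℝ) + c + 1) ≠ 0 := by positivity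
    push_cast at hc ⊢
    have hp : (4 : ℝ) ^ (a + c + 1) * (1 / 4) ^ c = 4 ^ (a + 1) := by
      rw [show a + c + 1 = a + 1 + c by ring, pow_add, mul_assoc, ← mul_pow]; norm_num
    set D := bernoulliFun (a + 1) (3 / 4)
    set D' := bernoulliFun (a + 1) (1 / 4)
    have : (4 : ℝ) ^ (a + c + 1) / (2 * (a + c + 1)) *
      (((a + c + 1).choose (a + 1) : ℝ) * D * (1 / 4) ^ c - ((a + c + 1).choose (a + 1) : ℝ) * D' * (1 / 4) ^ c)
      = 4 ^ (a + 1) / (2 * (a + c + 1)) * ((a + c + 1).choose (a + 1) : ℝ) * (D - D') := by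
      rw [← hp]; ring
    norm_num at this ⊢
    rw [this]
    field_simp
    linear_combination (D - D') * hc
  rw [hs, bernoulliFun_eval_half, bernoulliFun_eval_one, bernoulliFun_eval_zero]
  have p2 : ((m : ℝ) + 1) ≠ 0 := by positivity
  have p4 : (4 : ℝ) ^ (m + 1) = 2 ^ (m + 1) * 2 ^ (m + 1) := by rw [← mul_pow]; norm_num
  rcases Nat.even_or_odd m with hm | hm
  · rcases Nat.eq_zero_or_pos m with rfl | hpos
    · norm_num
    · rw [bernoulli_eq_zero_of_odd hm.add_one (by omega), if_neg (by omega)]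
      simp
  · rw [if_neg (by rintro h; have : m = 0 := by omega
                   subst this; simp at hm), hm.neg_one_pow, p4]
    field_simp
    ring

lemma sin_partial (j n : ℕ) : ∑ i ∈ Finset.range (2 * n),
    1 / (i : ℝ) ^ (2 * j + 1) * Real.sin (2 * Real.pi * i * (1 / 4)) =
    ∑ k ∈ Finset.range n, (-1 : ℝ) ^ k / (2 * (k : ℝ) + 1) ^ (2 * j + 1) := by
  induction n with
  | zero => simp
  | succ n ih =>
    rw [show 2 * (n + 1) = 2 * n + 1 + 1 by ring, Finset.sum_range_succ, Finset.sum_range_succ, ih,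
      Finset.sum_range_succ]
    have e1 : Real.sin (2 * Real.pi * ((2 * n : ℕ) : ℝ) * (1 / 4)) = 0 := by
      rw [← Real.sin_nat_mul_pi n]; congr 1; push_cast; ring
    have e2 : Real.sin (2 * Real.pi * ((2 * n + 1 : ℕ) : ℝ) * (1 / 4)) = (-1) ^ n := by
      rw [← Real.cos_nat_mul_pi n, ← Real.sin_add_pi_div_two]; congr 1; push_cast; ring
    rw [e1, e2]
    push_cast
    ring

lemma eulerAll_even (j : ℕ) : eulerAll (2 * j) =
    - (4 ^ (2 * j + 1) / (2 * j + 1) * bernoulliFun (2 * j + 1) (1 / 4)) := by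
  rw [eulerAll, three_quarter, Odd.neg_one_pow ⟨j, rfl⟩]
  push_cast
  field_simp
  ring

lemma chi_tendsto (j : ℕ) : Tendsto (fun n => ∑ k ∈ Finset.range n,
    (-1 : ℝ) ^ k / (2 * (k : ℝ) + 1) ^ (2 * j + 1)) atTop
    (nhds ((-1 : ℝ) ^ (j + 1) * (2 * Real.pi) ^ (2 * j + 1) / 2 / (2 * j + 1).factorial *
        bernoulliFun (2 * j + 1) (1 / 4))) := by
  rcases Nat.eq_zero_or_pos j with rfl | hj
  · have := Real.tendsto_sum_pi_div_four
    simp only [mul_zero, zero_add, pow_one, bernoulliFun_one]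
    convert! this using 2
    norm_num
    ring
  · have h := (hasSum_one_div_nat_pow_mul_sin (k := j) (by omega) (x := 1 / 4)
      (by constructor <;> norm_num)).tendsto_sum_nat
    have h2 := h.comp (tendsto_id.const_mul_atTop' (by norm_num : 0 < 2))
    simp only [Function.comp_def, id, sin_partial] at h2
    simpa [bernoulliFun, Polynomial.eval_map_algebraMap] using h2

lemma euler_eq (E : ℕ → ℝ) (hE : eulerChar E) (j : ℕ) : E j = eulerAll (2 * j) := by
  have h1 := hE j
  have h2 := (chi_tendsto j).const_mul ((2 : ℝ) ^ (2 * j + 1))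
  have h3 := tendsto_nhds_unique h1 (h2.congr fun n => by
    rw [Finset.mul_sum]
    apply Finset.sum_congr rfl
    intro k _
    rw [show 2 * (k : ℝ) + 1 = 2 * (k + 1 / 2) by ring, mul_pow]
    field_simp)
  rw [eulerAll_even]
  have p1 : ((2 * j).factorial : ℝ) ≠ 0 := by positivity
  have p2 : Real.pi ^ (2 * j + 1) ≠ 0 := by positivity
  have p4 : (4 : ℝ) ^ (2 * j + 1) = 2 ^ (2 * j + 1) * 2 ^ (2 * j + 1) := by rw [← mul_pow]; norm_num
  have p5 : (2 * (j : ℝ) + 1) ≠ 0 := by positivity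
  rw [Nat.factorial_succ, mul_pow, pow_succ (-1 : ℝ) j] at h3
  have p6 : (-1 : ℝ) ^ j ≠ 0 := by simp
  push_cast at h3
  rw [p4]
  generalize (-1 : ℝ) ^ j = u at *
  generalize (2 : ℝ) ^ (2 * j + 1) = v at *
  generalize Real.pi ^ (2 * j + 1) = w at *
  field_simp at h3 ⊢
  linear_combination h3

lemma sum_even_range (f : ℕ → ℂ) (hf : ∀ k, f (2 * k + 1) = 0) (n : ℕ) :
    ∑ j ∈ Finset.range n, f (2 * j) = ∑ a ∈ Finset.range (2 * n), f a := by
  induction n with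
  | zero => simp
  | succ n ih =>
    rw [show 2 * (n + 1) = 2 * n + 1 + 1 by ring, Finset.sum_range_succ, ih, Finset.sum_range_succ,
      Finset.sum_range_succ, hf, add_zero]

/-- For every `n ≥ 1` and complex `s` which is not a nonpositive integer:
`∑_{j=0}^{n-1} Γ(2j+s) 𝓔(2j)/Γ(2j+1) = 2^{2n} Γ(s+2n) ∑_{k=0}^{2n-1}
  (2^{-k} - 2^{2n-2k}) B_{2n-k} / (Γ(k+1) Γ(2n-k+1) (2n-1+s-k))`. -/
theorem stmt_3 (n : ℕ) (hn : 1 ≤ n) (s : ℂ) (hs : ∀ k : ℕ, s ≠ -(k : ℂ))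
    (E : ℕ → ℝ) (hE : eulerChar E) :
    ∑ j ∈ Finset.range n,
        Complex.Gamma (2 * (j : ℂ) + s) * (E j : ℂ) / Complex.Gamma (2 * (j : ℂ) + 1)
      = 2 ^ (2*n) * Complex.Gamma (s + 2 * (n : ℂ)) *
          ∑ k ∈ Finset.range (2*n),
            ((2 : ℂ) ^ (-(k : ℤ)) - (2 : ℂ) ^ (2 * (n : ℤ) - 2 * (k : ℤ))) *
              ((bernoulli (2*n - k) : ℚ) : ℂ) /
              (Complex.Gamma ((k : ℂ) + 1) * Complex.Gamma (((2*n - k : ℕ) : ℂ) + 1) *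
                (2 * (n : ℂ) - 1 + s - (k : ℂ))) := by
  have hL : ∑ j ∈ Finset.range n,
        Complex.Gamma (2 * (j : ℂ) + s) * (E j : ℂ) / Complex.Gamma (2 * (j : ℂ) + 1)
      = ∑ a ∈ Finset.range (2 * n), Complex.Gamma (s + a) * (eulerAll a : ℂ) / (a.factorial : ℂ) := by
    rw [← sum_even_range (fun a => Complex.Gamma (s + a) * (eulerAll a : ℂ) / (a.factorial : ℂ))
      (by intro k; simp [eulerAll_odd])]
    apply Finset.sum_congr rfl
    intro j _
    have := Complex.Gamma_nat_eq_factorial (2 * j)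
    push_cast at this
    rw [this, euler_eq E hE j, add_comm]
    push_cast
    rfl
  rw [hL]
  have hne : ∀ a : ℕ, s + a ≠ 0 := by
    intro a h
    exact hs a (by linear_combination h)
  have hG : ∀ a ∈ Finset.range (2 * n),
      Complex.Gamma (s + a) * (eulerAll a : ℂ) / (a.factorial : ℂ) =
      ∑ i ∈ Finset.range (2 * n - a), (fun a i : ℕ => Complex.Gamma (s + 2 * n) *
        ((eulerAll a : ℂ) / (a.factorial : ℂ) *
        ((-1) ^ i / ((i.factorial : ℂ) * ((2 * n - 1 - (a + i)).factorial : ℂ) * (s + (a + i : ℕ)))))) a i := by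
    intro a ha
    have ha' : a < 2 * n := by simpa using ha
    obtain ⟨d, hd⟩ := Nat.exists_eq_add_of_lt ha'
    have hz : ∀ k : ℕ, s + a ≠ -(k : ℂ) := by
      intro k h
      apply hne (a + k)
      push_cast
      linear_combination h
    have g := gamma_partial d (s + a) hz
    have hd2 : (2 * n : ℂ) = a + d + 1 := by exact_mod_cast hd
    rw [show s + a + d + 1 = s + 2 * n by rw [hd2]; ring] at g
    have hf : (d.factorial : ℂ) ≠ 0 := by exact_mod_cast d.factorial_ne_zero
    rw [eq_div_of_mul_eq hf g, show 2 * n - a = d + 1 by omega]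
    rw [Finset.mul_sum, Finset.sum_div, Finset.sum_mul, Finset.sum_div]
    apply Finset.sum_congr rfl
    intro i hi
    have hi' : i ≤ d := by simpa [Nat.lt_succ_iff] using hi
    beta_reduce
    rw [show 2 * n - 1 - (a + i) = d - i by omega, Nat.cast_choose ℂ hi']
    have f1 : (i.factorial : ℂ) ≠ 0 := by exact_mod_cast i.factorial_ne_zero
    have f2 : ((d - i).factorial : ℂ) ≠ 0 := by exact_mod_cast (d - i).factorial_ne_zero
    have f3 : (a.factorial : ℂ) ≠ 0 := by exact_mod_cast a.factorial_ne_zero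
    have f4 := hne (a + i)
    push_cast at f4 ⊢
    rw [← add_assoc] at f4 ⊢
    field_simp
  rw [Finset.sum_congr rfl hG, ← Finset.sum_range_diag_flip, ← Finset.sum_range_reflect
    (fun k => ((2 : ℂ) ^ (-(k : ℤ)) - (2 : ℂ) ^ (2 * (n : ℤ) - 2 * (k : ℤ))) *
              ((bernoulli (2*n - k) : ℚ) : ℂ) /
              (Complex.Gamma ((k : ℂ) + 1) * Complex.Gamma (((2*n - k : ℕ) : ℂ) + 1) *
                (2 * (n : ℂ) - 1 + s - (k : ℂ)))), Finset.mul_sum]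
  apply Finset.sum_congr rfl
  intro m hm
  have hm' : m < 2 * n := by simpa using hm
  obtain ⟨k, hk⟩ := Nat.exists_eq_add_of_lt hm'
  have hkc : (2 * n : ℂ) = m + k + 1 := by exact_mod_cast hk
  have hkz : (2 * n : ℤ) = m + k + 1 := by exact_mod_cast hk
  have hk1 : 2 * n - 1 - m = k := by omega
  have hk2 : 2 * n - k = m + 1 := by omega
  rw [hk1, hk2, Complex.Gamma_nat_eq_factorial, Complex.Gamma_nat_eq_factorial, hkz, hkc]
  have f1 : (k.factorial : ℂ) ≠ 0 := by exact_mod_cast k.factorial_ne_zero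
  have f2 : (m.factorial : ℂ) ≠ 0 := by exact_mod_cast m.factorial_ne_zero
  have f3 := hne m
  have f4 : (m + 1 : ℂ) ≠ 0 := by exact_mod_cast m.succ_ne_zero
  have hsum : ∀ a ∈ Finset.range (m + 1), Complex.Gamma (s + (m + k + 1)) *
        ((eulerAll a : ℂ) / (a.factorial : ℂ) *
        ((-1) ^ (m - a) / (((m - a).factorial : ℂ) * ((2 * n - 1 - (a + (m - a))).factorial : ℂ) *
          (s + (a + (m - a) : ℕ))))) =
      Complex.Gamma (s + (m + k + 1)) / (k.factorial * m.factorial * (s + m)) * 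
        ((-1) ^ m * ((m.choose a : ℂ) * (eulerAll a : ℂ))) := by
    intro a ha
    have ha' : a ≤ m := by simpa [Nat.lt_succ_iff] using ha
    rw [show a + (m - a) = m by omega, hk1, Nat.cast_choose ℂ ha']
    have g1 : (a.factorial : ℂ) ≠ 0 := by exact_mod_cast a.factorial_ne_zero
    have g2 : ((m - a).factorial : ℂ) ≠ 0 := by exact_mod_cast (m - a).factorial_ne_zero
    have hsg : (-1 : ℂ) ^ (m - a) * (eulerAll a : ℂ) = (-1) ^ m * (eulerAll a : ℂ) := by
      rcases Nat.even_or_odd a with h | ⟨b, rfl⟩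
      · conv_rhs => rw [← Nat.sub_add_cancel ha', pow_add, h.neg_one_pow, mul_one]
      · simp [eulerAll_odd]
    generalize Complex.Gamma (s + (m + k + 1)) = G
    field_simp
    linear_combination G * hsg
  rw [Finset.sum_congr rfl hsum, ← Finset.mul_sum, ← Finset.mul_sum]
  have key : (-1 : ℂ) ^ m * ∑ a ∈ Finset.range (m + 1), (m.choose a : ℂ) * (eulerAll a : ℂ) =
      2 ^ (m + 1) * (1 - 2 ^ (m + 1)) * (bernoulli (m + 1) : ℂ) / (m + 1) := by
    exact_mod_cast congrArg (fun x : ℝ => (x : ℂ)) (eulerAll_sum m)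
  rw [key, hk, Nat.factorial_succ]
  have z1 : (2 : ℂ) ^ (-(k : ℤ)) = 1 / 2 ^ k := by simp
  have z2 : (2 : ℂ) ^ ((m : ℤ) + k + 1 - 2 * k) = 2 ^ (m + 1) / 2 ^ k := by
    rw [show (m : ℤ) + k + 1 - 2 * k = ((m + 1 : ℕ) : ℤ) - (k : ℕ) by push_cast; ring,
      zpow_sub₀ two_ne_zero, zpow_natCast, zpow_natCast]
  rw [z1, z2, show (m : ℂ) + k + 1 - 1 + s - k = s + m by ring]
  have z3 : (2 : ℂ) ^ k ≠ 0 := by simp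
  push_cast
  rw [show m + k + 1 = m + 1 + k by ring, pow_add 2 (m + 1) k]
  field_simp
end

section
/- For every integer m ≥ 1, (1 − 2^{2m}) ζ(2m) = (−1)^m (π^{2m}/2) ∑_{j=0}^{m−1} 𝓔(2j)/(Γ(2m−2j) Γ(2j+1)). -/
open Filter

lemma bern_taylor (x : ℝ) (n : ℕ) : ∀ y : ℝ,
    bernoulliFun n (x + y) / (n.factorial : ℝ) =
      ∑ i ∈ Finset.range (n + 1),
        bernoulliFun (n - i) x / ((n - i).factorial : ℝ) * (y ^ i / (i.factorial : ℝ)) := by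
  induction n with
  | zero => intro y; simp
  | succ n ih =>
    have h1 : ∀ y : ℝ, HasDerivAt (fun y : ℝ => bernoulliFun (n + 1) (x + y) / ((n + 1).factorial : ℝ))
        (bernoulliFun n (x + y) / (n.factorial : ℝ)) y := by
      intro y
      have h := ((hasDerivAt_bernoulliFun (n + 1) (x + y)).comp_const_add x y).div_const
        ((n + 1).factorial : ℝ)
      refine h.congr_deriv (Eq.symm ?_)
      have : (n.factorial : ℝ) ≠ 0 := by positivity
      rw [Nat.factorial_succ]
      push_cast
      field_simp
    have h2 : ∀ y : ℝ, HasDerivAt (fun y : ℝ => ∑ i ∈ Finset.range (n + 1 + 1),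
        bernoulliFun (n + 1 - i) x / ((n + 1 - i).factorial : ℝ) * (y ^ i / (i.factorial : ℝ)))
        (∑ i ∈ Finset.range (n + 1),
        bernoulliFun (n - i) x / ((n - i).factorial : ℝ) * (y ^ i / (i.factorial : ℝ))) y := by
      intro y
      simp_rw [Finset.sum_range_succ' _ (n + 1)]
      simp only [pow_zero]
      refine HasDerivAt.add_const _ ?_
      refine HasDerivAt.fun_sum fun i _ => ?_
      have h := ((hasDerivAt_pow (i + 1) y).div_const ((i + 1).factorial : ℝ)).const_mul
        (bernoulliFun (n - i) x / ((n - i).factorial : ℝ))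
      rw [Nat.add_sub_add_right]
      refine h.congr_deriv (Eq.symm ?_)
      have : (i.factorial : ℝ) ≠ 0 := by positivity
      rw [Nat.factorial_succ]
      push_cast
      field_simp
    intro y
    have h3 : ∀ z : ℝ, HasDerivAt (fun y : ℝ =>
        bernoulliFun (n + 1) (x + y) / ((n + 1).factorial : ℝ) -
        ∑ i ∈ Finset.range (n + 1 + 1),
        bernoulliFun (n + 1 - i) x / ((n + 1 - i).factorial : ℝ) * (y ^ i / (i.factorial : ℝ)))
        0 z := by
      intro z
      have h := (h1 z).sub (h2 z)
      rw [ih z, sub_self] at h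
      exact h
    have h4 := is_const_of_deriv_eq_zero (fun z => (h3 z).differentiableAt)
      (fun z => (h3 z).deriv) y 0
    rw [Finset.sum_range_succ' _ (n + 1), Finset.sum_range_succ' _ (n + 1)] at h4
    rw [Finset.sum_range_succ' _ (n + 1)]
    simp at h4 ⊢
    linarith

lemma odd_part (g : ℕ → ℝ) (m : ℕ) :
    ∑ i ∈ Finset.range (2 * m + 1), g i * (1 - (-1) ^ i) =
      2 * ∑ l ∈ Finset.range m, g (2 * l + 1) := by
  induction m with
  | zero => simp
  | succ m ih =>
    rw [show 2 * (m + 1) + 1 = 2 * m + 1 + 1 + 1 by ring, Finset.sum_range_succ,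
      Finset.sum_range_succ, ih, Finset.sum_range_succ]
    simp [pow_succ, pow_mul]
    ring

lemma bern_identity (m : ℕ) :
    (2 / 2 ^ (2 * m) - 2) * (bernoulli (2 * m) : ℝ) / ((2 * m).factorial : ℝ) =
      2 * ∑ j ∈ Finset.range m, bernoulliFun (2 * j + 1) (1 / 4) / ((2 * j + 1).factorial : ℝ) *
        ((1 / 4) ^ (2 * m - 2 * j - 1) / ((2 * m - 2 * j - 1).factorial : ℝ)) := by
  have h1 := bern_taylor (1 / 4) (2 * m) (1 / 4)
  have h2 := bern_taylor (1 / 4) (2 * m) (-(1 / 4))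
  rw [show (1 / 4 + 1 / 4 : ℝ) = 2⁻¹ by norm_num, bernoulliFun_eval_half] at h1
  rw [show (1 / 4 + -(1 / 4) : ℝ) = 0 by norm_num, bernoulliFun_eval_zero] at h2
  have h3 := odd_part (fun i => bernoulliFun (2 * m - i) (1 / 4) / ((2 * m - i).factorial : ℝ) *
    ((1 / 4) ^ i / (i.factorial : ℝ))) m
  have h4 : (2 / 2 ^ (2 * m) - 2) * (bernoulli (2 * m) : ℝ) / ((2 * m).factorial : ℝ) =
    (2 / 2 ^ (2 * m) - 1) * (bernoulli (2 * m) : ℝ) / ((2 * m).factorial : ℝ) -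
      (bernoulli (2 * m) : ℝ) / ((2 * m).factorial : ℝ) := by ring
  rw [h4, h1, h2, ← Finset.sum_sub_distrib, ← Finset.sum_range_reflect (n := m)]
  trans 2 * ∑ l ∈ Finset.range m, (fun i => bernoulliFun (2 * m - i) (1 / 4) / ((2 * m - i).factorial : ℝ) *
    ((1 / 4) ^ i / (i.factorial : ℝ))) (2 * l + 1)
  · rw [← h3]
    refine Finset.sum_congr rfl fun i _ => ?_
    rw [neg_pow]
    ring
  · congr 1
    refine Finset.sum_congr rfl fun l hl => ?_
    rw [Finset.mem_range] at hl
    simp only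
    rw [show 2 * m - (2 * l + 1) = 2 * (m - 1 - l) + 1 by omega,
      show 2 * m - 2 * (m - 1 - l) - 1 = 2 * l + 1 by omega]

lemma sum_even_zero (f : ℕ → ℝ) (hf : ∀ k, f (2 * k) = 0) (n : ℕ) :
    ∑ i ∈ Finset.range (2 * n), f i = ∑ k ∈ Finset.range n, f (2 * k + 1) := by
  induction n with
  | zero => simp
  | succ n ih =>
    rw [show 2 * (n + 1) = 2 * n + 1 + 1 by ring, Finset.sum_range_succ,
      Finset.sum_range_succ, ih, Finset.sum_range_succ, hf]
    ring

lemma beta_tendsto (j : ℕ) : Filter.Tendsto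
    (fun n => ∑ k ∈ Finset.range n, (-1 : ℝ) ^ k / (2 * (k : ℝ) + 1) ^ (2*j+1))
    Filter.atTop
    (nhds ((-1 : ℝ) ^ (j + 1) * (2 * Real.pi) ^ (2 * j + 1) / 2 / (2 * j + 1).factorial *
        bernoulliFun (2 * j + 1) (1 / 4))) := by
  rcases Nat.eq_zero_or_pos j with rfl | hj
  · convert Real.tendsto_sum_pi_div_four using 2
    · simp
    · simp
      ring
  · have h := (hasSum_one_div_nat_pow_mul_sin hj.ne' (x := 1 / 4)
      (by constructor <;> norm_num)).tendsto_sum_nat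
    have h' := h.comp (tendsto_id.const_mul_atTop' (show 0 < 2 by norm_num))
    refine h'.congr fun n => ?_
    simp only [Function.comp, id]
    rw [sum_even_zero]
    · refine Finset.sum_congr rfl fun k _ => ?_
      rw [show 2 * Real.pi * ((2 * k + 1 : ℕ) : ℝ) * (1 / 4) = k * Real.pi + Real.pi / 2 by
        push_cast; ring, Real.sin_add_pi_div_two, Real.cos_nat_mul_pi]
      push_cast
      ring
    · intro k
      rw [show 2 * Real.pi * ((2 * k : ℕ) : ℝ) * (1 / 4) = k * Real.pi by
        push_cast; ring, Real.sin_nat_mul_pi, mul_zero]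

lemma euler_eq_s4 (E : ℕ → ℝ) (hE : eulerChar E) (j : ℕ) :
    E j = - 4 ^ (2 * j + 1) * ((2 * j).factorial : ℝ) *
      (bernoulliFun (2 * j + 1) (1 / 4) / ((2 * j + 1).factorial : ℝ)) := by
  have h1 := hE j
  have h2 := (beta_tendsto j).const_mul (2 ^ (2 * j + 1))
  have h3 := tendsto_nhds_unique h1 (h2.congr fun n => by
    rw [Finset.mul_sum]
    refine Finset.sum_congr rfl fun k _ => ?_
    rw [show (2 * (k : ℝ) + 1) = 2 * (k + 1 / 2) by ring, mul_pow]
    have : ((k : ℝ) + 1 / 2) ≠ 0 := by positivity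
    field_simp)
  have hp : (-1 : ℝ) ^ j * Real.pi ^ (2 * j + 1) ≠ 0 := by
    have := Real.pi_ne_zero
    positivity
  have hf : ((2 * j).factorial : ℝ) ≠ 0 := by positivity
  apply mul_left_cancel₀ hp
  rw [div_eq_iff (by positivity)] at h3
  rw [h3, show (4 : ℝ) = 2 * 2 by norm_num, mul_pow, mul_pow, pow_succ (-1 : ℝ) j]
  ring

/-- For every `m ≥ 1`,
`(1 - 2^{2m}) ζ(2m) = (-1)^m (π^{2m}/2) ∑_{j=0}^{m-1} 𝓔(2j)/(Γ(2m-2j) Γ(2j+1))`. -/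
theorem stmt_4 (m : ℕ) (hm : 1 ≤ m) (E : ℕ → ℝ) (hE : eulerChar E) :
    (1 - (2 : ℂ) ^ (2*m)) * riemannZeta (2 * (m : ℂ)) =
      (-1) ^ m * ((Real.pi : ℂ) ^ (2*m) / 2) *
        ∑ j ∈ Finset.range m,
          (E j : ℂ) / (Complex.Gamma (2 * (m : ℂ) - 2 * (j : ℂ)) *
            Complex.Gamma (2 * (j : ℂ) + 1)) := by
  have hs : ∑ j ∈ Finset.range m,
          (E j : ℂ) / (Complex.Gamma (2 * (m : ℂ) - 2 * (j : ℂ)) *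
            Complex.Gamma (2 * (j : ℂ) + 1)) =
      ((∑ j ∈ Finset.range m, E j / (((2 * m - 2 * j - 1).factorial : ℝ) *
        ((2 * j).factorial : ℝ)) : ℝ) : ℂ) := by
    push_cast
    refine Finset.sum_congr rfl fun j hj => ?_
    rw [Finset.mem_range] at hj
    have e1 : (2 * (m : ℂ) - 2 * (j : ℂ)) = ((2 * m - 2 * j - 1 : ℕ) : ℂ) + 1 := by
      obtain ⟨d, rfl⟩ := Nat.exists_eq_add_of_lt hj
      rw [show 2 * (j + d + 1) - 2 * j - 1 = 2 * d + 1 by omega]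
      push_cast
      ring
    have e2 : (2 * (j : ℂ) + 1) = ((2 * j : ℕ) : ℂ) + 1 := by push_cast; ring
    rw [e1, e2, Complex.Gamma_nat_eq_factorial, Complex.Gamma_nat_eq_factorial]
  have hr : ∑ j ∈ Finset.range m, E j / (((2 * m - 2 * j - 1).factorial : ℝ) *
        ((2 * j).factorial : ℝ)) =
      - 4 ^ (2 * m) * ((1 / 2 ^ (2 * m) - 1) * (bernoulli (2 * m) : ℝ) /
        ((2 * m).factorial : ℝ)) := by
    have h := bern_identity m
    have h' : (1 / 2 ^ (2 * m) - 1) * (bernoulli (2 * m) : ℝ) / ((2 * m).factorial : ℝ) =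
        ((2 / 2 ^ (2 * m) - 2) * (bernoulli (2 * m) : ℝ) / ((2 * m).factorial : ℝ)) / 2 := by
      ring
    rw [h', h, mul_div_cancel_left₀ _ (two_ne_zero), Finset.mul_sum]
    refine Finset.sum_congr rfl fun j hj => ?_
    rw [Finset.mem_range] at hj
    have hf : ((2 * j).factorial : ℝ) ≠ 0 := by positivity
    have hp : (4 : ℝ) ^ (2 * m) = 4 ^ (2 * j + 1) * 4 ^ (2 * m - 2 * j - 1) := by
      rw [← pow_add]
      congr 1
      omega
    rw [euler_eq_s4 E hE j, hp, one_div_pow]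
    field_simp
  rw [hs, hr, riemannZeta_two_mul_nat (by omega)]
  have h2 : (2 : ℂ) ^ (2 * m) = 2 ^ (2 * m - 1) * 2 := by
    rw [← pow_succ]
    congr 1
    omega
  push_cast
  rw [show (4 : ℂ) = 2 * 2 by norm_num, mul_pow, h2, pow_succ (-1 : ℂ) m]
  have : (2 : ℂ) ^ (2 * m - 1) ≠ 0 := pow_ne_zero _ two_ne_zero
  field_simp
  try ring
end

section
/- For all integers m ≥ 1 and 0 ≤ p ≤ 2m, the series ∑_{k=0}^∞ [(−1)^p E_{−p}(iπ(k+1/2)) + E_{−p}(−iπ(k+1/2))]/(k+1/2)^{2m−p} converges and (π^{p−2m} (−1)^m e^{−iπp/2}/Γ(p+1)) · ∑_{k=0}^∞ [(−1)^p E_{−p}(iπ(k+1/2)) + E_{−p}(−iπ(k+1/2))]/(k+1/2)^{2m−p} = −∑_{j=⌊m−p/2+1/2⌋}^{m} 𝓔(2j)/(Γ(2m−2j+1) Γ(2j+1)). -/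
open Filter

/-- The generalized exponential integral of nonpositive integer order `-p`:
`E_{-p}(z) = Γ(p+1) e^{-z} z^{-p-1} ∑_{j=0}^{p} z^j/Γ(j+1)`. -/
noncomputable def expIntNeg (p : ℕ) (z : ℂ) : ℂ :=
  (Nat.factorial p : ℂ) * Complex.exp (-z) * z ^ (-(p : ℤ) - 1) *
    ∑ j ∈ Finset.range (p + 1), z ^ j / (Nat.factorial j : ℂ)

lemma sum_even_aux (f : ℕ → ℂ) (p : ℕ) :
    ∑ j ∈ Finset.range (p + 1), (1 + (-1 : ℂ) ^ j) * f j
      = ∑ l ∈ Finset.range (p / 2 + 1), 2 * f (2 * l) := by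
  induction p with
  | zero => norm_num
  | succ p ih =>
    rw [Finset.sum_range_succ, ih]
    rcases Nat.even_or_odd' p with ⟨q, rfl | rfl⟩
    · have h1 : (2 * q + 1) / 2 = q := by omega
      have h2 : (2 * q) / 2 = q := by omega
      rw [h1, h2]
      simp [pow_succ, pow_mul]
    · have h1 : (2 * q + 1 + 1) / 2 = q + 1 := by omega
      have h2 : (2 * q + 1) / 2 = q := by omega
      rw [h1, h2, Finset.sum_range_succ _ (q + 1)]
      have h3 : 2 * q + 1 + 1 = 2 * (q + 1) := by ring
      rw [h3]
      simp only [pow_mul, neg_one_sq, one_pow]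
      ring

lemma exp_half_aux (k : ℕ) :
    Complex.exp (Complex.I * (Real.pi : ℂ) * ((k : ℂ) + 1/2)) = (-1) ^ k * Complex.I := by
  have : Complex.I * (Real.pi : ℂ) * ((k : ℂ) + 1/2)
      = (k : ℂ) * (Real.pi * Complex.I) + (Real.pi : ℂ) / 2 * Complex.I := by ring
  rw [this, Complex.exp_add, Complex.exp_nat_mul, Complex.exp_pi_mul_I, Complex.exp_pi_div_two_mul_I]

lemma neg_one_zpow_aux (p : ℕ) : (-1 : ℂ) ^ (-(p : ℤ) - 1) = -(-1) ^ p := by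
  rw [zpow_sub₀ (by norm_num), zpow_neg, zpow_natCast]
  rcases neg_one_pow_eq_or ℂ p with h | h <;> rw [h] <;> norm_num

lemma pair_aux (p k : ℕ) (z : ℂ) (hz : Complex.exp z = (-1) ^ k * Complex.I) :
    (-1) ^ p * expIntNeg p z + expIntNeg p (-z)
      = -(-1) ^ p * Complex.I * (p.factorial : ℂ) * (-1) ^ k * z ^ (-(p : ℤ) - 1) *
        ∑ l ∈ Finset.range (p / 2 + 1), 2 * (z ^ (2 * l) / ((2 * l).factorial : ℂ)) := by
  have hz' : Complex.exp (-z) = -((-1) ^ k * Complex.I) := by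
    rw [Complex.exp_neg, hz, mul_inv, Complex.inv_I]
    rcases neg_one_pow_eq_or ℂ k with h | h <;> rw [h] <;> norm_num
  have h0 := sum_even_aux (fun j => z ^ j / (j.factorial : ℂ)) p
  rw [← h0]
  have hneg : (-z) ^ (-(p : ℤ) - 1) = -(-1) ^ p * z ^ (-(p : ℤ) - 1) := by
    rw [← neg_one_zpow_aux, ← mul_zpow, neg_one_mul]
  unfold expIntNeg
  rw [neg_neg, hz', hz, hneg]
  have h1 : ∑ j ∈ Finset.range (p + 1), (1 + (-1 : ℂ) ^ j) * (z ^ j / (j.factorial : ℂ))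
      = ∑ j ∈ Finset.range (p + 1), z ^ j / (j.factorial : ℂ)
        + ∑ j ∈ Finset.range (p + 1), (-z) ^ j / (j.factorial : ℂ) := by
    rw [← Finset.sum_add_distrib]
    refine Finset.sum_congr rfl fun j _ => ?_
    rw [neg_pow z j]
    ring
  rw [h1]
  ring

/-- For integers `m ≥ 1`, `0 ≤ p ≤ 2m`, the series
`∑_{k=0}^∞ [(-1)^p E_{-p}(iπ(k+1/2)) + E_{-p}(-iπ(k+1/2))]/(k+1/2)^{2m-p}` converges and
`(π^{p-2m} (-1)^m e^{-iπp/2}/Γ(p+1)) · (that sum)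
  = -∑_{j=⌊m-p/2+1/2⌋}^{m} 𝓔(2j)/(Γ(2m-2j+1) Γ(2j+1))`. -/
theorem stmt_5 (m p : ℕ) (hm : 1 ≤ m) (hp : p ≤ 2*m) (E : ℕ → ℝ) (hE : eulerChar E) :
    ∃ L : ℂ,
      Tendsto (fun N => ∑ k ∈ Finset.range N,
          ((-1) ^ p * expIntNeg p (Complex.I * (Real.pi : ℂ) * ((k : ℂ) + 1/2)) +
            expIntNeg p (-(Complex.I * (Real.pi : ℂ) * ((k : ℂ) + 1/2))))
            / ((k : ℂ) + 1/2) ^ (2*m - p))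
        atTop (nhds L) ∧
      (Real.pi : ℂ) ^ ((p : ℤ) - 2 * (m : ℤ)) * (-1) ^ m *
          Complex.exp (-(Complex.I * (Real.pi : ℂ) * (p : ℂ) / 2)) /
          Complex.Gamma ((p : ℂ) + 1) * L
        = -∑ j ∈ Finset.Icc ((2*m - p + 1) / 2) m,
            (E j : ℂ) / (Complex.Gamma (((2*m - 2*j : ℕ) : ℂ) + 1) *
              Complex.Gamma (2 * (j : ℂ) + 1)) := by
  have hpi : (Real.pi : ℂ) ≠ 0 := by exact_mod_cast Real.pi_ne_zero
  have hIpi : Complex.I * (Real.pi : ℂ) ≠ 0 := mul_ne_zero Complex.I_ne_zero hpi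
  set c : ℕ → ℂ := fun l => -(-1) ^ p * Complex.I * (p.factorial : ℂ) *
    (Complex.I * (Real.pi : ℂ)) ^ (2 * (l : ℤ) - (p : ℤ) - 1) * 2 / ((2 * l).factorial : ℂ) with hc
  have hlim : ∀ j : ℕ, Tendsto
      (fun n => ∑ k ∈ Finset.range n, (-1 : ℂ) ^ k / ((k : ℂ) + 1/2) ^ (2*j+1)) atTop
      (nhds ((-1 : ℂ) ^ j * (Real.pi : ℂ) ^ (2*j+1) * (E j : ℂ) /
        (2 * ((Nat.factorial (2*j) : ℕ) : ℂ)))) := by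
    intro j
    have := (Complex.continuous_ofReal.tendsto _).comp (hE j)
    convert this using 2
    · simp
    · push_cast
      rfl
  refine ⟨∑ l ∈ Finset.range (p / 2 + 1), c l * ((-1 : ℂ) ^ (m - l) *
      (Real.pi : ℂ) ^ (2*(m - l)+1) * (E (m - l) : ℂ) /
        (2 * ((Nat.factorial (2*(m - l)) : ℕ) : ℂ))), ?_, ?_⟩
  · have := tendsto_finsetSum (Finset.range (p / 2 + 1))
      (fun l _ => (hlim (m - l)).const_mul (c l))
    refine this.congr fun N => ?_
    simp only [Finset.mul_sum]
    rw [Finset.sum_comm]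
    refine Finset.sum_congr rfl fun k _ => ?_
    rw [pair_aux p k _ (exp_half_aux k), Finset.mul_sum, Finset.sum_div]
    refine Finset.sum_congr rfl fun l hl => ?_
    have hl' : 2 * l ≤ p := by
      have := Finset.mem_range.mp hl
      omega
    have hx : (k : ℂ) + 1/2 ≠ 0 := by
      have : ((k : ℝ) + 1/2) ≠ 0 := by positivity
      have h2 : (((k : ℝ) + 1/2 : ℝ) : ℂ) ≠ 0 := by exact_mod_cast this
      simpa using h2
    generalize (k : ℂ) + 1/2 = x at hx
    have e1 : x ^ (2 * (m - l) + 1) = x ^ (2 * (m : ℤ) - 2 * l + 1) := by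
      rw [← zpow_natCast]
      congr 1
      omega
    have e2 : x ^ (2 * m - p) = x ^ (2 * (m : ℤ) - p) := by
      rw [← zpow_natCast]
      congr 1
      omega
    have e3 : (Complex.I * (Real.pi : ℂ) * x) ^ (-(p : ℤ) - 1) *
        (Complex.I * (Real.pi : ℂ) * x) ^ (2 * l)
        = (Complex.I * (Real.pi : ℂ)) ^ (2 * (l : ℤ) - (p : ℤ) - 1) *
          x ^ (2 * (l : ℤ) - (p : ℤ) - 1) := by
      rw [← zpow_natCast, ← zpow_add₀ (mul_ne_zero hIpi hx), ← mul_zpow]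
      congr 1
      push_cast
      ring
    have e4 : x ^ (2 * (l : ℤ) - (p : ℤ) - 1) / x ^ (2 * (m : ℤ) - p)
        = (x ^ (2 * (m : ℤ) - 2 * l + 1))⁻¹ := by
      rw [← zpow_sub₀ hx, ← zpow_neg]
      congr 1
      ring
    rw [e1, e2, hc]
    simp only []
    calc _ = -(-1) ^ p * Complex.I * (p.factorial : ℂ) *
        (Complex.I * (Real.pi : ℂ)) ^ (2 * (l : ℤ) - (p : ℤ) - 1) * 2 / ((2 * l).factorial : ℂ)
          * (-1) ^ k * (x ^ (2 * (m : ℤ) - 2 * l + 1))⁻¹ := by ring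
      _ = -(-1) ^ p * Complex.I * (p.factorial : ℂ) * (-1) ^ k * 2 / ((2 * l).factorial : ℂ) *
        ((Complex.I * (Real.pi : ℂ)) ^ (2 * (l : ℤ) - (p : ℤ) - 1) *
          x ^ (2 * (l : ℤ) - (p : ℤ) - 1)) / x ^ (2 * (m : ℤ) - p) := by rw [← e4]; ring
      _ = _ := by rw [← e3]; ring
  · have hre : ∑ j ∈ Finset.Icc ((2*m - p + 1) / 2) m,
            (E j : ℂ) / (Complex.Gamma (((2*m - 2*j : ℕ) : ℂ) + 1) *
              Complex.Gamma (2 * (j : ℂ) + 1))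
        = ∑ l ∈ Finset.range (p / 2 + 1),
            (E (m - l) : ℂ) / (((2 * l).factorial : ℂ) * ((2 * (m - l)).factorial : ℂ)) := by
      refine Finset.sum_nbij' (fun j => m - j) (fun l => m - l) ?_ ?_ ?_ ?_ ?_
      · intro j hj
        simp only [Finset.mem_Icc, Finset.mem_range] at *
        omega
      · intro j hj
        simp only [Finset.mem_Icc, Finset.mem_range] at *
        omega
      · intro j hj
        simp only [Finset.mem_Icc] at *
        omega
      · intro j hj
        simp only [Finset.mem_range] at *
        omega
      · intro j hj
        simp only [Finset.mem_Icc] at hj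
        have h1 : m - (m - j) = j := by omega
        have h2 : 2 * m - 2 * j = 2 * (m - j) := by omega
        have h3 : (2 * (j : ℂ) + 1) = ((2 * j : ℕ) : ℂ) + 1 := by push_cast; rfl
        rw [h3, Complex.Gamma_nat_eq_factorial, Complex.Gamma_nat_eq_factorial, h1, h2]
    rw [hre, Finset.mul_sum, ← Finset.sum_neg_distrib, Complex.Gamma_nat_eq_factorial]
    refine Finset.sum_congr rfl fun l hl => ?_
    have hl' : 2 * l ≤ p := by
      have := Finset.mem_range.mp hl
      omega
    have hexp : Complex.exp (-(Complex.I * (Real.pi : ℂ) * (p : ℂ) / 2)) = (-Complex.I) ^ p := by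
      have : -(Complex.I * (Real.pi : ℂ) * (p : ℂ) / 2)
          = (p : ℂ) * (-(Real.pi : ℂ) / 2 * Complex.I) := by ring
      rw [this, Complex.exp_nat_mul, Complex.exp_neg_pi_div_two_mul_I]
    have hp0 : (p.factorial : ℂ) ≠ 0 := by exact_mod_cast p.factorial_ne_zero
    have hf1 : ((2 * l).factorial : ℂ) ≠ 0 := by exact_mod_cast (2 * l).factorial_ne_zero
    have hf2 : ((2 * (m - l)).factorial : ℂ) ≠ 0 := by
      exact_mod_cast (2 * (m - l)).factorial_ne_zero
    have ePi : (Real.pi : ℂ) ^ ((p : ℤ) - 2 * (m : ℤ)) *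
        (Real.pi : ℂ) ^ (2 * (l : ℤ) - (p : ℤ) - 1) * (Real.pi : ℂ) ^ (2*(m - l)+1) = 1 := by
      rw [← zpow_natCast, ← zpow_add₀ hpi, ← zpow_add₀ hpi, ← zpow_zero (Real.pi : ℂ)]
      congr 1
      omega
    have eI : Complex.I ^ (2 * (l : ℤ) - (p : ℤ) - 1) * Complex.I = (-1) ^ l * (-Complex.I) ^ p := by
      rw [zpow_sub₀ Complex.I_ne_zero, zpow_sub₀ Complex.I_ne_zero, zpow_mul, zpow_natCast,
        zpow_natCast, ← Complex.inv_I, inv_pow]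
      have hI2 : Complex.I ^ (2 : ℤ) = -1 := by
        rw [← Complex.I_sq]
        norm_cast
      have := Complex.I_ne_zero
      rw [hI2, zpow_one]
      field_simp
    have eS : (-1 : ℂ) ^ m * (-1) ^ l * (-1) ^ (m - l) = 1 := by
      rw [← pow_add, ← pow_add]
      exact Even.neg_one_pow ⟨m, by omega⟩
    have eII : (-Complex.I) ^ p * (-Complex.I) ^ p * (-1) ^ p = 1 := by
      rw [← mul_pow, ← mul_pow]
      simp
    rw [hexp, hc]
    simp only []
    rw [mul_zpow]
    calc _ = -((Real.pi : ℂ) ^ ((p : ℤ) - 2 * (m : ℤ)) *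
        (Real.pi : ℂ) ^ (2 * (l : ℤ) - (p : ℤ) - 1) * (Real.pi : ℂ) ^ (2*(m - l)+1)) *
        (Complex.I ^ (2 * (l : ℤ) - (p : ℤ) - 1) * Complex.I) * (-Complex.I) ^ p * (-1) ^ p *
        ((-1 : ℂ) ^ m * (-1) ^ (m - l)) *
        ((E (m - l) : ℂ) / (((2 * l).factorial : ℂ) * ((2 * (m - l)).factorial : ℂ))) := by
          field_simp
      _ = -(((-Complex.I) ^ p * (-Complex.I) ^ p * (-1) ^ p) *
        ((-1 : ℂ) ^ m * (-1) ^ l * (-1) ^ (m - l)) *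
        ((E (m - l) : ℂ) / (((2 * l).factorial : ℂ) * ((2 * (m - l)).factorial : ℂ)))) := by
          rw [ePi, eI]; ring
      _ = _ := by rw [eII, eS]; ring
end

section
/- For every integer m ≥ 1, the series ∑_{k=0}^∞ [E_{−2m}(iπ(k+1/2)) + E_{−2m}(−iπ(k+1/2))] converges and its sum equals 0. -/
open Filter

lemma aux_deriv (p : ℕ) (x : ℂ) :
    HasDerivAt (fun x : ℂ => Complex.exp (-x) *
      ∑ j ∈ Finset.range (p + 1), x ^ j / (Nat.factorial j : ℂ))
      (-(Complex.exp (-x) * (x ^ p / (Nat.factorial p : ℂ)))) x := by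
  have he : HasDerivAt (fun x : ℂ => Complex.exp (-x)) (-Complex.exp (-x)) x := by
    simpa using (hasDerivAt_neg x).cexp
  induction p with
  | zero => simpa using he
  | succ p ih =>
    have h2 : HasDerivAt (fun x : ℂ => Complex.exp (-x) *
        (x ^ (p+1) / (Nat.factorial (p+1) : ℂ))) _ x :=
      he.mul ((hasDerivAt_pow (p+1) x).div_const _)
    have h3 := ih.add h2
    refine (h3.congr_of_eventuallyEq ?_).congr_deriv ?_
    · refine Eventually.of_forall fun y => ?_
      simp only [Pi.add_apply]
      rw [Finset.sum_range_succ _ (p+1)]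
      ring
    · have hf : (Nat.factorial p : ℂ) ≠ 0 := by exact_mod_cast Nat.factorial_ne_zero p
      have hp : (p : ℂ) + 1 ≠ 0 := by exact_mod_cast Nat.succ_ne_zero p
      rw [Nat.factorial_succ]
      push_cast
      try rw [Nat.add_sub_cancel]
      field_simp
      ring

lemma aux_integral (m : ℕ) (z : ℂ) (hz : z ≠ 0) :
    expIntNeg (2*m) z + expIntNeg (2*m) (-z) =
      -∫ t in (-1:ℝ)..1, (t:ℂ)^(2*m) * Complex.exp (-(z * t)) := by
  have hf : (Nat.factorial (2*m) : ℂ) ≠ 0 := by exact_mod_cast Nat.factorial_ne_zero (2*m)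
  have key := intervalIntegral.integral_eq_sub_of_hasDerivAt
    (f := fun t : ℝ => -((Nat.factorial (2*m) : ℂ) * z ^ (-((2*m : ℕ) : ℤ) - 1)) *
      (Complex.exp (-(z*t)) * ∑ j ∈ Finset.range (2*m + 1), (z*t) ^ j / (Nat.factorial j : ℂ)))
    (f' := fun t : ℝ => (t:ℂ)^(2*m) * Complex.exp (-(z * t))) (a := -1) (b := 1) ?_ ?_
  · rw [key]
    have hneg : (-z) ^ (-((2*m : ℕ) : ℤ) - 1) = - z ^ (-((2*m : ℕ) : ℤ) - 1) := by
      apply Odd.neg_zpow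
      exact ⟨-(m:ℤ)-1, by push_cast; ring⟩
    simp only [expIntNeg, hneg]
    push_cast
    simp only [mul_one, mul_neg]
    ring
  · intro t _
    have h1 : HasDerivAt (fun t : ℝ => z * (t:ℂ)) z t := by
      simpa using (Complex.ofRealCLM.hasDerivAt (x := t)).const_mul z
    have h2 := ((aux_deriv (2*m) (z*t)).comp t h1).const_mul
      (-((Nat.factorial (2*m) : ℂ) * z ^ (-((2*m : ℕ) : ℤ) - 1)))
    refine h2.congr_deriv ?_
    rw [sub_eq_add_neg, ← neg_add, zpow_neg, show ((2*m : ℕ) : ℤ) + 1 = ((2*m+1 : ℕ):ℤ) by push_cast; rfl,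
      zpow_natCast, mul_pow]
    field_simp
    ring
  · apply Continuous.intervalIntegrable
    fun_prop

noncomputable def gker (m : ℕ) (t : ℝ) : ℂ :=
  (t:ℂ)^(2*m) / (2 * Complex.I * ((Real.sin (Real.pi * t / 2) : ℝ) : ℂ))

lemma sin_bound (t : ℝ) (h1 : -1 ≤ t) (h2 : t ≤ 1) : |t| ≤ |Real.sin (Real.pi * t / 2)| := by
  have hp := Real.pi_pos
  have := Real.mul_abs_le_abs_sin (x := Real.pi * t / 2) (by
    rw [abs_le]; constructor <;> nlinarith)
  refine le_trans (le_of_eq ?_) this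
  rw [abs_div, abs_mul, abs_of_pos hp, abs_two]
  field_simp

lemma gker_int (m : ℕ) (hm : 1 ≤ m) :
    MeasureTheory.IntegrableOn (gker m) (Set.Ioc (-1) 1) := by
  refine MeasureTheory.Measure.integrableOn_of_bounded (M := 1) (by simp) ?_ ?_
  · apply Measurable.aestronglyMeasurable
    unfold gker
    fun_prop
  · rw [MeasureTheory.ae_restrict_iff' measurableSet_Ioc]
    refine Eventually.of_forall fun t ht => ?_
    have hb := sin_bound t ht.1.le ht.2
    have ht1 : |t| ≤ 1 := abs_le.2 ⟨ht.1.le, ht.2⟩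
    unfold gker
    simp only [norm_div, norm_mul, norm_pow, Complex.norm_real, Complex.norm_I, Complex.norm_ofNat,
      Real.norm_eq_abs]
    apply div_le_one_of_le₀ _ (by positivity)
    have : |t|^(2*m) ≤ |t| := pow_le_of_le_one (abs_nonneg t) ht1 (by omega)
    linarith [abs_nonneg t]

lemma gker_odd (m : ℕ) : ∫ t in (-1:ℝ)..1, gker m t = 0 := by
  have h := intervalIntegral.integral_comp_neg (a := -1) (b := 1) (gker m)
  have h2 : ∀ t, gker m (-t) = - gker m t := by
    intro t
    unfold gker
    rw [show Real.pi * -t / 2 = -(Real.pi * t / 2) by ring, Real.sin_neg]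
    push_cast
    rw [Even.neg_pow ⟨m, by ring⟩, mul_neg, div_neg]
  simp only [h2, intervalIntegral.integral_neg, neg_neg] at h
  exact self_eq_neg.1 h.symm

lemma kernel_sum (m : ℕ) (hm : 1 ≤ m) (n : ℕ) (t : ℝ) (h1 : -1 ≤ t) (h2 : t ≤ 1) :
    ∑ k ∈ Finset.range n, (t:ℂ)^(2*m) *
      Complex.exp (-(Complex.I * (Real.pi : ℂ) * ((k : ℂ) + 1/2) * t)) =
    gker m t - Complex.exp (-(Complex.I * Real.pi * n * t)) * gker m t := by
  by_cases h0 : t = 0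
  · subst h0
    have : 2 * m ≠ 0 := by omega
    simp [gker, this]
  have hs : Real.sin (Real.pi * t / 2) ≠ 0 := by
    have := sin_bound t h1 h2
    have h3 := abs_pos.2 h0
    exact abs_pos.1 (by linarith)
  have hsC : ((Real.sin (Real.pi * t / 2) : ℝ) : ℂ) ≠ 0 := by exact_mod_cast hs
  induction n with
  | zero => simp
  | succ n ih =>
    rw [Finset.sum_range_succ, ih]
    set s := ((Real.sin (Real.pi * t / 2) : ℝ) : ℂ) with hsdef
    have hs2 : 2 * Complex.I * s = Complex.exp (Complex.I * Real.pi * t / 2)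
        - Complex.exp (-(Complex.I * Real.pi * t / 2)) := by
      rw [hsdef, Complex.ofReal_sin, Complex.sin]
      push_cast
      rw [show -(Real.pi * t / 2 : ℂ) * Complex.I = -(Complex.I * Real.pi * t / 2) by ring,
        show (Real.pi * t / 2 : ℂ) * Complex.I = (Complex.I * Real.pi * t / 2) by ring]
      linear_combination (Complex.exp (-(Complex.I * Real.pi * t / 2)) -
        Complex.exp (Complex.I * Real.pi * t / 2)) * Complex.I_sq
    have hg : (t:ℂ)^(2*m) = gker m t * (2 * Complex.I * s) := by
      unfold gker
      rw [div_mul_cancel₀]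
      simp [hsC, Complex.I_ne_zero, ← hsdef]
    rw [hg, hs2]
    have e1 : Complex.exp (-(Complex.I * Real.pi * n * t)) =
      Complex.exp (Complex.I * Real.pi * t / 2) *
        Complex.exp (-(Complex.I * (Real.pi : ℂ) * ((n : ℂ) + 1/2) * t)) := by
      rw [← Complex.exp_add]; congr 1; ring
    have e2 : Complex.exp (-(Complex.I * Real.pi * (n+1 : ℕ) * t)) =
      Complex.exp (-(Complex.I * Real.pi * t / 2)) *
        Complex.exp (-(Complex.I * (Real.pi : ℂ) * ((n : ℂ) + 1/2) * t)) := by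
      rw [← Complex.exp_add]; congr 1; push_cast; ring
    rw [e1, e2]
    ring

lemma partial_sum (m : ℕ) (hm : 1 ≤ m) (n : ℕ) :
    ∑ k ∈ Finset.range n,
        (expIntNeg (2*m) (Complex.I * (Real.pi : ℂ) * ((k : ℂ) + 1/2)) +
          expIntNeg (2*m) (-(Complex.I * (Real.pi : ℂ) * ((k : ℂ) + 1/2)))) =
    ∫ t in (-1:ℝ)..1, Complex.exp (-(Complex.I * Real.pi * n * t)) * gker m t := by
  have hz : ∀ k : ℕ, Complex.I * (Real.pi : ℂ) * ((k : ℂ) + 1/2) ≠ 0 := by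
    intro k
    have : ((k : ℂ) + 1/2) ≠ 0 := by
      have h : ((k : ℝ) + 1/2) ≠ 0 := by positivity
      have h' := Complex.ofReal_ne_zero.2 h
      push_cast at h'
      exact h'
    exact mul_ne_zero (mul_ne_zero Complex.I_ne_zero (by exact_mod_cast Real.pi_ne_zero)) this
  rw [Finset.sum_congr rfl fun k _ => aux_integral m _ (hz k), Finset.sum_neg_distrib,
    ← intervalIntegral.integral_finset_sum]
  · have hI : IntervalIntegrable (gker m) MeasureTheory.volume (-1) 1 :=
      (intervalIntegrable_iff_integrableOn_Ioc_of_le (by norm_num)).2 (gker_int m hm)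
    have hI2 : IntervalIntegrable (fun t : ℝ =>
        Complex.exp (-(Complex.I * Real.pi * n * t)) * gker m t) MeasureTheory.volume (-1) 1 :=
      hI.continuousOn_mul (by fun_prop)
    rw [intervalIntegral.integral_congr (g := fun t : ℝ => gker m t -
      Complex.exp (-(Complex.I * Real.pi * n * t)) * gker m t),
      intervalIntegral.integral_sub hI hI2, gker_odd]
    · simp
    · intro t ht
      rw [Set.uIcc_of_le (by norm_num)] at ht
      exact kernel_sum m hm n t ht.1 ht.2
  · intro k _
    apply Continuous.intervalIntegrable
    fun_prop

/-- For every `m ≥ 1`, the series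
`∑_{k=0}^∞ [E_{-2m}(iπ(k+1/2)) + E_{-2m}(-iπ(k+1/2))]` converges to `0`. -/
theorem stmt_6 (m : ℕ) (hm : 1 ≤ m) :
    Tendsto (fun n => ∑ k ∈ Finset.range n,
        (expIntNeg (2*m) (Complex.I * (Real.pi : ℂ) * ((k : ℂ) + 1/2)) +
          expIntNeg (2*m) (-(Complex.I * (Real.pi : ℂ) * ((k : ℂ) + 1/2)))))
      atTop (nhds 0) := by
  simp only [partial_sum m hm]
  have h := Real.tendsto_integral_exp_smul_cocompact ((Set.Ioc (-1:ℝ) 1).indicator (gker m))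
  have hn : Tendsto (fun n : ℕ => (n:ℝ)/2) atTop (cocompact ℝ) :=
    (tendsto_natCast_atTop_atTop.atTop_div_const (by norm_num)).mono_right atTop_le_cocompact
  refine (h.comp hn).congr fun n => ?_
  rw [intervalIntegral.integral_of_le (by norm_num), ← MeasureTheory.integral_indicator measurableSet_Ioc]
  simp only [Function.comp]
  congr 1
  ext t
  by_cases ht : t ∈ Set.Ioc (-1:ℝ) 1
  · simp only [Set.indicator_of_mem ht]
    rw [Circle.smul_def, Real.fourierChar_apply, smul_eq_mul]
    congr 2
    push_cast
    ring
  · simp [Set.indicator_of_notMem ht]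
end

section
/- For every integer m ≥ 1, the series ∑_{k=0}^∞ [E_{1−2m}(iπ(k+1/2)) − E_{1−2m}(−iπ(k+1/2))]/(k+1/2) converges and equals iπ/(2m). -/
open Filter

lemma aux_sum_even_odd {M : Type*} [AddCommMonoid M] (f : ℕ → M) (m : ℕ) :
    ∑ i ∈ Finset.range (2 * m), f i
      = ∑ l ∈ Finset.range m, (f (2 * l) + f (2 * l + 1)) := by
  induction m with
  | zero => simp
  | succ m ih =>
    rw [Finset.sum_range_succ, ← ih, show 2 * (m + 1) = 2 * m + 1 + 1 by ring,
      Finset.sum_range_succ, Finset.sum_range_succ, add_assoc]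

lemma aux_iter_deriv (k n : ℕ) :
    Polynomial.derivative^[k] (Polynomial.bernoulli (n + k))
      = (((n + k).descFactorial k : ℕ) : Polynomial ℚ) * Polynomial.bernoulli n := by
  induction k with
  | zero => simp
  | succ k ih =>
    rw [Function.iterate_succ_apply, ← add_assoc, Polynomial.derivative_bernoulli_add_one]
    have h : ((n + k : ℕ) : Polynomial ℚ) + 1 = ((n + k + 1 : ℕ) : Polynomial ℚ) := by
      push_cast; ring
    rw [h, Polynomial.iterate_derivative_natCast_mul, ih, Nat.succ_descFactorial_succ]
    push_cast
    ring

lemma aux_hasse (k n : ℕ) (r : ℚ) :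
    (Polynomial.hasseDeriv k (Polynomial.bernoulli (n + k))).eval r
      = ((n + k).choose k : ℚ) * (Polynomial.bernoulli n).eval r := by
  have h := congrFun (Polynomial.factorial_smul_hasseDeriv (R := ℚ) (k := k))
    (Polynomial.bernoulli (n + k))
  rw [aux_iter_deriv] at h
  have h2 := congrArg (Polynomial.eval r) h
  rw [Nat.descFactorial_eq_factorial_mul_choose] at h2
  rw [LinearMap.smul_apply, Polynomial.eval_smul] at h2
  simp only [Polynomial.eval_mul,
    Polynomial.eval_natCast, nsmul_eq_mul, Nat.cast_mul] at h2
  have h3 : (k.factorial : ℚ) ≠ 0 := by exact_mod_cast k.factorial_ne_zero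
  apply mul_left_cancel₀ h3
  rw [h2, mul_assoc]

lemma aux_taylor (N : ℕ) (y r : ℚ) :
    (Polynomial.bernoulli N).eval (y + r) = ∑ i ∈ Finset.range (N + 1),
      (N.choose i : ℚ) * (Polynomial.bernoulli (N - i)).eval r * y ^ i := by
  rw [← Polynomial.taylor_eval, Polynomial.eval_eq_sum_range' (n := N + 1)]
  · refine Finset.sum_congr rfl fun i hi => ?_
    have hi' : i ≤ N := by simpa [Nat.lt_succ_iff] using hi
    obtain ⟨n, rfl⟩ := Nat.exists_eq_add_of_le' hi'
    rw [Polynomial.taylor_coeff, aux_hasse, Nat.add_sub_cancel]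
  · rw [Polynomial.natDegree_taylor, Nat.lt_succ_iff, Polynomial.natDegree_le_iff_coeff_eq_zero]
    intro j hj
    rw [Polynomial.coeff_bernoulli, if_neg (by omega)]

lemma aux_bern (m : ℕ) (hm : 1 ≤ m) :
    ∑ l ∈ Finset.range (m + 1), ((2 * m + 1).choose (2 * l) : ℚ) *
      (Polynomial.bernoulli (2 * (m - l) + 1)).eval (1 / 4) * (1 / 4) ^ (2 * l) = 0 := by
  have h1 := aux_taylor (2 * m + 1) (1 / 4) (1 / 4)
  have h2 := aux_taylor (2 * m + 1) (-(1 / 4)) (1 / 4)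
  have e1 : (Polynomial.bernoulli (2 * m + 1)).eval ((1 : ℚ) / 4 + 1 / 4) = 0 := by
    have := Polynomial.bernoulli_eval_one_sub (2 * m + 1) (1 / 2)
    rw [Odd.neg_one_pow ⟨m, rfl⟩, show (1 : ℚ) - 1 / 2 = 1 / 4 + 1 / 4 by norm_num,
      show (1 : ℚ) / 2 = 1 / 4 + 1 / 4 by norm_num] at this
    linarith
  have e2 : (Polynomial.bernoulli (2 * m + 1)).eval (-((1 : ℚ) / 4) + 1 / 4) = 0 := by
    rw [neg_add_cancel, Polynomial.bernoulli_eval_zero]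
    exact bernoulli_eq_zero_of_odd ⟨m, rfl⟩ (by omega)
  rw [e1, show 2 * m + 1 + 1 = 2 * (m + 1) by ring, aux_sum_even_odd] at h1
  rw [e2, show 2 * m + 1 + 1 = 2 * (m + 1) by ring, aux_sum_even_odd] at h2
  have h3 := congrArg₂ (· + ·) h1 h2
  simp only [← Finset.sum_add_distrib] at h3
  have h4 : (0 : ℚ) = 2 * ∑ l ∈ Finset.range (m + 1), ((2 * m + 1).choose (2 * l) : ℚ) *
      (Polynomial.bernoulli (2 * (m - l) + 1)).eval (1 / 4) * (1 / 4) ^ (2 * l) := by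
    rw [Finset.mul_sum]
    rw [add_zero] at h3
    rw [h3]
    refine Finset.sum_congr rfl fun l hl => ?_
    have hl' : l ≤ m := by simpa [Nat.lt_succ_iff] using hl
    rw [show 2 * m + 1 - 2 * l = 2 * (m - l) + 1 by omega,
      Odd.neg_pow ⟨l, rfl⟩, Even.neg_pow ⟨l, by ring⟩]
    ring
  linarith

lemma aux_sin (j : ℕ) : Real.sin (2 * Real.pi * ((2 * j + 1 : ℕ) : ℝ) * (1 / 4)) = (-1) ^ j := by
  have : 2 * Real.pi * ((2 * j + 1 : ℕ) : ℝ) * (1 / 4) = Real.pi / 2 + j * Real.pi := by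
    push_cast; ring
  rw [this, Real.sin_add_nat_mul_pi, Real.sin_pi_div_two, mul_one]

lemma aux_hasSum (n : ℕ) (hn : n ≠ 0) :
    HasSum (fun k : ℕ => (-1 : ℝ) ^ k / ((k : ℝ) + 1 / 2) ^ (2 * n + 1))
      ((-1) ^ (n + 1) * 4 ^ (2 * n + 1) * Real.pi ^ (2 * n + 1) / 2 / (2 * n + 1).factorial *
        ((Polynomial.bernoulli (2 * n + 1)).eval (1 / 4) : ℚ)) := by
  have h := hasSum_one_div_nat_pow_mul_sin hn (x := 1 / 4) ⟨by norm_num, by norm_num⟩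
  have inj : Function.Injective (fun j : ℕ => 2 * j + 1) := fun a b hab => by
    simp only at hab; omega
  rw [← inj.hasSum_iff] at h
  · have h2 := h.mul_left ((2 : ℝ) ^ (2 * n + 1))
    convert! h2 using 1
    · funext k
      simp only [Function.comp]
      rw [aux_sin]
      have : ((2 * k + 1 : ℕ) : ℝ) = 2 * ((k : ℝ) + 1 / 2) := by push_cast; ring
      rw [this, mul_pow]
      have h5 : ((k : ℝ) + 1 / 2) ≠ 0 := by positivity
      field_simp
    · have : (Polynomial.map (algebraMap ℚ ℝ) (Polynomial.bernoulli (2 * n + 1))).eval (1 / 4 : ℝ)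
          = ((Polynomial.bernoulli (2 * n + 1)).eval (1 / 4) : ℚ) := by
        have := Polynomial.eval_map_apply (algebraMap ℚ ℝ) (p := Polynomial.bernoulli (2 * n + 1)) (1 / 4)
        simpa using this
      rw [this, show (4 : ℝ) = 2 * 2 by norm_num]
      simp only [mul_pow]
      ring
  · intro x hx
    have : ∃ j, x = 2 * j := by
      rcases Nat.even_or_odd' x with ⟨j, h | h⟩
      · exact ⟨j, h⟩
      · exact absurd ⟨j, h.symm⟩ hx
    obtain ⟨j, rfl⟩ := this
    have : 2 * Real.pi * ((2 * j : ℕ) : ℝ) * (1 / 4) = j * Real.pi := by push_cast; ring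
    rw [this, Real.sin_nat_mul_pi, mul_zero]

lemma aux_exp (k : ℕ) :
    Complex.exp (Complex.I * (Real.pi : ℂ) * ((k : ℂ) + 1/2)) = Complex.I * (-1) ^ k := by
  have : Complex.I * (Real.pi : ℂ) * ((k : ℂ) + 1/2)
      = (k : ℂ) * (Real.pi * Complex.I) + Real.pi / 2 * Complex.I := by ring
  rw [this, Complex.exp_add, Complex.exp_nat_mul, Complex.exp_pi_mul_I, Complex.exp_pi_div_two_mul_I]
  ring

lemma aux_term (m : ℕ) (hm : 1 ≤ m) (k : ℕ) :
    (expIntNeg (2*m - 1) (Complex.I * (Real.pi : ℂ) * ((k : ℂ) + 1/2)) -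
          expIntNeg (2*m - 1) (-(Complex.I * (Real.pi : ℂ) * ((k : ℂ) + 1/2))))
          / ((k : ℂ) + 1/2)
    = ∑ l ∈ Finset.range m, (((2 * m - 1).factorial : ℂ) * (-2 * Complex.I) * (-1) ^ (m - l) /
        ((2 * l).factorial * (Real.pi : ℂ) ^ (2 * (m - l)))) *
        (((-1 : ℝ) ^ k / ((k : ℝ) + 1 / 2) ^ (2 * (m - l) + 1) : ℝ) : ℂ) := by
  have hc : ((k : ℂ) + 1/2) ≠ 0 := by
    have : ((k : ℝ) + 1 / 2) ≠ 0 := by positivity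
    have h2 : (((k : ℝ) + 1 / 2 : ℝ) : ℂ) ≠ 0 := Complex.ofReal_ne_zero.mpr this
    push_cast at h2
    exact h2
  have hpi : (Real.pi : ℂ) ≠ 0 := by exact_mod_cast Real.pi_ne_zero
  have he := aux_exp k
  have he' : Complex.exp (-(Complex.I * (Real.pi : ℂ) * ((k : ℂ) + 1/2)))
      = -Complex.I * (-1) ^ k := by
    rw [Complex.exp_neg, he, mul_inv, Complex.inv_I, ← inv_pow]
    norm_num
  have hz2 : (Complex.I * (Real.pi : ℂ) * ((k : ℂ) + 1/2)) ^ 2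
      = -((Real.pi : ℂ) * ((k : ℂ) + 1/2)) ^ 2 := by
    rw [mul_assoc, mul_pow, Complex.I_sq]; ring
  have hz0 : (Complex.I * (Real.pi : ℂ) * ((k : ℂ) + 1/2)) ≠ 0 :=
    mul_ne_zero (mul_ne_zero Complex.I_ne_zero hpi) hc
  push_cast
  unfold expIntNeg
  rw [neg_neg, he, he']
  generalize Complex.I * (Real.pi : ℂ) * ((k : ℂ) + 1/2) = z at *
  generalize (k : ℂ) + 1/2 = c at *
  have hexp : (-((2 * m - 1 : ℕ) : ℤ) - 1) = -((2 * m : ℕ) : ℤ) := by omega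
  rw [hexp, show 2 * m - 1 + 1 = 2 * m by omega, aux_sum_even_odd, aux_sum_even_odd,
    zpow_neg, zpow_neg, zpow_natCast, zpow_natCast, Even.neg_pow (even_two_mul m) z,
    Finset.mul_sum, Finset.mul_sum, ← Finset.sum_sub_distrib, Finset.sum_div]
  refine Finset.sum_congr rfl fun l hl => ?_
  have hl' : l < m := by simpa using hl
  obtain ⟨n, rfl⟩ := Nat.exists_eq_add_of_le hl'.le
  rw [Nat.add_sub_cancel_left, Odd.neg_pow ⟨l, rfl⟩ z, Even.neg_pow (even_two_mul l) z]
  have hzz : (z ^ (2 * (l + n)))⁻¹ * z ^ (2 * l) = (-1) ^ n / ((Real.pi : ℂ) * c) ^ (2 * n) := by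
    have : z ^ (2 * (l + n)) = z ^ (2 * l) * ((-1) ^ n * ((Real.pi : ℂ) * c) ^ (2 * n)) := by
      rw [mul_add, pow_add, pow_mul z 2 n, hz2, pow_mul _ 2 n, ← mul_pow]; ring
    rw [this]
    have h0 : z ^ (2 * l) ≠ 0 := pow_ne_zero _ hz0
    have h1 : ((-1 : ℂ) ^ n) * (-1) ^ n = 1 := by rw [← mul_pow]; norm_num
    have h2 : ((-1 : ℂ) ^ n) ≠ 0 := pow_ne_zero _ (by norm_num)
    field_simp
    rw [sq, h1]
  trans (((2 * (l + n) - 1).factorial : ℂ) * (-2 * Complex.I) * (-1) ^ k / (2 * l).factorial / c)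
    * ((z ^ (2 * (l + n)))⁻¹ * z ^ (2 * l))
  · ring
  · rw [hzz, mul_pow, pow_succ]
    field_simp

/-- For every `m ≥ 1`, the series
`∑_{k=0}^∞ [E_{1-2m}(iπ(k+1/2)) - E_{1-2m}(-iπ(k+1/2))]/(k+1/2)` converges to `iπ/(2m)`. -/
theorem stmt_7 (m : ℕ) (hm : 1 ≤ m) :
    Tendsto (fun n => ∑ k ∈ Finset.range n,
        (expIntNeg (2*m - 1) (Complex.I * (Real.pi : ℂ) * ((k : ℂ) + 1/2)) -
          expIntNeg (2*m - 1) (-(Complex.I * (Real.pi : ℂ) * ((k : ℂ) + 1/2))))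
          / ((k : ℂ) + 1/2))
      atTop (nhds (Complex.I * (Real.pi : ℂ) / (2 * (m : ℂ)))) := by
  apply HasSum.tendsto_sum_nat
  simp only [aux_term m hm]
  have key := hasSum_sum (s := Finset.range m) (fun l hl =>
    (Complex.hasSum_ofReal.mpr (aux_hasSum (m - l)
      (by have := Finset.mem_range.mp hl; omega))).mul_left
      (((2 * m - 1).factorial : ℂ) * (-2 * Complex.I) * (-1) ^ (m - l) /
        ((2 * l).factorial * (Real.pi : ℂ) ^ (2 * (m - l)))))
  convert! key using 1
  have hpi : (Real.pi : ℂ) ≠ 0 := by exact_mod_cast Real.pi_ne_zero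
  have hb := aux_bern m hm
  rw [Finset.sum_range_succ, Nat.sub_self] at hb
  have hb1 : (Polynomial.bernoulli (2 * 0 + 1)).eval (1 / 4 : ℚ) = -(1 / 4) := by
    simp; norm_num
  rw [hb1, show (2 * m + 1).choose (2 * m) = 2 * m + 1 by simp] at hb
  have hb' := congrArg (fun q : ℚ => (q : ℂ)) hb
  push_cast at hb'
  have hm0 : (m : ℂ) ≠ 0 := by exact_mod_cast (by omega : m ≠ 0)
  have hm1 : (2 * m + 1 : ℂ) ≠ 0 := by exact_mod_cast (by omega : 2 * m + 1 ≠ 0)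
  trans (Complex.I * Real.pi * 4 ^ (2 * m + 1) / ((2 * m) * (2 * m + 1))) *
    ∑ l ∈ Finset.range m, ((2 * m + 1).choose (2 * l) : ℂ) *
      (((Polynomial.bernoulli (2 * (m - l) + 1)).eval (1 / 4) : ℚ) : ℂ) * (1 / 4) ^ (2 * l)
  · rw [eq_neg_of_add_eq_zero_left hb', pow_succ, one_div, inv_pow]
    field_simp
  · rw [Finset.mul_sum]
    refine Finset.sum_congr rfl fun l hl => ?_
    have hl' : l < m := by simpa using hl
    obtain ⟨n, rfl⟩ := Nat.exists_eq_add_of_le hl'.le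
    rw [Nat.add_sub_cancel_left]
    push_cast
    generalize (((Polynomial.bernoulli (2 * n + 1)).eval (1 / 4) : ℚ) : ℂ) = β
    have hf : ((2 * (l + n) + 1).factorial : ℂ)
        = (2 * (l + n) + 1) * (2 * (l + n)) * (2 * (l + n) - 1).factorial := by
      obtain ⟨q, hq⟩ : ∃ q, 2 * (l + n) = q + 1 := ⟨2 * (l + n) - 1, by omega⟩
      have hq' : (2 * (l + n) : ℂ) = q + 1 := by exact_mod_cast hq
      rw [hq, hq', Nat.add_sub_cancel, Nat.factorial_succ, Nat.factorial_succ]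
      push_cast; ring
    have hch : ((2 * (l + n) + 1).choose (2 * l) : ℂ) = (2 * (l + n) + 1).factorial /
        ((2 * l).factorial * (2 * n + 1).factorial) := by
      rw [Nat.cast_choose ℂ (by omega : 2 * l ≤ 2 * (l + n) + 1),
        show 2 * (l + n) + 1 - 2 * l = 2 * n + 1 by omega]
    rw [hch, hf]
    have f1 : ((2 * l).factorial : ℂ) ≠ 0 := by exact_mod_cast Nat.factorial_ne_zero _
    have f2 : ((2 * n + 1).factorial : ℂ) ≠ 0 := by exact_mod_cast Nat.factorial_ne_zero _
    have h1 : ((-1 : ℂ) ^ n) * (-1) ^ n = 1 := by rw [← mul_pow]; norm_num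
    have h4 : (4 : ℂ) ^ (2 * (l + n) + 1) = 4 ^ (2 * n + 1) * 4 ^ (2 * l) := by
      rw [← pow_add]; congr 1; ring
    have hs : ((-1 : ℂ) ^ (n + 1)) = -(-1) ^ n := by ring
    have hp : (Real.pi : ℂ) ^ (2 * n + 1) = Real.pi ^ (2 * n) * Real.pi := pow_succ _ _
    push_cast at hm0 hm1
    rw [h4, hs, hp, one_div, inv_pow]
    field_simp
    rw [sq, h1]
    try ring
end

section
/- For every integer m ≥ 1, ∑_{j=0}^{m−1} 𝓔(2j) H_{2m−2j}/(Γ(2m−2j+1) Γ(2j+1)) = ∑_{k=1}^{m} 2^{2k}(2^{2k} − 1) B_{2k}/((2m−2k+1) Γ(2m−2k+2) Γ(2k+1)) − 1/(2m Γ(2m+1)). -/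
open Filter

/-- The value `B_n(x)` of the Bernoulli polynomial at a real point. -/
noncomputable def bpVal (n : ℕ) (x : ℝ) : ℝ :=
  (Polynomial.map (algebraMap ℚ ℝ) (Polynomial.bernoulli n)).eval x

/-- The series `exp (a X)`. -/
noncomputable def ee (a : ℝ) : PowerSeries ℝ := PowerSeries.rescale a (PowerSeries.exp ℝ)

theorem ee_mul (a b : ℝ) : ee a * ee b = ee (a + b) := PowerSeries.exp_mul_exp_eq_exp_add a b

theorem ee_zero : ee 0 = 1 := by
  simp [ee]

theorem coeff_ee (a : ℝ) (n : ℕ) : PowerSeries.coeff n (ee a) = a ^ n / (n.factorial : ℝ) := by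
  simp [ee, PowerSeries.coeff_rescale, PowerSeries.coeff_exp, div_eq_mul_inv]

theorem ee_two_sub_ne : ee 2 - 1 ≠ 0 := by
  intro h
  have := congrArg (PowerSeries.coeff 1) h
  simp [coeff_ee, PowerSeries.coeff_one] at this

theorem two_ne : (2 : PowerSeries ℝ) ≠ 0 := by
  intro h
  rw [show (2 : PowerSeries ℝ) = PowerSeries.C 2 from rfl] at h
  have := congrArg (PowerSeries.coeff 0) h
  simp at this

theorem ee_ne (a : ℝ) : ee a ≠ 0 := by
  intro h
  have := congrArg (PowerSeries.coeff 0) h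
  rw [coeff_ee] at this
  simp at this

theorem sin_sum (f : ℕ → ℝ) (h : ∀ k, f (2 * k) = 0) (N : ℕ) :
    ∑ n ∈ Finset.range (2 * N), f n = ∑ k ∈ Finset.range N, f (2 * k + 1) := by
  induction N with
  | zero => simp
  | succ N ih =>
    rw [show 2 * (N + 1) = 2 * N + 1 + 1 by ring, Finset.sum_range_succ, Finset.sum_range_succ,
      Finset.sum_range_succ, ih, h]
    ring

theorem even_sum (f : ℕ → ℝ) (h : ∀ k, f (2 * k + 1) = 0) (N : ℕ) :
    ∑ n ∈ Finset.range (2 * N + 1), f n = ∑ k ∈ Finset.range (N + 1), f (2 * k) := by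
  induction N with
  | zero => simp
  | succ N ih =>
    rw [show 2 * (N + 1) + 1 = 2 * N + 1 + 1 + 1 by ring, Finset.sum_range_succ,
      Finset.sum_range_succ, Finset.sum_range_succ _ (N + 1), ih, h]
    ring_nf

theorem euler_value (E : ℕ → ℝ) (hE : eulerChar E) (j : ℕ) :
    E j = - 4 ^ (2 * j + 1) * bpVal (2 * j + 1) (1 / 4) / (2 * j + 1) := by
  have hpi := Real.pi_pos
  rcases Nat.eq_zero_or_pos j with rfl | hj
  · have h1 := hE 0
    have h2 := Real.tendsto_sum_pi_div_four.const_mul 2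
    have h3 := tendsto_nhds_unique h1 (h2.congr (fun n => by
      rw [Finset.mul_sum]
      refine Finset.sum_congr rfl fun k _ => ?_
      have : (2 * (k : ℝ) + 1) ≠ 0 := by positivity
      have : ((k : ℝ) + 1 / 2) ≠ 0 := by positivity
      field_simp
      ring))
    simp at h3
    have : E 0 = 1 := by
      field_simp at h3
      linarith
    rw [this]
    simp [bpVal, Polynomial.bernoulli_one]
    norm_num
  · have h1 := hE j
    have h2 := (hasSum_one_div_nat_pow_mul_sin (k := j) hj.ne'
      (x := 1 / 4) ⟨by norm_num, by norm_num⟩).tendsto_sum_nat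
    have h4 : Tendsto (fun N : ℕ => 2 * N) atTop atTop :=
      tendsto_id.const_mul_atTop' (by norm_num)
    have h5 := (h2.comp h4).const_mul (2 ^ (2 * j + 1))
    have h3 := tendsto_nhds_unique h1 (h5.congr (fun n => by
      simp only [Function.comp]
      rw [sin_sum, Finset.mul_sum]
      · refine Finset.sum_congr rfl fun k _ => ?_
        have e1 : Real.sin (2 * Real.pi * ((2 * k + 1 : ℕ) : ℝ) * (1 / 4)) = (-1) ^ k := by
          rw [show 2 * Real.pi * ((2 * k + 1 : ℕ) : ℝ) * (1 / 4) = Real.pi / 2 + k * Real.pi by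
            push_cast; ring, Real.sin_add_nat_mul_pi]
          simp
        rw [e1]
        push_cast
        rw [show (2 * (k : ℝ) + 1) = 2 * (k + 1 / 2) by ring, mul_pow]
        have : ((k : ℝ) + 1 / 2) ≠ 0 := by positivity
        field_simp
      · intro k
        rw [show 2 * Real.pi * ((2 * k : ℕ) : ℝ) * (1 / 4) = k * Real.pi by push_cast; ring,
          Real.sin_nat_mul_pi, mul_zero]))
    change _ = _ * (_ * bpVal (2 * j + 1) (1 / 4)) at h3
    rw [Nat.factorial_succ] at h3
    have hf : ((2 * j).factorial : ℝ) ≠ 0 := by positivity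
    have hj1 : (2 * (j : ℝ) + 1) ≠ 0 := by positivity
    have hs : ((-1 : ℝ) ^ j) ≠ 0 := by simp
    have hp : Real.pi ^ (2 * j + 1) ≠ 0 := by positivity
    have h44 : (4 : ℝ) ^ (2 * j + 1) = 2 ^ (2 * j + 1) * 2 ^ (2 * j + 1) := by
      rw [← mul_pow]; norm_num
    rw [h44, eq_div_iff hj1]
    rw [pow_succ (-1 : ℝ) j, mul_pow] at h3
    push_cast at h3
    have h6 : ((-1 : ℝ) ^ j * Real.pi ^ (2 * j + 1)) * (E j * (2 * j + 1)) =
        ((-1 : ℝ) ^ j * Real.pi ^ (2 * j + 1)) *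
          (-(2 ^ (2 * j + 1) * 2 ^ (2 * j + 1)) * bpVal (2 * j + 1) (1 / 4)) := by
      rw [div_eq_iff (by positivity)] at h3
      have h7 := congrArg (fun z => z * (2 * (j : ℝ) + 1)) h3
      have h8 : ∀ A : ℝ, A / 2 / ((2 * (j : ℝ) + 1) * ((2 * j).factorial : ℝ)) =
          A * (1 / (2 * (2 * (j : ℝ) + 1) * ((2 * j).factorial : ℝ))) := by
        intro A; field_simp
      rw [h8] at h7
      have h9 : (1 / (2 * (2 * (j : ℝ) + 1) * ((2 * j).factorial : ℝ))) *
        (2 * ((2 * j).factorial : ℝ)) * (2 * (j : ℝ) + 1) = 1 := by field_simp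
      linear_combination h7 - ((-1 : ℝ) ^ j * Real.pi ^ (2 * j + 1)) *
          ((2 ^ (2 * j + 1) * 2 ^ (2 * j + 1)) * bpVal (2 * j + 1) (1 / 4)) * h9
    exact mul_left_cancel₀ (mul_ne_zero hs hp) h6

theorem coeff_even_mul (f g : PowerSeries ℝ) (hf : ∀ k, PowerSeries.coeff (2 * k + 1) f = 0)
    (m : ℕ) : PowerSeries.coeff (2 * m) (f * g) = ∑ j ∈ Finset.range (m + 1),
      PowerSeries.coeff (2 * j) f * PowerSeries.coeff (2 * m - 2 * j) g := by
  rw [PowerSeries.coeff_mul, Finset.Nat.sum_antidiagonal_eq_sum_range_succ_mk]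
  exact even_sum (fun n => PowerSeries.coeff n f * PowerSeries.coeff (2 * m - n) g)
    (fun k => by simp [hf]) m

/-- The series of the hyperbolic secant. -/
noncomputable def serQ (E : ℕ → ℝ) : PowerSeries ℝ :=
  PowerSeries.mk fun n => if Even n then E (n / 2) / (n.factorial : ℝ) else 0

/-- The series of `X tanh X`. -/
noncomputable def serD : PowerSeries ℝ :=
  PowerSeries.mk fun n => if Even n then
    2 ^ n * (2 ^ n - 1) * ((bernoulli n : ℚ) : ℝ) / (n.factorial : ℝ) else 0

/-- The series of `Shi X / X`. -/
noncomputable def serS : PowerSeries ℝ :=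
  PowerSeries.mk fun n => if Even n then 1 / (((n : ℝ) + 1) * ((n + 1).factorial : ℝ)) else 0

/-- The series of the entire hyperbolic cosine integral. -/
noncomputable def serCin : PowerSeries ℝ :=
  PowerSeries.mk fun n => if Even n then 1 / ((n : ℝ) * (n.factorial : ℝ)) else 0

/-- The exponential generating series of harmonic numbers. -/
noncomputable def serG : PowerSeries ℝ :=
  PowerSeries.mk fun n => ((harmonic n : ℚ) : ℝ) / (n.factorial : ℝ)

/-- The even part of `serG`. -/
noncomputable def serC : PowerSeries ℝ :=
  PowerSeries.mk fun n => if Even n then ((harmonic n : ℚ) : ℝ) / (n.factorial : ℝ) else 0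

/-- The generating series of Bernoulli polynomials at `1/4`, at `a X`. -/
noncomputable def serP (a : ℝ) : PowerSeries ℝ :=
  PowerSeries.mk fun n => a ^ n * (bpVal n (1 / 4) / (n.factorial : ℝ))

theorem serP_eq (a : ℝ) : serP a * (ee a - 1) = PowerSeries.C a * PowerSeries.X * ee (a / 4) := by
  have h := congrArg (PowerSeries.rescale a)
    (Polynomial.bernoulli_generating_function (A := ℝ) (1 / 4))
  simp only [map_mul, map_sub, map_one, PowerSeries.rescale_X, PowerSeries.rescale_rescale] at h
  rw [show 1 / 4 * a = a / 4 by ring] at h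
  rw [ee, ee, ← h]
  congr 1
  ext n
  simp [serP, bpVal, PowerSeries.coeff_rescale, Polynomial.aeval_def, Polynomial.eval_map,
    div_eq_mul_inv, Algebra.smul_def]
  ring_nf
  simp

theorem X_serQ (E : ℕ → ℝ) (hE : eulerChar E) :
    2 * (PowerSeries.X * serQ E) = serP (-4) - serP 4 := by
  rw [show (2 : PowerSeries ℝ) = PowerSeries.C 2 from rfl]
  ext n
  rw [PowerSeries.coeff_C_mul]
  cases n with
  | zero => simp [serP]
  | succ n =>
    rw [PowerSeries.coeff_succ_X_mul]
    rcases Nat.even_or_odd' n with ⟨k, rfl | rfl⟩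
    · have ho : Odd (2 * k + 1) := ⟨k, rfl⟩
      simp only [serQ, serP, map_sub, PowerSeries.coeff_mk, ho.neg_pow]
      rw [if_pos (by simp), show 2 * k / 2 = k by omega, euler_value E hE k, Nat.factorial_succ]
      push_cast
      have hf : ((2 * k).factorial : ℝ) ≠ 0 := by positivity
      have hj1 : (2 * (k : ℝ) + 1) ≠ 0 := by positivity
      field_simp
      ring
    · have ho : Even (2 * k + 1 + 1) := ⟨k + 1, by ring⟩
      simp [serQ, serP, ho.neg_pow]

theorem serQ_eq (E : ℕ → ℝ) (hE : eulerChar E) : serQ E * (ee 1 + ee (-1)) = 2 := by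
  have h1 := serP_eq 4
  have h2 := serP_eq (-4)
  have h3 := X_serQ E hE
  rw [show (4 / 4 : ℝ) = 1 by norm_num, show PowerSeries.C (4 : ℝ) = 4 from rfl] at h1
  rw [show (-4 / 4 : ℝ) = -1 by norm_num, map_neg, show PowerSeries.C (4 : ℝ) = 4 from rfl] at h2
  have e2 : ee 2 = ee 1 * ee 1 := by rw [ee_mul]; norm_num
  have e4 : ee 4 = ee 1 ^ 4 := by
    rw [show ee 1 ^ 4 = (ee 1 * ee 1) * (ee 1 * ee 1) by ring]; simp only [ee_mul]; norm_num
  have en4 : ee (-4) = ee (-1) ^ 4 := by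
    rw [show ee (-1) ^ 4 = (ee (-1) * ee (-1)) * (ee (-1) * ee (-1)) by ring]
    simp only [ee_mul]; norm_num
  have e0 : ee 1 * ee (-1) = 1 := by rw [ee_mul]; norm_num [ee_zero]
  have hne := ee_two_sub_ne
  rw [e2] at hne
  rw [e4] at h1
  rw [en4] at h2
  set a := ee 1
  set b := ee (-1)
  have h2' : serP (-4) * (a ^ 4 - 1) = 4 * PowerSeries.X * a ^ 3 := by
    have hb4 : a ^ 4 * b ^ 4 = 1 := by rw [← mul_pow, e0, one_pow]
    linear_combination (-a ^ 4) * h2 + serP (-4) * hb4 + 4 * PowerSeries.X * a ^ 3 * e0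
  have hc : (2 * PowerSeries.X * (a * a - 1) * a : PowerSeries ℝ) ≠ 0 :=
    mul_ne_zero (mul_ne_zero (mul_ne_zero two_ne PowerSeries.X_ne_zero) hne) (ee_ne 1)
  apply mul_left_cancel₀ hc
  linear_combination (a ^ 4 - 1) * h3 + h2' - h1 +
    2 * PowerSeries.X * serQ E * (a * a - 1) * e0

theorem bser_eq (a : ℝ) : PowerSeries.rescale a (bernoulliPowerSeries ℝ) * (ee a - 1) =
    PowerSeries.C a * PowerSeries.X := by
  have h := congrArg (PowerSeries.rescale a) (bernoulliPowerSeries_mul_exp_sub_one ℝ)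
  simpa only [map_mul, map_sub, map_one, PowerSeries.rescale_X, ee] using h

theorem serD_split : serD = PowerSeries.rescale 4 (bernoulliPowerSeries ℝ) -
    PowerSeries.rescale 2 (bernoulliPowerSeries ℝ) + PowerSeries.X := by
  ext n
  have h4 : (4 : ℝ) ^ n = 2 ^ n * 2 ^ n := by rw [← mul_pow]; norm_num
  simp only [serD, map_add, map_sub, PowerSeries.coeff_mk, PowerSeries.coeff_rescale,
    bernoulliPowerSeries, PowerSeries.coeff_X, h4]
  by_cases hn : Even n
  · have : n ≠ 1 := by rintro rfl; simp at hn
    simp [hn, this]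
    ring
  · rw [if_neg hn]
    rw [Nat.not_even_iff_odd] at hn
    by_cases h1 : n = 1
    · subst h1
      simp [bernoulli_one]
      norm_num
    · have : 1 < n := by have := hn.pos; omega
      simp [h1, bernoulli_eq_zero_of_odd hn this]

theorem serD_eq : serD * (ee 1 + ee (-1)) = PowerSeries.X * (ee 1 - ee (-1)) := by
  have h1 := bser_eq 4
  have h2 := bser_eq 2
  have h3 := serD_split
  rw [show PowerSeries.C (4 : ℝ) = 4 from rfl] at h1
  rw [show PowerSeries.C (2 : ℝ) = 2 from rfl] at h2
  have e2 : ee 2 = ee 1 * ee 1 := by rw [ee_mul]; norm_num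
  have e4 : ee 4 = ee 1 ^ 4 := by
    rw [show ee 1 ^ 4 = (ee 1 * ee 1) * (ee 1 * ee 1) by ring]; simp only [ee_mul]; norm_num
  have e0 : ee 1 * ee (-1) = 1 := by rw [ee_mul]; norm_num [ee_zero]
  have hne := ee_two_sub_ne
  rw [e2] at hne h2
  rw [e4] at h1
  set a := ee 1
  set b := ee (-1)
  apply mul_left_cancel₀ (mul_ne_zero hne (ee_ne 1))
  linear_combination (a ^ 4 - 1) * h3 + h1 - (a ^ 2 + 1) * h2 +
    (serD + PowerSeries.X) * (a * a - 1) * e0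

theorem serG_eq : serG = ee 1 * (PowerSeries.X * serS - serCin) := by
  have key : ee (-1) * serG = PowerSeries.X * serS - serCin := by
    apply PowerSeries.derivative.ext
    · have d1 : PowerSeries.derivative ℝ (ee (-1)) = - ee (-1) := by
        ext n
        rw [PowerSeries.coeff_derivative, map_neg, coeff_ee, coeff_ee, Nat.factorial_succ]
        push_cast
        field_simp
        ring
      have d2 : PowerSeries.X * (PowerSeries.derivative ℝ serG - serG) = ee 1 - 1 := by
        ext n
        cases n with
        | zero => simp [ee]
        | succ n =>
          rw [PowerSeries.coeff_succ_X_mul, map_sub, PowerSeries.coeff_derivative, map_sub,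
            coeff_ee]
          simp only [serG, PowerSeries.coeff_mk, harmonic_succ, Nat.factorial_succ,
            PowerSeries.coeff_one]
          push_cast
          simp
          field_simp
          ring
      have d3 : PowerSeries.X * PowerSeries.derivative ℝ (PowerSeries.X * serS - serCin) =
          1 - ee (-1) := by
        ext n
        cases n with
        | zero =>
          rw [map_sub, map_sub, coeff_ee]
          simp
        | succ n =>
          rw [PowerSeries.coeff_succ_X_mul, PowerSeries.coeff_derivative, map_sub, map_sub,
            coeff_ee, PowerSeries.coeff_succ_X_mul]
          simp only [serS, serCin, PowerSeries.coeff_mk, PowerSeries.coeff_one]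
          have hf : ((n + 1).factorial : ℝ) ≠ 0 := by positivity
          have hn1 : ((n : ℝ) + 1) ≠ 0 := by positivity
          rcases Nat.even_or_odd n with hn | hn
          · have ho : Odd (n + 1) := hn.add_one
            have ho' := Nat.not_even_iff_odd.mpr ho
            rw [if_pos hn, if_neg ho', if_neg (by omega), ho.neg_pow]
            simp
            field_simp
          · have ho : Even (n + 1) := hn.add_one
            have ho' := Nat.not_even_iff_odd.mpr hn
            rw [if_pos ho, if_neg ho', if_neg (by omega), ho.neg_pow]
            push_cast
            simp
            field_simp
      apply mul_left_cancel₀ (PowerSeries.X_ne_zero (R := ℝ))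
      rw [d3, Derivation.leibniz, d1]
      have e0 : ee 1 * ee (-1) = 1 := by rw [ee_mul]; norm_num [ee_zero]
      simp only [smul_eq_mul]
      linear_combination ee (-1) * d2 + e0
    · rw [← PowerSeries.coeff_zero_eq_constantCoeff_apply,
        ← PowerSeries.coeff_zero_eq_constantCoeff_apply]
      simp [PowerSeries.coeff_mul, serG, serCin]
  rw [← key, ← mul_assoc, ee_mul]
  norm_num [ee_zero]

theorem rescale_ee : PowerSeries.rescale (-1) (ee 1) = ee (-1) := by
  ext n
  rw [PowerSeries.coeff_rescale, coeff_ee, coeff_ee]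
  simp [div_eq_mul_inv]

theorem rescale_even (f : PowerSeries ℝ) (hf : ∀ k, PowerSeries.coeff (2 * k + 1) f = 0) :
    PowerSeries.rescale (-1) f = f := by
  ext n
  rw [PowerSeries.coeff_rescale]
  rcases Nat.even_or_odd' n with ⟨k, rfl | rfl⟩
  · simp
  · simp [hf]

theorem not_even_two_mul_add_one' (k : ℕ) : ¬ Even (2 * k + 1) := by
  simp

theorem serC_eq : 2 * serC = (ee 1 - ee (-1)) * PowerSeries.X * serS -
    (ee 1 + ee (-1)) * serCin := by
  have h1 : 2 * serC = serG + PowerSeries.rescale (-1) serG := by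
    rw [show (2 : PowerSeries ℝ) = PowerSeries.C 2 from rfl]
    ext n
    rw [PowerSeries.coeff_C_mul, map_add, PowerSeries.coeff_rescale]
    simp only [serC, serG, PowerSeries.coeff_mk]
    rcases Nat.even_or_odd n with hn | hn
    · rw [if_pos hn, hn.neg_pow]; ring
    · rw [if_neg (Nat.not_even_iff_odd.mpr hn), hn.neg_pow]; ring
  rw [h1, serG_eq]
  simp only [map_mul, map_sub, rescale_ee, PowerSeries.rescale_neg_one_X]
  rw [rescale_even serS (fun k => by simp [serS]), rescale_even serCin (fun k => by simp [serCin])]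
  ring

theorem main_series (E : ℕ → ℝ) (hE : eulerChar E) :
    serQ E * serC = serD * serS - serCin := by
  have h1 := serQ_eq E hE
  have h2 := serD_eq
  have h3 := serC_eq
  apply mul_left_cancel₀ two_ne
  linear_combination serQ E * h3 - serQ E * serS * h2 + (serD * serS - serCin) * h1

/-- For every `m ≥ 1`,
`∑_{j=0}^{m-1} 𝓔(2j) H_{2m-2j}/(Γ(2m-2j+1) Γ(2j+1))
  = ∑_{k=1}^{m} 2^{2k}(2^{2k}-1) B_{2k}/((2m-2k+1) Γ(2m-2k+2) Γ(2k+1)) - 1/(2m Γ(2m+1))`. -/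
theorem stmt_9 (m : ℕ) (hm : 1 ≤ m) (E : ℕ → ℝ) (hE : eulerChar E) :
    ∑ j ∈ Finset.range m,
        E j * ((harmonic (2*m - 2*j) : ℚ) : ℝ) /
          ((Nat.factorial (2*m - 2*j) : ℝ) * (Nat.factorial (2*j) : ℝ))
      = ∑ k ∈ Finset.Icc 1 m,
          2 ^ (2*k) * (2 ^ (2*k) - 1) * ((bernoulli (2*k) : ℚ) : ℝ) /
            ((2 * (m : ℝ) - 2 * (k : ℝ) + 1) * (Nat.factorial (2*m - 2*k + 1) : ℝ) *
              (Nat.factorial (2*k) : ℝ))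
        - 1 / (2 * (m : ℝ) * (Nat.factorial (2*m) : ℝ)) := by
  have h := congrArg (PowerSeries.coeff (2 * m)) (main_series E hE)
  rw [map_sub, coeff_even_mul _ _ (fun k => by simp [serQ]),
    coeff_even_mul _ _ (fun k => by simp [serD]), Finset.sum_range_succ,
    Finset.sum_range_succ'] at h
  have hl : PowerSeries.coeff (2 * m - 2 * m) serC = 0 := by simp [serC]
  have hd : PowerSeries.coeff (2 * 0) serD = 0 := by simp [serD]
  rw [hl, hd, mul_zero, zero_mul, add_zero, add_zero] at h
  have hc : PowerSeries.coeff (2 * m) serCin = 1 / (2 * (m : ℝ) * (Nat.factorial (2*m) : ℝ)) := by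
    simp [serCin]
  rw [hc] at h
  have hI : Finset.Icc 1 m = Finset.Ico 1 (m + 1) := by ext; simp
  rw [hI, Finset.sum_Ico_eq_sum_range]
  convert h using 1
  · refine Finset.sum_congr rfl fun j hj => ?_
    rw [Finset.mem_range] at hj
    have e : Even (2 * m - 2 * j) := ⟨m - j, by omega⟩
    simp only [serQ, serC, PowerSeries.coeff_mk]
    rw [if_pos e, if_pos (by simp), show 2 * j / 2 = j by omega]
    have hf : ((2 * j).factorial : ℝ) ≠ 0 := by positivity
    have hf' : ((2 * m - 2 * j).factorial : ℝ) ≠ 0 := by positivity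
    field_simp
  · congr 1
    rw [Nat.add_sub_cancel]
    refine Finset.sum_congr rfl fun k hk => ?_
    rw [Finset.mem_range] at hk
    rw [add_comm 1 k]
    have e : Even (2 * m - 2 * (k + 1)) := ⟨m - (k + 1), by omega⟩
    simp only [serD, serS, PowerSeries.coeff_mk]
    rw [if_pos e, if_pos (by simp), Nat.cast_sub (by omega)]
    push_cast
    rw [div_mul_div_comm]
    congr 1
    · ring
    · ring
end

section
/- For every integer m ≥ 0, as the real variable t → ∞ one has 4 ∑_{k=0}^∞ (−1)^k/(t+1+2k) − 2 ∑_{k=0}^{m} 𝓔(2k)/t^{2k+1} = o(t^{−(2m+1)}); that is, the alternating Hurwitz zeta value η(1,(t+1)/2) = ∑_{k=0}^∞ (−1)^k/(k+(t+1)/2), which equals (ψ(t/4+3/4) − ψ(t/4+1/4))/2, admits the divergent asymptotic expansion ∑_{k=0}^∞ 𝓔(2k)/t^{2k+1}. -/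
open Filter Asymptotics

lemma aux_pair (a y : ℝ) (ha : a ≠ 0) :
    1 / ((a : ℂ) + y * Complex.I) + 1 / ((a : ℂ) - y * Complex.I)
      = ((2 * a / (a ^ 2 + y ^ 2) : ℝ) : ℂ) := by
  have hp : (a ^ 2 + y ^ 2 : ℝ) ≠ 0 := by positivity
  have hp' : ((a : ℂ) ^ 2 + (y : ℂ) ^ 2) ≠ 0 := by exact_mod_cast hp
  have hf : ((a : ℂ) + y * Complex.I) * ((a : ℂ) - y * Complex.I) = (a : ℂ) ^ 2 + (y : ℂ) ^ 2 := by
    linear_combination (-(y : ℂ) ^ 2) * Complex.I_sq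
  have h1 : ((a : ℂ) + y * Complex.I) ≠ 0 := by
    intro h; rw [h, zero_mul] at hf; exact hp' hf.symm
  have h2 : ((a : ℂ) - y * Complex.I) ≠ 0 := by
    intro h; rw [h, mul_zero] at hf; exact hp' hf.symm
  push_cast
  rw [div_add_div _ _ h1 h2, hf]
  congr 1
  ring

lemma aux_compl (z : ℂ) (hz : z.re = 1 / 4) : z ∈ Complex.integerComplement := by
  rintro ⟨n, hn⟩
  have h := congrArg Complex.re hn
  rw [hz] at h
  simp at h
  have h4 : ((4 * n : ℤ) : ℝ) = ((1 : ℤ) : ℝ) := by push_cast; linarith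
  have := Int.cast_injective h4
  omega

lemma aux_cot_tendsto (z : ℂ) (hz : z.re = 1 / 4) :
    Tendsto (fun N => 1 / z + ∑ n ∈ Finset.range N, (1 / (z - (n + 1)) + 1 / (z + (n + 1))))
      atTop (nhds (Real.pi * Complex.cot (Real.pi * z))) := by
  have hc := aux_compl z hz
  have hs : HasSum (fun n : ℕ => (1 / (z - (n + 1)) + 1 / (z + (n + 1))))
      (Real.pi * Complex.cot (Real.pi * z) - 1 / z) := by
    rw [cot_series_rep' hc]
    exact (summable_cotTerm hc).hasSum
  have := hs.tendsto_sum_nat.const_add (1 / z)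
  simpa using this

lemma aux_cot_sum (y : ℝ) :
    Complex.cot (Real.pi * (((1 / 4 : ℝ) : ℂ) + y * Complex.I))
      + Complex.cot (Real.pi * (((1 / 4 : ℝ) : ℂ) - y * Complex.I))
      = ((2 / Real.cosh (2 * Real.pi * y) : ℝ) : ℂ) := by
  set A : ℂ := Real.pi * (((1 / 4 : ℝ) : ℂ) + y * Complex.I) with hA
  set B : ℂ := Real.pi * (((1 / 4 : ℝ) : ℂ) - y * Complex.I) with hB
  have hsum : A + B = Real.pi / 2 := by rw [hA, hB]; push_cast; ring
  have hdiff : A - B = ((2 * Real.pi * y : ℝ) : ℂ) * Complex.I := by rw [hA, hB]; push_cast; ring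
  have h1 : Complex.cos (A - B) = ((Real.cosh (2 * Real.pi * y) : ℝ) : ℂ) := by
    rw [hdiff, Complex.cos_mul_I, Complex.ofReal_cosh]
  have h2 : Complex.cos (A + B) = 0 := by rw [hsum, Complex.cos_pi_div_two]
  have h3 : Complex.sin (A + B) = 1 := by rw [hsum, Complex.sin_pi_div_two]
  rw [Complex.cos_sub] at h1
  rw [Complex.cos_add] at h2
  rw [Complex.sin_add] at h3
  have hprod : 2 * (Complex.sin A * Complex.sin B) = ((Real.cosh (2 * Real.pi * y) : ℝ) : ℂ) := by
    linear_combination h1 - h2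
  have hne : ((Real.cosh (2 * Real.pi * y) : ℝ) : ℂ) ≠ 0 := by
    exact_mod_cast (Real.cosh_pos _).ne'
  have hsA : Complex.sin A ≠ 0 := by
    intro h; rw [h] at hprod; apply hne; rw [← hprod]; ring
  have hsB : Complex.sin B ≠ 0 := by
    intro h; rw [h] at hprod; apply hne; rw [← hprod]; ring
  rw [Complex.cot, Complex.cot, div_add_div _ _ hsA hsB, Complex.ofReal_div, ← hprod,
    show Complex.cos A * Complex.sin B + Complex.sin A * Complex.cos B = 1 by
      linear_combination h3]
  push_cast
  field_simp

lemma sech_series (x : ℝ) :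
    Tendsto (fun N : ℕ => ∑ k ∈ Finset.range (2 * N + 1),
      (-1 : ℝ) ^ k * (2 * (((k : ℝ) + 1 / 2) * Real.pi) /
        ((((k : ℝ) + 1 / 2) * Real.pi) ^ 2 + x ^ 2)))
      atTop (nhds (1 / Real.cosh x)) := by
  have hpi := Real.pi_pos
  set y : ℝ := x / (2 * Real.pi) with hy
  have hx : x = 2 * Real.pi * y := by rw [hy]; field_simp
  have hz1 := aux_cot_tendsto (((1 / 4 : ℝ) : ℂ) + y * Complex.I) (by simp)
  have hz2 := aux_cot_tendsto (((1 / 4 : ℝ) : ℂ) - y * Complex.I) (by simp)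
  have h := hz1.add hz2
  rw [← mul_add, aux_cot_sum] at h
  have key : ∀ N : ℕ, (1 / (((1 / 4 : ℝ) : ℂ) + y * Complex.I)
      + ∑ n ∈ Finset.range N, (1 / ((((1 / 4 : ℝ) : ℂ) + y * Complex.I) - (n + 1))
        + 1 / ((((1 / 4 : ℝ) : ℂ) + y * Complex.I) + (n + 1))))
      + (1 / (((1 / 4 : ℝ) : ℂ) - y * Complex.I)
      + ∑ n ∈ Finset.range N, (1 / ((((1 / 4 : ℝ) : ℂ) - y * Complex.I) - (n + 1))
        + 1 / ((((1 / 4 : ℝ) : ℂ) - y * Complex.I) + (n + 1))))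
      = ((2 * Real.pi * ∑ k ∈ Finset.range (2 * N + 1),
      (-1 : ℝ) ^ k * (2 * (((k : ℝ) + 1 / 2) * Real.pi) /
        ((((k : ℝ) + 1 / 2) * Real.pi) ^ 2 + x ^ 2)) : ℝ) : ℂ) := by
    intro N
    induction N with
    | zero =>
      simp only [Finset.range_zero, Finset.sum_empty, add_zero]
      rw [aux_pair _ _ (by norm_num)]
      congr 1
      simp
      rw [hx]
      field_simp
      ring
    | succ N ih =>
      rw [Finset.sum_range_succ, Finset.sum_range_succ,
        show 2 * (N + 1) + 1 = (2 * N + 1) + 1 + 1 by ring,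
        Finset.sum_range_succ _ (2 * N + 1 + 1), Finset.sum_range_succ _ (2 * N + 1),
        add_assoc (∑ k ∈ Finset.range (2 * N + 1), _), mul_add (2 * Real.pi), Complex.ofReal_add,
        ← ih]
      have e1 := aux_pair (1 / 4 - ((N : ℝ) + 1)) y (by
        have : (0 : ℝ) ≤ N := Nat.cast_nonneg N
        intro h; linarith)
      have e2 := aux_pair (1 / 4 + ((N : ℝ) + 1)) y (by positivity)
      have e3 : (2 * (1 / 4 - ((N : ℝ) + 1)) / ((1 / 4 - ((N : ℝ) + 1)) ^ 2 + y ^ 2))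
          + (2 * (1 / 4 + ((N : ℝ) + 1)) / ((1 / 4 + ((N : ℝ) + 1)) ^ 2 + y ^ 2))
          = 2 * Real.pi * ((-1 : ℝ) ^ (2 * N + 1) *
            (2 * ((((2 * N + 1 : ℕ) : ℝ) + 1 / 2) * Real.pi) /
              (((((2 * N + 1 : ℕ) : ℝ) + 1 / 2) * Real.pi) ^ 2 + x ^ 2))
            + (-1 : ℝ) ^ (2 * N + 1 + 1) *
            (2 * ((((2 * N + 1 + 1 : ℕ) : ℝ) + 1 / 2) * Real.pi) /
              (((((2 * N + 1 + 1 : ℕ) : ℝ) + 1 / 2) * Real.pi) ^ 2 + x ^ 2))) := by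
        rw [hx]
        have s1 : (-1 : ℝ) ^ (2 * N + 1) = -1 := by rw [pow_succ, pow_mul]; norm_num
        have s2 : (-1 : ℝ) ^ (2 * N + 1 + 1) = 1 := by rw [pow_succ, s1]; norm_num
        rw [s1, s2]
        have hN : (0 : ℝ) ≤ N := Nat.cast_nonneg N
        have d1 : (1 / 4 - ((N : ℝ) + 1)) ^ 2 + y ^ 2 ≠ 0 := by
          have : (1 / 4 - ((N : ℝ) + 1)) ≠ 0 := by intro h; linarith
          positivity
        have d2 : (1 / 4 + ((N : ℝ) + 1)) ^ 2 + y ^ 2 ≠ 0 := by positivity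
        push_cast
        rw [show (((2 * (N : ℝ) + 1) + 1 / 2) * Real.pi) ^ 2 + (2 * Real.pi * y) ^ 2
            = 4 * Real.pi ^ 2 * ((1 / 4 - ((N : ℝ) + 1)) ^ 2 + y ^ 2) by ring,
          show (((2 * (N : ℝ) + 1 + 1) + 1 / 2) * Real.pi) ^ 2 + (2 * Real.pi * y) ^ 2
            = 4 * Real.pi ^ 2 * ((1 / 4 + ((N : ℝ) + 1)) ^ 2 + y ^ 2) by ring]
        generalize hD1 : (1 / 4 - ((N : ℝ) + 1)) ^ 2 + y ^ 2 = D1 at *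
        generalize hD2 : (1 / 4 + ((N : ℝ) + 1)) ^ 2 + y ^ 2 = D2 at *
        field_simp
        ring
      rw [← e3, Complex.ofReal_add, ← e1, ← e2]
      push_cast
      ring_nf
  simp_rw [key] at h
  have h' : Tendsto (fun N : ℕ => 2 * Real.pi * ∑ k ∈ Finset.range (2 * N + 1),
      (-1 : ℝ) ^ k * (2 * (((k : ℝ) + 1 / 2) * Real.pi) /
        ((((k : ℝ) + 1 / 2) * Real.pi) ^ 2 + x ^ 2))) atTop
        (nhds (Real.pi * (2 / Real.cosh (2 * Real.pi * y)))) := by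
    rw [← Complex.ofReal_mul] at h
    exact (Complex.continuous_re.tendsto _).comp h
  have h'' := h'.const_mul (1 / (2 * Real.pi))
  rw [← hx] at h''
  convert h'' using 2
  · rw [← mul_assoc, one_div_mul_cancel (by positivity), one_mul]
  · field_simp

lemma aux_geom (a x : ℝ) (ha : 0 < a) (M : ℕ) :
    2 * a / (a ^ 2 + x ^ 2) = ∑ j ∈ Finset.range M, (-1 : ℝ) ^ j * 2 * x ^ (2 * j) / a ^ (2 * j + 1)
      + (-1 : ℝ) ^ M * x ^ (2 * M) / a ^ (2 * M) * (2 * a / (a ^ 2 + x ^ 2)) := by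
  have hd : a ^ 2 + x ^ 2 ≠ 0 := by positivity
  induction M with
  | zero => simp
  | succ M ih =>
    rw [Finset.sum_range_succ]
    refine ih.trans ?_
    rw [add_assoc, add_right_inj, show 2 * (M + 1) = 2 * M + 2 by ring, pow_add x, pow_add a,
      pow_succ (-1 : ℝ)]
    field_simp
    ring

lemma aux_rem (m : ℕ) : ∃ C : ℝ, 0 ≤ C ∧ ∀ K : ℕ, ∑ k ∈ Finset.range K,
    2 / (((k : ℝ) + 1 / 2) * Real.pi) ^ (2 * (m + 1) + 1) ≤ C := by
  have hs : Summable (fun k : ℕ => 2 * (1 / (((k + 1 : ℕ) : ℝ)) ^ 2)) :=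
    ((summable_nat_add_iff 1).2 (Real.summable_one_div_nat_pow.2 (by norm_num : 1 < 2))).mul_left 2
  refine ⟨∑' k : ℕ, 2 * (1 / (((k + 1 : ℕ) : ℝ)) ^ 2), tsum_nonneg (fun k => by positivity), ?_⟩
  intro K
  refine le_trans (Finset.sum_le_sum ?_) (hs.sum_le_tsum (Finset.range K) (fun k _ => by positivity))
  intro k _
  have hk : (0 : ℝ) ≤ k := Nat.cast_nonneg k
  have h1 : ((k + 1 : ℕ) : ℝ) ≤ ((k : ℝ) + 1 / 2) * Real.pi := by
    push_cast
    nlinarith [Real.pi_gt_three]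
  have h0 : (1 : ℝ) ≤ ((k + 1 : ℕ) : ℝ) := by push_cast; linarith
  rw [mul_one_div]
  apply div_le_div_of_nonneg_left (by norm_num) (by positivity)
  calc ((k + 1 : ℕ) : ℝ) ^ 2 ≤ ((k + 1 : ℕ) : ℝ) ^ (2 * (m + 1) + 1) :=
        pow_le_pow_right₀ h0 (by omega)
    _ ≤ _ := pow_le_pow_left₀ (by linarith) h1 _

lemma sech_bound (m : ℕ) (E : ℕ → ℝ) (hE : eulerChar E) : ∃ C : ℝ, 0 ≤ C ∧ ∀ x : ℝ,
    |1 / Real.cosh x - ∑ j ∈ Finset.range (m + 1), E j / (Nat.factorial (2 * j)) * x ^ (2 * j)|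
      ≤ C * x ^ (2 * (m + 1)) := by
  obtain ⟨C, hC0, hC⟩ := aux_rem m
  refine ⟨C, hC0, fun x => ?_⟩
  have hpi := Real.pi_pos
  have hsub : Tendsto (fun N : ℕ => 2 * N + 1) atTop atTop :=
    tendsto_atTop_mono (fun N => by simp only [id]; omega) tendsto_id
  have hpoly : Tendsto (fun N : ℕ => ∑ j ∈ Finset.range (m + 1),
      ((-1 : ℝ) ^ j * 2 * x ^ (2 * j) / Real.pi ^ (2 * j + 1)) *
        ∑ k ∈ Finset.range (2 * N + 1), (-1 : ℝ) ^ k / ((k : ℝ) + 1/2) ^ (2*j+1)) atTop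
      (nhds (∑ j ∈ Finset.range (m + 1), E j / (Nat.factorial (2 * j)) * x ^ (2 * j))) := by
    apply tendsto_finsetSum
    intro j _
    have := ((hE j).comp hsub).const_mul ((-1 : ℝ) ^ j * 2 * x ^ (2 * j) / Real.pi ^ (2 * j + 1))
    refine Tendsto.congr (fun N => rfl) (this.trans (le_of_eq (congrArg nhds ?_)))
    have hs : (-1 : ℝ) ^ j * (-1 : ℝ) ^ j = 1 := by rw [← mul_pow]; norm_num
    have hf : ((Nat.factorial (2 * j) : ℕ) : ℝ) ≠ 0 := by positivity
    field_simp
    linear_combination (E j * x ^ (2 * j)) * hs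
  have hlim := ((sech_series x).sub hpoly).abs
  refine le_of_tendsto hlim (Eventually.of_forall fun N => ?_)
  simp_rw [Finset.mul_sum]
  rw [Finset.sum_comm, ← Finset.sum_sub_distrib]
  refine (Finset.abs_sum_le_sum_abs _ _).trans ?_
  have hx : 0 ≤ x ^ (2 * (m + 1)) := by rw [pow_mul]; positivity
  refine le_trans ?_ (mul_le_mul_of_nonneg_right (hC (2 * N + 1)) hx)
  rw [Finset.sum_mul]
  apply Finset.sum_le_sum
  intro k _
  have ha : 0 < ((k : ℝ) + 1 / 2) * Real.pi := by positivity
  have hg := aux_geom _ x ha (m + 1)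
  have hre : ∑ j ∈ Finset.range (m + 1), ((-1 : ℝ) ^ j * 2 * x ^ (2 * j) / Real.pi ^ (2 * j + 1)) *
      ((-1 : ℝ) ^ k / ((k : ℝ) + 1/2) ^ (2*j+1)) = (-1 : ℝ) ^ k * ∑ j ∈ Finset.range (m + 1),
        (-1 : ℝ) ^ j * 2 * x ^ (2 * j) / (((k : ℝ) + 1 / 2) * Real.pi) ^ (2 * j + 1) := by
    rw [Finset.mul_sum]
    apply Finset.sum_congr rfl
    intro j _
    rw [mul_pow]
    have : ((k : ℝ) + 1 / 2) ≠ 0 := by positivity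
    generalize (k : ℝ) + 1 / 2 = b at *
    field_simp
  rw [hre, ← mul_sub, abs_mul, abs_pow, abs_neg, abs_one, one_pow, one_mul]
  generalize ((k : ℝ) + 1 / 2) * Real.pi = a at *
  rw [sub_eq_iff_eq_add'.2 hg, abs_mul, abs_div, abs_mul, abs_pow, abs_neg, abs_one, one_pow,
    one_mul, abs_of_nonneg hx, abs_of_pos (pow_pos ha _),
    abs_of_nonneg (by positivity : 0 ≤ 2 * a / (a ^ 2 + x ^ 2))]
  have hb : 2 * a / (a ^ 2 + x ^ 2) ≤ 2 / a := by
    rw [div_le_div_iff₀ (by positivity) ha]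
    nlinarith [sq_nonneg x]
  calc x ^ (2 * (m + 1)) / a ^ (2 * (m + 1)) * (2 * a / (a ^ 2 + x ^ 2))
      ≤ x ^ (2 * (m + 1)) / a ^ (2 * (m + 1)) * (2 / a) :=
        mul_le_mul_of_nonneg_left hb (by positivity)
    _ = _ := by rw [pow_succ a]; field_simp

lemma int_pow (n : ℕ) (t : ℝ) (ht : 0 < t) :
    MeasureTheory.IntegrableOn (fun x : ℝ => x ^ n * Real.exp (-t * x)) (Set.Ioi 0) := by
  have := integrableOn_rpow_mul_exp_neg_mul_rpow (s := n) (p := 1) (b := t)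
    (by have : (0 : ℝ) ≤ n := Nat.cast_nonneg n
        linarith) (by norm_num) ht
  simpa using this

lemma laplace_pow (n : ℕ) (t : ℝ) (ht : 0 < t) :
    ∫ x in Set.Ioi (0 : ℝ), x ^ n * Real.exp (-t * x) = (Nat.factorial n) / t ^ (n + 1) := by
  have h := Real.integral_rpow_mul_exp_neg_mul_Ioi (a := (n : ℝ) + 1) (r := t) (by positivity) ht
  rw [Real.Gamma_nat_eq_factorial] at h
  simp only [add_sub_cancel_right, Real.rpow_natCast] at h
  rw [show ((n : ℝ) + 1) = ((n + 1 : ℕ) : ℝ) by push_cast; ring, Real.rpow_natCast] at h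
  simp only [neg_mul]
  rw [h, div_pow, one_pow]
  ring

lemma int_sech (t : ℝ) (ht : 0 < t) :
    MeasureTheory.IntegrableOn (fun x : ℝ => 1 / Real.cosh x * Real.exp (-t * x)) (Set.Ioi 0) := by
  have h := int_pow 0 t ht
  simp only [pow_zero, one_mul] at h
  refine MeasureTheory.Integrable.mono' h ?_ ?_
  · apply Continuous.aestronglyMeasurable
    have : ∀ x, Real.cosh x ≠ 0 := fun x => (Real.cosh_pos x).ne'
    fun_prop (disch := assumption)
  · refine Eventually.of_forall fun x => ?_
    rw [Real.norm_eq_abs, abs_of_nonneg (by have := Real.cosh_pos x; positivity)]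
    have h1 : 1 / Real.cosh x ≤ 1 := by
      rw [div_le_one (Real.cosh_pos x)]; exact Real.one_le_cosh x
    exact mul_le_of_le_one_left (Real.exp_pos _).le h1

lemma laplace_eq (t : ℝ) (ht : 0 < t) :
    Tendsto (fun n => ∑ k ∈ Finset.range n, (-1 : ℝ) ^ k / (t + 1 + 2 * (k : ℝ))) atTop
      (nhds ((∫ x in Set.Ioi (0 : ℝ), 1 / Real.cosh x * Real.exp (-t * x)) / 2)) := by
  have hterm : ∀ k : ℕ, 0 < t + 1 + 2 * (k : ℝ) := fun k => by positivity
  have hI : ∀ s : ℝ, 0 < s → MeasureTheory.IntegrableOn (fun x : ℝ => Real.exp (-s * x)) (Set.Ioi 0) := by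
    intro s hs
    simpa using int_pow 0 s hs
  have hV : ∀ s : ℝ, 0 < s → ∫ x in Set.Ioi (0 : ℝ), Real.exp (-s * x) = 1 / s := by
    intro s hs
    simpa using laplace_pow 0 s hs
  have hS : ∀ n : ℕ, ∑ k ∈ Finset.range n, (-1 : ℝ) ^ k / (t + 1 + 2 * (k : ℝ))
      = ∫ x in Set.Ioi (0 : ℝ), ∑ k ∈ Finset.range n,
        (-1 : ℝ) ^ k * Real.exp (-(t + 1 + 2 * (k : ℝ)) * x) := by
    intro n
    rw [MeasureTheory.integral_finsetSum]
    · apply Finset.sum_congr rfl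
      intro k _
      rw [MeasureTheory.integral_const_mul, hV _ (hterm k), mul_one_div]
    · intro k _
      exact (hI _ (hterm k)).const_mul _
  have hpt : ∀ (n : ℕ) (x : ℝ), ∑ k ∈ Finset.range n,
        (-1 : ℝ) ^ k * Real.exp (-(t + 1 + 2 * (k : ℝ)) * x)
        = 1 / Real.cosh x * Real.exp (-t * x) / 2
          - (-1 : ℝ) ^ n * (1 / Real.cosh x) * Real.exp (-(t + 2 * n) * x) / 2 := by
    intro n x
    have hc := (Real.cosh_pos x).ne'
    induction n with
    | zero => simp
    | succ n ih =>
      rw [Finset.sum_range_succ, ih]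
      have e1 : Real.exp (-(t + 1 + 2 * (n : ℝ)) * x)
          = Real.exp (-(t + 2 * n) * x) * Real.exp (-x) := by rw [← Real.exp_add]; ring_nf
      have e2 : Real.exp (-(t + 2 * ((n + 1 : ℕ) : ℝ)) * x)
          = Real.exp (-(t + 2 * n) * x) * (Real.exp (-x) * Real.exp (-x)) := by
        rw [← Real.exp_add, ← Real.exp_add]; push_cast; ring_nf
      have e3 : Real.exp x * Real.exp (-x) = 1 := by rw [← Real.exp_add]; simp
      have e4 := Real.cosh_eq x
      rw [e1, e2, pow_succ]
      generalize Real.exp (-(t + 2 * (n : ℝ)) * x) = q at *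
      field_simp
      rw [e4]
      linear_combination q * (-1 : ℝ) ^ n * e3
  rw [tendsto_iff_norm_sub_tendsto_zero]
  have hz : Tendsto (fun n : ℕ => 1 / ((n : ℝ) + 1)) atTop (nhds 0) :=
    tendsto_one_div_add_atTop_nhds_zero_nat
  have hz2 : Tendsto (fun n : ℕ => 1 / (t + 2 * (n : ℝ))) atTop (nhds 0) := by
    simp only [one_div]
    apply Tendsto.inv_tendsto_atTop
    apply tendsto_atTop_add_const_left
    exact (tendsto_natCast_atTop_atTop).const_mul_atTop (by norm_num)
  refine squeeze_zero (fun n => norm_nonneg _) (fun n => ?_) hz2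
  have hpos : 0 < t + 2 * (n : ℝ) := by positivity
  rw [hS n, ← MeasureTheory.integral_div, ← MeasureTheory.integral_sub, ← hV _ hpos]
  · refine MeasureTheory.norm_integral_le_of_norm_le (hI _ hpos) (Eventually.of_forall fun x => ?_)
    rw [hpt n x, sub_sub_cancel_left, norm_neg, Real.norm_eq_abs, abs_div, abs_mul, abs_mul, abs_pow,
      abs_neg, abs_one, one_pow, one_mul, Real.abs_exp,
      abs_of_nonneg (by have := Real.cosh_pos x; positivity : 0 ≤ 1 / Real.cosh x)]
    have h1 : 1 / Real.cosh x ≤ 1 := by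
      rw [div_le_one (Real.cosh_pos x)]; exact Real.one_le_cosh x
    have h2 := mul_le_of_le_one_left (Real.exp_pos (-(t + 2 * (n : ℝ)) * x)).le h1
    have h3 := Real.exp_pos (-(t + 2 * (n : ℝ)) * x)
    rw [abs_of_pos (by norm_num : (0 : ℝ) < 2)]
    linarith
  · apply MeasureTheory.integrable_finsetSum
    intro k _
    exact (hI _ (hterm k)).const_mul _
  · exact (int_sech t ht).div_const 2

/-- For every `m ≥ 0`, writing `g t` for the sum of the convergent alternating series
`∑_{k=0}^∞ (-1)^k/(t+1+2k)` (which is `η(1,(t+1)/2)/2`, i.e. `(ψ(t/4+3/4) - ψ(t/4+1/4))/4`),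
one has `4 g t - 2 ∑_{k=0}^{m} 𝓔(2k)/t^{2k+1} = o(t^{-(2m+1)})` as `t → ∞`;
that is, `2 g t` admits the divergent asymptotic expansion `∑_{k=0}^∞ 𝓔(2k)/t^{2k+1}`. -/
theorem stmt_10 (m : ℕ) (E : ℕ → ℝ) (hE : eulerChar E) (g : ℝ → ℝ)
    (hg : ∀ t : ℝ, 0 < t →
      Tendsto (fun n => ∑ k ∈ Finset.range n, (-1 : ℝ) ^ k / (t + 1 + 2 * (k : ℝ)))
        atTop (nhds (g t))) :
    (fun t : ℝ => 4 * g t - 2 * ∑ k ∈ Finset.range (m + 1), E k / t ^ (2*k + 1))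
      =o[atTop] fun t : ℝ => (t ^ (2*m + 1))⁻¹ := by
  obtain ⟨C, hC0, hC⟩ := sech_bound m E hE
  have hbound : ∀ t : ℝ, 0 < t →
      |4 * g t - 2 * ∑ k ∈ Finset.range (m + 1), E k / t ^ (2*k + 1)|
        ≤ 2 * (C * ((Nat.factorial (2 * (m + 1))) / t ^ (2 * (m + 1) + 1))) := by
    intro t ht
    have hgt := tendsto_nhds_unique (hg t ht) (laplace_eq t ht)
    have hint : ∀ j ∈ Finset.range (m + 1), MeasureTheory.IntegrableOn
        (fun x : ℝ => E j / (Nat.factorial (2 * j)) * (x ^ (2 * j) * Real.exp (-t * x)))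
        (Set.Ioi 0) := fun j _ => (int_pow (2 * j) t ht).const_mul _
    have hP : ∑ k ∈ Finset.range (m + 1), E k / t ^ (2*k + 1)
        = ∫ x in Set.Ioi (0 : ℝ), ∑ j ∈ Finset.range (m + 1),
          E j / (Nat.factorial (2 * j)) * (x ^ (2 * j) * Real.exp (-t * x)) := by
      rw [MeasureTheory.integral_finsetSum _ hint]
      apply Finset.sum_congr rfl
      intro j _
      rw [MeasureTheory.integral_const_mul, laplace_pow _ _ ht]
      have hf : ((Nat.factorial (2 * j) : ℕ) : ℝ) ≠ 0 := by positivity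
      field_simp
    rw [hgt, hP, show ∀ a b : ℝ, 4 * (a / 2) - 2 * b = 2 * (a - b) by intros; ring,
      ← MeasureTheory.integral_sub (int_sech t ht) (MeasureTheory.integrable_finsetSum _ hint),
      abs_mul, abs_of_pos (by norm_num : (0 : ℝ) < 2), ← laplace_pow _ _ ht,
      ← MeasureTheory.integral_const_mul]
    refine mul_le_mul_of_nonneg_left ?_ (by norm_num)
    rw [← Real.norm_eq_abs]
    refine MeasureTheory.norm_integral_le_of_norm_le ((int_pow _ t ht).const_mul C)
      (Eventually.of_forall fun x => ?_)
    have hfac : 1 / Real.cosh x * Real.exp (-t * x) - ∑ j ∈ Finset.range (m + 1),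
          E j / (Nat.factorial (2 * j)) * (x ^ (2 * j) * Real.exp (-t * x))
        = (1 / Real.cosh x - ∑ j ∈ Finset.range (m + 1),
          E j / (Nat.factorial (2 * j)) * x ^ (2 * j)) * Real.exp (-t * x) := by
      rw [sub_mul, Finset.sum_mul]
      simp only [mul_assoc]
    rw [hfac, Real.norm_eq_abs, abs_mul, Real.abs_exp, ← mul_assoc]
    exact mul_le_mul_of_nonneg_right (hC x) (Real.exp_pos _).le
  set D : ℝ := 2 * (C * (Nat.factorial (2 * (m + 1)))) with hD
  have hO : (fun t : ℝ => 4 * g t - 2 * ∑ k ∈ Finset.range (m + 1), E k / t ^ (2*k + 1))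
      =O[atTop] fun t : ℝ => (t ^ 2)⁻¹ * (t ^ (2*m + 1))⁻¹ := by
    refine IsBigO.of_bound D ?_
    filter_upwards [eventually_gt_atTop 0] with t ht
    rw [Real.norm_eq_abs, Real.norm_eq_abs, abs_of_nonneg (by positivity :
      0 ≤ (t ^ 2)⁻¹ * (t ^ (2*m + 1))⁻¹)]
    refine (hbound t ht).trans (le_of_eq ?_)
    rw [hD, ← mul_inv, ← pow_add, show 2 + (2 * m + 1) = 2 * (m + 1) + 1 by ring]
    ring
  refine hO.trans_isLittleO ?_
  have h0 : (fun t : ℝ => (t ^ 2)⁻¹) =o[atTop] (fun _ : ℝ => (1 : ℝ)) := by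
    rw [isLittleO_one_iff]
    exact (tendsto_pow_atTop (by norm_num)).inv_tendsto_atTop
  simpa using h0.mul_isBigO (isBigO_refl (fun t : ℝ => (t ^ (2*m + 1))⁻¹) atTop)
end

section
/- For every complex number s ≠ 1, 2^{−s}(1 − 2^{1−s}) ζ(s) = −sin(πs/2) ∑_{k=0}^∞ E_s(π(k+1/2)) + (1/2) ∫_{−π/2}^{π/2} e^{−(π/2) sin θ} · sin((π/2) cos θ + (s−1)θ) / (cosh(π sin θ) − cos(π cos θ)) dθ, where the series converges absolutely. -/
open MeasureTheory Filter

/-- The generalized exponential integral `E_s(z) = ∫₁^∞ v^{-s} e^{-z v} dv`. -/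
noncomputable def expInt (s z : ℂ) : ℂ :=
  ∫ v in Set.Ioi (1 : ℝ), (v : ℂ) ^ (-s) * Complex.exp (-z * v)


noncomputable def hr (v : ℝ) : ℝ := 1 / (2 * Real.sinh (Real.pi * v / 2))

noncomputable def hc (v : ℝ) : ℂ := (hr v : ℂ)

lemma sinh_pos' {v : ℝ} (hv : 0 < v) : 0 < Real.sinh (Real.pi * v / 2) := by
  rw [Real.sinh_pos_iff]; have := Real.pi_pos; positivity

lemma hr_pos {v : ℝ} (hv : 0 < v) : 0 < hr v := by
  have := sinh_pos' hv
  unfold hr; positivity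

lemma hr_hasSum {v : ℝ} (hv : 0 < v) :
    HasSum (fun k : ℕ => Real.exp (-(Real.pi * ((k : ℝ) + 1/2)) * v)) (hr v) := by
  have hp := Real.pi_pos
  have h1 : Real.exp (-(Real.pi * v)) < 1 := by
    rw [Real.exp_lt_one_iff]; nlinarith
  have h := (hasSum_geometric_of_lt_one (Real.exp_pos _).le h1).mul_left
    (Real.exp (-(Real.pi * v / 2)))
  have e : hr v = Real.exp (-(Real.pi * v / 2)) * (1 - Real.exp (-(Real.pi * v)))⁻¹ := by
    unfold hr
    have hs := sinh_pos' hv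
    have : 2 * Real.sinh (Real.pi * v / 2) * Real.exp (-(Real.pi * v / 2))
        = (1 - Real.exp (-(Real.pi * v))) := by
      rw [Real.sinh_eq]
      have a1 : Real.exp (Real.pi * v / 2) * Real.exp (-(Real.pi * v / 2)) = 1 := by
        rw [← Real.exp_add]; simp
      have a2 : Real.exp (-(Real.pi * v / 2)) * Real.exp (-(Real.pi * v / 2))
          = Real.exp (-(Real.pi * v)) := by
        rw [← Real.exp_add]; congr 1; ring
      linear_combination a1 - a2
    rw [← this]
    have := Real.exp_pos (-(Real.pi * v / 2))
    field_simp
  rw [e]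
  convert! h using 2 with k
  rw [← Real.exp_nat_mul, ← Real.exp_add]; congr 1; ring

lemma hc_continuousOn : ContinuousOn hc (Set.Ioi 0) := by
  unfold hc hr
  apply Complex.continuous_ofReal.comp_continuousOn
  apply ContinuousOn.div continuousOn_const
  · exact (continuous_const.mul (Real.continuous_sinh.comp (by fun_prop))).continuousOn
  · intro v hv
    have := sinh_pos' hv
    positivity

lemma hc_locInt : LocallyIntegrableOn hc (Set.Ioi 0) :=
  hc_continuousOn.locallyIntegrableOn measurableSet_Ioi

lemma hc_norm {v : ℝ} (hv : 0 < v) : ‖hc v‖ = hr v := by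
  rw [hc, Complex.norm_real, Real.norm_of_nonneg (hr_pos hv).le]

lemma hc_top (a : ℝ) : hc =O[atTop] (fun x : ℝ => x ^ (-a)) := by
  have hp := Real.pi_gt_three
  refine Asymptotics.IsBigO.trans ?_
    (isLittleO_exp_neg_mul_rpow_atTop (a := Real.pi / 2) (by positivity) (-a)).isBigO
  apply Asymptotics.IsBigO.of_bound 2
  filter_upwards [eventually_ge_atTop 1] with v hv
  rw [hc_norm (by linarith), Real.norm_of_nonneg (Real.exp_pos _).le]
  have e1 : 2 ≤ Real.exp (Real.pi * v / 2) := by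
    have := Real.add_one_le_exp (Real.pi * v / 2); nlinarith
  have e2 : Real.exp (-(Real.pi * v / 2)) ≤ 1 := by
    rw [Real.exp_le_one_iff]; nlinarith
  unfold hr
  rw [div_le_iff₀ (by have := sinh_pos' (v := v) (by linarith); positivity), Real.sinh_eq]
  have a1 : Real.exp (Real.pi * v / 2) * Real.exp (-(Real.pi / 2) * v) = 1 := by
    rw [← Real.exp_add]; simp; ring
  have a3 := Real.exp_pos (-(Real.pi / 2) * v)
  nlinarith

lemma hc_bot : hc =O[nhdsWithin 0 (Set.Ioi 0)] (fun x : ℝ => x ^ (-(1 : ℝ))) := by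
  have hp := Real.pi_gt_three
  apply Asymptotics.IsBigO.of_bound 1
  filter_upwards [self_mem_nhdsWithin] with v hv
  have hv : 0 < v := hv
  rw [hc_norm hv, Real.rpow_neg_one, Real.norm_of_nonneg (by positivity), hr, one_mul, ← one_div]
  apply one_div_le_one_div_of_le hv
  have : Real.pi * v / 2 ≤ Real.sinh (Real.pi * v / 2) :=
    Real.self_le_sinh_iff.2 (by positivity)
  nlinarith

lemma hc_conv {s : ℂ} (hs : s.re < 0) : MellinConvergent hc (1 - s) :=
  mellinConvergent_of_isBigO_rpow (a := 2 - s.re) (b := 1) hc_locInt (hc_top _) (by simp)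
    hc_bot (by simp; linarith)

noncomputable def hi : ℝ → ℂ := (Set.Ioi 1).indicator hc

lemma hi_diff : Differentiable ℂ (mellin hi) := by
  intro s
  refine mellin_differentiableAt_of_isBigO_rpow (a := s.re + 1) (b := s.re - 1) ?_ ?_ (by simp)
    ?_ (by simp)
  · intro x hx
    obtain ⟨u, hu, h⟩ := hc_locInt x hx
    exact ⟨u, hu, h.indicator measurableSet_Ioi⟩
  · refine (hc_top _).congr' ?_ EventuallyEq.rfl
    filter_upwards [eventually_gt_atTop 1] with v hv
    simp [hi, hv]
  · refine (Asymptotics.isBigO_zero (E' := ℂ) _ _).congr' ?_ EventuallyEq.rfl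
    have : Set.Iio (1 : ℝ) ∈ nhdsWithin (0 : ℝ) (Set.Ioi 0) :=
      mem_nhdsWithin_of_mem_nhds (Iio_mem_nhds one_pos)
    filter_upwards [this] with v hv
    rw [hi, Set.indicator_of_notMem]
    simpa using (le_of_lt hv)

lemma hi_mellin (s : ℂ) : mellin hi (1 - s) = ∫ v in Set.Ioi (1 : ℝ), (v : ℂ) ^ (-s) * hc v := by
  have : ∀ t : ℝ, (t : ℂ) ^ (1 - s - 1) • hi t
      = (Set.Ioi 1).indicator (fun v : ℝ => (v : ℂ) ^ (-s) * hc v) t := by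
    intro t
    by_cases ht : t ∈ Set.Ioi (1 : ℝ)
    · rw [hi, Set.indicator_of_mem ht, Set.indicator_of_mem ht, smul_eq_mul]; congr 2; ring
    · rw [hi, Set.indicator_of_notMem ht, Set.indicator_of_notMem ht, smul_zero]
  rw [mellin]
  simp_rw [this]
  rw [setIntegral_indicator measurableSet_Ioi]
  congr 2
  ext x; simp

lemma expInt_int (s : ℂ) {b : ℝ} (hb : 0 < b) :
    IntegrableOn (fun v : ℝ => (v : ℂ) ^ (-s) * Complex.exp (-(b : ℂ) * v)) (Set.Ioi 1) := by
  have hcont : ContinuousOn (fun v : ℝ => (v : ℂ) ^ (-s) * Complex.exp (-(b : ℂ) * v))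
      (Set.Ici 1) := by
    apply ContinuousOn.mul
    · intro v hv
      have hv : 1 ≤ v := hv
      exact (Complex.continuousAt_ofReal_cpow_const _ _ (Or.inr (by linarith))).continuousWithinAt
    · fun_prop
  have hr : IntegrableOn (fun v : ℝ => v ^ (-s.re) * Real.exp (-b * v)) (Set.Ioi 1) := by
    apply integrable_of_isBigO_exp_neg (b := b / 2) (by positivity)
    · apply ContinuousOn.mul
      · exact continuousOn_id.rpow_const (fun v hv => Or.inl
          (by have : (1 : ℝ) ≤ v := hv
              simp; linarith))
      · fun_prop
    · have h0 := ((isLittleO_exp_neg_mul_rpow_atTop (a := b / 2) (by positivity) (s.re)).isBigO)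
      obtain ⟨C, hC⟩ := h0.bound
      apply Asymptotics.IsBigO.of_bound C
      filter_upwards [hC, eventually_gt_atTop 0] with v hv h0
      rw [Real.norm_of_nonneg (by positivity), Real.norm_of_nonneg (by positivity)] at *
      have : Real.exp (-b * v) = Real.exp (-(b/2) * v) * Real.exp (-(b/2) * v) := by
        rw [← Real.exp_add]; congr 1; ring
      rw [this, ← mul_assoc]
      apply mul_le_mul_of_nonneg_right _ (Real.exp_pos _).le
      rw [Real.rpow_neg h0.le, inv_mul_le_iff₀ (by positivity)]
      linarith
  refine Integrable.mono' hr
    ((hcont.mono Set.Ioi_subset_Ici_self).aestronglyMeasurable measurableSet_Ioi) ?_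
  filter_upwards [ae_restrict_mem measurableSet_Ioi] with v hv
  have hv : 1 < v := hv
  rw [norm_mul, Complex.norm_cpow_eq_rpow_re_of_pos (by linarith), Complex.norm_exp]
  simp

lemma expInt_hasSum (s : ℂ) :
    HasSum (fun k : ℕ => expInt s ((Real.pi : ℂ) * ((k : ℂ) + 1/2))) (mellin hi (1 - s)) := by
  have hp := Real.pi_pos
  rw [hi_mellin]
  have e : ∀ k : ℕ, ((Real.pi : ℂ) * ((k : ℂ) + 1/2)) = ((Real.pi * ((k : ℝ) + 1/2) : ℝ) : ℂ) := by
    intro k; push_cast; ring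
  have hI := fun k : ℕ => expInt_int s (b := Real.pi * ((k : ℝ) + 1/2)) (by positivity)
  have key := hasSum_integral_of_summable_integral_norm
    (F := fun (k : ℕ) (v : ℝ) => (v : ℂ) ^ (-s) *
      Complex.exp (-((Real.pi * ((k : ℝ) + 1/2) : ℝ) : ℂ) * v))
    (μ := volume.restrict (Set.Ioi 1)) hI ?_
  · simp only [expInt, e]
    convert! key using 1
    apply setIntegral_congr_fun measurableSet_Ioi
    intro v hv
    have hv : 1 < v := hv
    have := (Complex.hasSum_ofReal.2 (hr_hasSum (v := v) (by linarith))).mul_left ((v : ℂ) ^ (-s))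
    simp only
    rw [hc, ← this.tsum_eq]
    congr 1; ext k; congr 1; push_cast; rfl
  · have hg : Summable (fun k : ℕ => (Real.exp (-Real.pi)) ^ k *
        ∫ v in Set.Ioi (1 : ℝ), ‖(v : ℂ) ^ (-s) *
          Complex.exp (-((Real.pi * (((0 : ℕ) : ℝ) + 1/2) : ℝ) : ℂ) * v)‖) :=
      (summable_geometric_of_lt_one (Real.exp_pos _).le
        (by rw [Real.exp_lt_one_iff]; linarith)).mul_right _
    refine Summable.of_nonneg_of_le (fun k => integral_nonneg (fun v => norm_nonneg _)) ?_ hg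
    intro k
    rw [← integral_const_mul]
    apply setIntegral_mono_on (hI k).norm ((hI 0).norm.const_mul _) measurableSet_Ioi
    intro v hv
    have hv : 1 < v := hv
    rw [norm_mul, norm_mul, mul_left_comm]
    apply mul_le_mul_of_nonneg_left _ (norm_nonneg _)
    rw [Complex.norm_exp, Complex.norm_exp, ← Real.exp_nat_mul, ← Real.exp_add]
    apply Real.exp_le_exp.2
    have hk : (0 : ℝ) ≤ k := by positivity
    simp
    nlinarith [mul_nonneg hk hp.le]

lemma half_sum {w : ℂ} (hw : 1 < w.re) :
    HasSum (fun k : ℕ => 1 / (((k : ℝ) + 1/2 : ℝ) : ℂ) ^ w) (((2 : ℂ) ^ w - 1) * riemannZeta w) := by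
  have hS : Summable (fun n : ℕ => 1 / (n : ℂ) ^ w) := Complex.summable_one_div_nat_cpow.2 hw
  have hz := hS.hasSum
  rw [← zeta_eq_tsum_one_div_nat_cpow hw] at hz
  have h2 : (2 : ℂ) ^ w ≠ 0 := by simp [Complex.cpow_eq_zero_iff]
  have he : ∀ k : ℕ, 1 / (((2 * k : ℕ) : ℂ)) ^ w = (1 / (2 : ℂ) ^ w) * (1 / (k : ℂ) ^ w) := by
    intro k
    have := Complex.mul_cpow_ofReal_nonneg (a := 2) (b := k) (by norm_num) (by positivity) w
    push_cast at this ⊢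
    rw [this]; field_simp
  have ho : ∀ k : ℕ, 1 / (((k : ℝ) + 1/2 : ℝ) : ℂ) ^ w
      = (2 : ℂ) ^ w * (1 / (((2 * k + 1 : ℕ) : ℂ)) ^ w) := by
    intro k
    have := Complex.mul_cpow_ofReal_nonneg (a := 2) (b := (k : ℝ) + 1/2)
      (by norm_num) (by positivity) w
    have e : ((2 * k + 1 : ℕ) : ℂ) = ((2 : ℝ) : ℂ) * (((k : ℝ) + 1/2 : ℝ) : ℂ) := by
      push_cast; ring
    rw [e, this]
    push_cast
    field_simp
  have hE : HasSum (fun k : ℕ => 1 / (((2 * k : ℕ) : ℂ)) ^ w) ((1 / (2 : ℂ) ^ w) * riemannZeta w) := by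
    simp_rw [he]; exact hz.mul_left _
  have hO : Summable (fun k : ℕ => 1 / (((2 * k + 1 : ℕ) : ℂ)) ^ w) :=
    hS.comp_injective (i := fun k => 2 * k + 1) (fun a b h => by simpa using h)
  have hT := HasSum.even_add_odd (f := fun n : ℕ => 1 / (n : ℂ) ^ w) hE hO.hasSum
  have hval := hT.unique hz
  simp_rw [ho]
  have := hO.hasSum.mul_left ((2 : ℂ) ^ w)
  convert! this using 1
  rw [eq_sub_of_add_eq' hval]
  field_simp

lemma hc_mellin {s : ℂ} (hs : s.re < 0) :
    mellin hc (1 - s) = Complex.Gamma (1 - s) * (Real.pi : ℂ) ^ (s - 1) *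
      (((2 : ℂ) ^ (1 - s) - 1) * riemannZeta (1 - s)) := by
  have hp := Real.pi_pos
  have hw : 1 < (1 - s).re := by simp; linarith
  have hh := half_sum hw
  have hsum : Summable (fun k : ℕ => ‖(1 : ℂ)‖ / ((k : ℝ) + 1/2) ^ (1 - s).re) := by
    have := hh.summable.norm
    refine this.congr ?_
    intro k
    rw [norm_div, Complex.norm_cpow_eq_rpow_re_of_pos (by positivity)]
  have key := hasSum_mellin_pi_mul (a := fun _ : ℕ => (1 : ℂ)) (q := fun k : ℕ => (k : ℝ) + 1/2)
    (F := hc) (s := 1 - s) (fun k => Or.inr (by positivity)) (by linarith) ?_ hsum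
  · have k2 := hh.mul_left (Complex.Gamma (1 - s) * (Real.pi : ℂ) ^ (s - 1))
    refine key.unique ?_
    convert! k2 using 2 with k
    rw [neg_sub]; ring
  · intro t ht
    have := Complex.hasSum_ofReal.2 (hr_hasSum (v := t) ht)
    simp only [one_mul]
    have e : ∀ k : ℕ, -Real.pi * ((k : ℝ) + 1/2) * t = -(Real.pi * ((k : ℝ) + 1/2)) * t := by
      intro k; ring
    simp_rw [e]
    exact this

lemma zeta_side {s : ℂ} (hs : s.re < 0) :
    (2 : ℂ) ^ (-s) * (1 - (2 : ℂ) ^ (1 - s)) * riemannZeta s =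
      -Complex.sin ((Real.pi : ℂ) * s / 2) * mellin hc (1 - s) := by
  have hp := Real.pi_pos
  rw [hc_mellin hs]
  have h := riemannZeta_one_sub (s := 1 - s) (fun n h => by
    have := congrArg Complex.re h
    simp at this
    have h0 : (0 : ℝ) ≤ n := by positivity
    linarith) (fun h => by
    have := congrArg Complex.re h
    simp at this
    linarith)
  rw [sub_sub_cancel] at h
  have hcos : Complex.cos (Real.pi * (1 - s) / 2) = Complex.sin ((Real.pi : ℂ) * s / 2) := by
    rw [← Complex.cos_pi_div_two_sub]; congr 1; ring
  have hm := Complex.mul_cpow_ofReal_nonneg (a := 2) (b := Real.pi) (by norm_num) hp.le (-(1 - s))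
  push_cast at hm
  rw [hcos, hm, neg_sub] at h
  have h2 : (2 : ℂ) ^ (-s) * (2 * (2 : ℂ) ^ (s - 1)) = 1 := by
    nth_rewrite 2 [← Complex.cpow_one 2]
    rw [← Complex.cpow_add _ _ two_ne_zero, ← Complex.cpow_add _ _ two_ne_zero]
    simp
  rw [h]
  linear_combination (1 - (2 : ℂ) ^ (1 - s)) * Complex.sin ((Real.pi : ℂ) * s / 2) *
    Complex.Gamma (1 - s) * (Real.pi : ℂ) ^ (s - 1) * riemannZeta (1 - s) * h2

/-- splitting -/
lemma hc_split {s : ℂ} (hs : s.re < 0) :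
    mellin hc (1 - s) = (∫ v in (0 : ℝ)..1, (v : ℂ) ^ (-s) * hc v) + mellin hi (1 - s) := by
  have hcv := hc_conv hs
  rw [MellinConvergent] at hcv
  have e : (1 - s - 1) = -s := by ring
  rw [hi_mellin, mellin]
  simp_rw [e, smul_eq_mul] at hcv ⊢
  rw [intervalIntegral.integral_of_le zero_le_one, ← setIntegral_union _ measurableSet_Ioi
    (hcv.mono_set Set.Ioc_subset_Ioi_self)
    (hcv.mono_set (Set.Ioi_subset_Ioi zero_le_one)), Set.Ioc_union_Ioi_eq_Ioi zero_le_one]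
  exact Set.Ioc_disjoint_Ioi le_rfl

lemma sin_ne {z : ℂ} (h0 : z ≠ 0) (h1 : ‖z‖ < 2) : Complex.sin (Real.pi * z / 2) ≠ 0 := by
  intro h
  rw [Complex.sin_eq_zero_iff] at h
  obtain ⟨k, hk⟩ := h
  have hp : (Real.pi : ℂ) ≠ 0 := by exact_mod_cast Real.pi_ne_zero
  have : z = 2 * k := by
    have : (Real.pi : ℂ) * z = Real.pi * (2 * k) := by linear_combination 2 * hk
    exact mul_left_cancel₀ hp this
  subst this
  have hk0 : k ≠ 0 := by rintro rfl; simp at h0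
  rw [norm_mul, Complex.norm_intCast] at h1
  have : (1 : ℝ) ≤ |(k : ℝ)| := by exact_mod_cast Int.one_le_abs hk0
  simp at h1
  linarith

noncomputable def fw (s w : ℂ) : ℂ :=
  Complex.exp ((1 - s) * w) / Complex.sin (Real.pi * Complex.exp w / 2)

lemma fw_ne {w : ℂ} (hw : w.re ≤ 0) : Complex.sin (Real.pi * Complex.exp w / 2) ≠ 0 := by
  apply sin_ne (Complex.exp_ne_zero _)
  rw [Complex.norm_exp]
  have := Real.exp_le_one_iff.2 hw
  linarith

lemma fw_lower (s : ℂ) (x : ℝ) : fw s (x + (-(Real.pi / 2) : ℝ) * Complex.I) =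
    Complex.exp (Complex.I * (Real.pi * s / 2)) *
      (Complex.exp ((1 - s) * x) * (2 * hc (Real.exp x))) := by
  have he : Complex.exp (x + (-(Real.pi / 2) : ℝ) * Complex.I) = -Complex.I * Real.exp x := by
    rw [Complex.exp_add]; push_cast
    rw [neg_mul, Complex.exp_neg, Complex.exp_pi_div_two_mul_I, Complex.inv_I]; ring
  have h2 : Complex.exp ((1 - s) * (x + (-(Real.pi / 2) : ℝ) * Complex.I)) =
      -Complex.I * Complex.exp (Complex.I * (Real.pi * s / 2)) * Complex.exp ((1 - s) * x) := by
    have : (1 - s) * (x + (-(Real.pi / 2) : ℝ) * Complex.I) =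
      -(Real.pi / 2 * Complex.I) + (Complex.I * (Real.pi * s / 2) + (1 - s) * x) := by
      push_cast; ring
    rw [this, Complex.exp_add, Complex.exp_add, Complex.exp_neg, Complex.exp_pi_div_two_mul_I,
      Complex.inv_I]; ring
  have h3 : Complex.sin (Real.pi * (-Complex.I * Real.exp x) / 2) =
      -Complex.I * (Real.sinh (Real.pi * Real.exp x / 2) : ℝ) := by
    have : Real.pi * (-Complex.I * Real.exp x) / 2 =
      -((Real.pi * Real.exp x / 2 : ℝ) * Complex.I) := by push_cast; ring
    rw [this, Complex.sin_neg, Complex.sin_mul_I, Complex.ofReal_sinh]; ring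
  have hne : ((Real.sinh (Real.pi * Real.exp x / 2) : ℝ) : ℂ) ≠ 0 := by
    exact_mod_cast (sinh_pos' (Real.exp_pos x)).ne'
  rw [fw, he, h2, h3, hc, hr, Complex.ofReal_div, Complex.ofReal_mul]
  have hI := Complex.I_ne_zero
  simp only [Complex.ofReal_one, Complex.ofReal_ofNat]
  field_simp

lemma fw_upper (s : ℂ) (x : ℝ) : fw s (x + (Real.pi / 2 : ℝ) * Complex.I) =
    Complex.exp (-(Complex.I * (Real.pi * s / 2))) *
      (Complex.exp ((1 - s) * x) * (2 * hc (Real.exp x))) := by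
  have he : Complex.exp (x + (Real.pi / 2 : ℝ) * Complex.I) = Complex.I * Real.exp x := by
    rw [Complex.exp_add]; push_cast
    rw [Complex.exp_pi_div_two_mul_I]; ring
  have h2 : Complex.exp ((1 - s) * (x + (Real.pi / 2 : ℝ) * Complex.I)) =
      Complex.I * Complex.exp (-(Complex.I * (Real.pi * s / 2))) * Complex.exp ((1 - s) * x) := by
    have : (1 - s) * (x + (Real.pi / 2 : ℝ) * Complex.I) =
      (Real.pi / 2 * Complex.I) + (-(Complex.I * (Real.pi * s / 2)) + (1 - s) * x) := by
      push_cast; ring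
    rw [this, Complex.exp_add, Complex.exp_add, Complex.exp_pi_div_two_mul_I]; ring
  have h3 : Complex.sin (Real.pi * (Complex.I * Real.exp x) / 2) =
      Complex.I * (Real.sinh (Real.pi * Real.exp x / 2) : ℝ) := by
    have : Real.pi * (Complex.I * Real.exp x) / 2 =
      ((Real.pi * Real.exp x / 2 : ℝ) * Complex.I) := by push_cast; ring
    rw [this, Complex.sin_mul_I, Complex.ofReal_sinh]; ring
  have hne : ((Real.sinh (Real.pi * Real.exp x / 2) : ℝ) : ℂ) ≠ 0 := by
    exact_mod_cast (sinh_pos' (Real.exp_pos x)).ne'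
  rw [fw, he, h2, h3, hc, hr, Complex.ofReal_div, Complex.ofReal_mul]
  have hI := Complex.I_ne_zero
  simp only [Complex.ofReal_one, Complex.ofReal_ofNat]
  field_simp

/-- Change of variables `v = exp x`. -/
lemma subst_exp (s : ℂ) {ε : ℝ} (h0 : 0 < ε) :
    ∫ x in (Real.log ε)..0, Complex.exp ((1 - s) * x) * (2 * hc (Real.exp x)) =
      2 * ∫ v in ε..1, (v : ℂ) ^ (-s) * hc v := by
  have h := intervalIntegral.integral_deriv_smul_comp' (a := Real.log ε) (b := 0)
    (f := Real.exp) (f' := Real.exp) (g := fun v : ℝ => (v : ℂ) ^ (-s) * hc v)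
    (fun x _ => Real.hasDerivAt_exp x) Real.continuous_exp.continuousOn ?_
  · rw [Real.exp_log h0, Real.exp_zero] at h
    rw [← h, ← intervalIntegral.integral_const_mul]
    congr 1; ext x
    have e : Complex.exp ((1 - s) * x) = Real.exp x * ((Real.exp x : ℝ) : ℂ) ^ (-s) := by
      rw [Complex.cpow_def_of_ne_zero (by exact_mod_cast (Real.exp_pos x).ne'),
        ← Complex.ofReal_log (Real.exp_pos x).le, Real.log_exp, Complex.ofReal_exp,
        ← Complex.exp_add]
      congr 1; ring
    simp only [Function.comp, Complex.real_smul]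
    rw [e]; ring
  · have : Real.exp '' (Set.uIcc (Real.log ε) 0) ⊆ Set.Ioi 0 := by
      rintro _ ⟨x, _, rfl⟩; exact Real.exp_pos x
    refine ContinuousOn.mono ?_ this
    refine ContinuousOn.mul ?_ hc_continuousOn
    intro v hv
    have hv : 0 < v := hv
    exact (Complex.continuousAt_ofReal_cpow_const _ _ (Or.inr hv.ne')).continuousWithinAt

lemma rect (s : ℂ) {ε : ℝ} (h0 : 0 < ε) (h1 : ε ≤ 1) :
    2 * Complex.I * Complex.sin (Real.pi * s / 2) * (2 * ∫ v in ε..1, (v : ℂ) ^ (-s) * hc v)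
    + Complex.I * (∫ y in (-(Real.pi/2))..(Real.pi/2), fw s (y * Complex.I))
    = Complex.I * (∫ y in (-(Real.pi/2))..(Real.pi/2), fw s (Real.log ε + y * Complex.I)) := by
  have hl : Real.log ε ≤ 0 := Real.log_nonpos h0.le h1
  have h := Complex.integral_boundary_rect_eq_zero_of_differentiableOn (fw s)
    (⟨Real.log ε, -(Real.pi/2)⟩) (⟨0, Real.pi/2⟩) ?_
  · simp only [fw_lower, fw_upper, intervalIntegral.integral_const_mul, subst_exp s h0,
      Complex.ofReal_zero, zero_add, smul_eq_mul] at h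
    have hsin : 2 * Complex.I * Complex.sin (Real.pi * s / 2) =
      Complex.exp (Complex.I * (Real.pi * s / 2)) - Complex.exp (-(Complex.I * (Real.pi * s / 2)))
      := by
      rw [Complex.sin]
      have : -(Real.pi * s / 2) * Complex.I = -(Complex.I * (Real.pi * s / 2)) := by ring
      rw [this, mul_comm (Real.pi * s / 2) Complex.I]
      linear_combination (Complex.exp (-(Complex.I * (Real.pi * s / 2))) - Complex.exp (Complex.I * (Real.pi * s / 2))) * Complex.I_mul_I
    rw [hsin]
    linear_combination h
  · intro w hw
    have hre : w.re ≤ 0 := by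
      have := hw.1
      simp only [Set.mem_preimage, Set.uIcc_of_le hl] at this
      exact this.2
    have := fw_ne hre
    apply DifferentiableAt.differentiableWithinAt
    unfold fw
    fun_prop (disch := assumption)

lemma sin_lower : ∃ δ > 0, ∀ z : ℂ, z ≠ 0 → ‖z‖ < δ → ‖z‖ ≤ ‖Complex.sin (Real.pi * z / 2)‖ := by
  have hp := Real.pi_gt_three
  have hd : HasDerivAt (fun z : ℂ => Complex.sin (Real.pi * z / 2)) (Real.pi / 2 : ℂ) 0 := by
    have h1 : HasDerivAt (fun z : ℂ => Real.pi * z / 2) (Real.pi / 2 : ℂ) 0 := by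
      simpa using ((hasDerivAt_id (0 : ℂ)).const_mul (Real.pi : ℂ)).div_const 2
    simpa using h1.csin
  have ht := hd.tendsto_slope.norm
  have hn : ‖(Real.pi / 2 : ℂ)‖ = Real.pi / 2 := by
    rw [norm_div, Complex.norm_real, Real.norm_of_nonneg (by linarith)]; simp
  rw [hn] at ht
  have he := ht.eventually (lt_mem_nhds (show (1 : ℝ) < Real.pi / 2 by linarith))
  rw [eventually_nhdsWithin_iff, Metric.eventually_nhds_iff] at he
  obtain ⟨δ, hδ, h⟩ := he
  refine ⟨δ, hδ, fun z hz hzd => ?_⟩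
  have := h (y := z) (by simpa using hzd) hz
  rw [slope_def_field] at this
  simp only [mul_zero, zero_div, Complex.sin_zero, sub_zero, norm_div] at this
  rw [lt_div_iff₀ (norm_pos_iff.2 hz), one_mul] at this
  exact this.le

lemma arc_tendsto {s : ℂ} (hs : s.re < 0) :
    Tendsto (fun ε : ℝ => ∫ y in (-(Real.pi/2))..(Real.pi/2), fw s (Real.log ε + y * Complex.I))
      (nhdsWithin 0 (Set.Ioi 0)) (nhds 0) := by
  have hp := Real.pi_pos
  obtain ⟨δ, hδ, hlow⟩ := sin_lower
  apply squeeze_zero_norm'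
    (a := fun ε : ℝ => ε ^ (-s.re) * Real.exp (|s.im| * (Real.pi / 2)) *
      |Real.pi / 2 - -(Real.pi / 2)|)
  · have hm : Set.Iio δ ∈ nhdsWithin (0 : ℝ) (Set.Ioi 0) :=
      mem_nhdsWithin_of_mem_nhds (Iio_mem_nhds hδ)
    filter_upwards [self_mem_nhdsWithin, hm] with ε h0 h1
    have h0 : 0 < ε := h0
    have h1 : ε < δ := h1
    apply intervalIntegral.norm_integral_le_of_norm_le_const
    intro y hy
    rw [Set.uIoc_of_le (by linarith)] at hy
    set w : ℂ := Real.log ε + y * Complex.I with hw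
    have hwre : w.re = Real.log ε := by simp [hw]
    have hwim : w.im = y := by simp [hw]
    have hz : ‖Complex.exp w‖ = ε := by rw [Complex.norm_exp, hwre, Real.exp_log h0]
    have hl := hlow (Complex.exp w) (Complex.exp_ne_zero _) (by rw [hz]; exact h1)
    have hpos : 0 < ‖Complex.exp w‖ := by rw [hz]; exact h0
    have e : Complex.exp ((1 - s) * w) = Complex.exp (-s * w) * Complex.exp w := by
      rw [← Complex.exp_add]; congr 1; ring
    have h2 : ‖Complex.exp (-s * w)‖ ≤ ε ^ (-s.re) * Real.exp (|s.im| * (Real.pi / 2)) := by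
      rw [Complex.norm_exp, Real.rpow_def_of_pos h0, ← Real.exp_add]
      apply Real.exp_le_exp.2
      simp only [Complex.mul_re, Complex.neg_re, Complex.neg_im, hwre, hwim]
      have : s.im * y ≤ |s.im| * (Real.pi / 2) := by
        refine (le_abs_self _).trans ?_
        rw [abs_mul]
        exact mul_le_mul_of_nonneg_left (abs_le.2 ⟨hy.1.le, hy.2⟩) (abs_nonneg _)
      linarith
    rw [fw, norm_div, e, norm_mul, mul_div_assoc]
    calc _ ≤ ‖Complex.exp (-s * w)‖ * 1 := by
          apply mul_le_mul_of_nonneg_left _ (norm_nonneg _)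
          exact div_le_one_of_le₀ hl (norm_nonneg _)
      _ ≤ _ := by rw [mul_one]; exact h2
  · have h : Tendsto (fun ε : ℝ => ε ^ (-s.re)) (nhdsWithin 0 (Set.Ioi 0)) (nhds 0) := by
      have := (Real.continuousAt_rpow_const 0 (-s.re) (Or.inr (by linarith))).tendsto
      rw [Real.zero_rpow (by linarith)] at this
      exact this.mono_left nhdsWithin_le_nhds
    simpa using (h.mul_const (Real.exp (|s.im| * (Real.pi / 2)))).mul_const
      (|Real.pi / 2 - -(Real.pi / 2)|)

lemma arc {s : ℂ} (hs : s.re < 0) :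
    ∫ y in (-(Real.pi/2))..(Real.pi/2), fw s (y * Complex.I) =
      -4 * Complex.sin (Real.pi * s / 2) * ∫ v in (0:ℝ)..1, (v : ℂ) ^ (-s) * hc v := by
  have hcv := hc_conv hs
  rw [MellinConvergent] at hcv
  have e : (1 - s - 1) = -s := by ring
  simp_rw [e, smul_eq_mul] at hcv
  have hInt : IntegrableOn (fun v : ℝ => (v : ℂ) ^ (-s) * hc v) (Set.uIcc 0 1) := by
    rw [Set.uIcc_of_le zero_le_one, integrableOn_Icc_iff_integrableOn_Ioc]
    exact hcv.mono_set Set.Ioc_subset_Ioi_self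
  have hcont := intervalIntegral.continuousOn_primitive_interval_left hInt
  have ht : Tendsto (fun ε : ℝ => ∫ v in ε..1, (v : ℂ) ^ (-s) * hc v)
      (nhdsWithin 0 (Set.Ioi 0)) (nhds (∫ v in (0:ℝ)..1, (v : ℂ) ^ (-s) * hc v)) := by
    have h := (hcont 0 (by simp)).tendsto
    refine h.mono_left ?_
    rw [Set.uIcc_of_le zero_le_one]
    rw [← nhdsWithin_Ioc_eq_nhdsGT (show (0 : ℝ) < 1 by norm_num)]
    exact nhdsWithin_mono _ Set.Ioc_subset_Icc_self
  have hL := ((ht.const_mul 2).const_mul (2 * Complex.I * Complex.sin (Real.pi * s / 2))).add_const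
    (Complex.I * (∫ y in (-(Real.pi/2))..(Real.pi/2), fw s (y * Complex.I)))
  have hR := (arc_tendsto hs).const_mul Complex.I
  have heq := tendsto_nhds_unique_of_eventuallyEq hL hR (by
    have hm : Set.Iio (1 : ℝ) ∈ nhdsWithin (0 : ℝ) (Set.Ioi 0) :=
      mem_nhdsWithin_of_mem_nhds (Iio_mem_nhds one_pos)
    filter_upwards [self_mem_nhdsWithin, hm] with ε h0 h1
    exact rect s h0 (le_of_lt h1))
  apply mul_left_cancel₀ Complex.I_ne_zero
  linear_combination heq

noncomputable def Dc (θ : ℝ) : ℂ :=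
  ((Real.cosh (Real.pi * Real.sin θ) : ℂ) - (Real.cos (Real.pi * Real.cos θ) : ℂ))

lemma arg_eq (θ : ℝ) : Real.pi * Complex.exp (θ * Complex.I) / 2 =
    Real.pi / 2 * Real.cos θ + Real.pi / 2 * Real.sin θ * Complex.I := by
  rw [Complex.exp_mul_I, Complex.ofReal_cos, Complex.ofReal_sin]; ring

lemma Dc_eq (θ : ℝ) : Dc θ = Complex.sin (Real.pi * Complex.exp (θ * Complex.I) / 2) *
    (2 * Complex.sin (Real.pi / 2 * Real.cos θ - Real.pi / 2 * Real.sin θ * Complex.I)) := by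
  rw [arg_eq, Dc, Complex.ofReal_cosh, Complex.ofReal_cos (Real.pi * Real.cos θ),
    Complex.ofReal_mul, Complex.ofReal_mul]
  generalize (Real.cos θ : ℂ) = c
  generalize (Real.sin θ : ℂ) = d
  have e1 : (Real.pi : ℂ) * d = 2 * (Real.pi / 2 * d) := by ring
  have e2 : (Real.pi : ℂ) * c = 2 * (Real.pi / 2 * c) := by ring
  rw [e1, e2]
  generalize (Real.pi : ℂ) / 2 * d = Y
  generalize (Real.pi : ℂ) / 2 * c = X
  rw [Complex.cosh_two_mul, Complex.cos_two_mul', Complex.sin_add, Complex.sin_sub,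
    Complex.sin_mul_I, Complex.cos_mul_I]
  have hI := Complex.I_sq
  have h1 := Complex.sin_sq_add_cos_sq X
  have h2 := Complex.cosh_sq Y
  ring_nf
  rw [hI]
  linear_combination (1 - 2 * Complex.cosh Y ^ 2) * h1 + (2 * Complex.cos X ^ 2 - 1) * h2

lemma Dc_ne (θ : ℝ) : Dc θ ≠ 0 := by
  rw [Dc_eq]
  have h1 : Complex.sin (Real.pi * Complex.exp (θ * Complex.I) / 2) ≠ 0 := fw_ne (by simp)
  have h2 : Complex.sin (Real.pi * Complex.exp ((-θ : ℝ) * Complex.I) / 2) ≠ 0 := fw_ne (by simp)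
  rw [arg_eq] at h2
  have e : (Real.pi / 2 * Real.cos θ - Real.pi / 2 * Real.sin θ * Complex.I : ℂ) =
    Real.pi / 2 * Real.cos (-θ) + Real.pi / 2 * Real.sin (-θ) * Complex.I := by
    rw [Real.cos_neg, Real.sin_neg]; push_cast; ring
  rw [e]
  exact mul_ne_zero h1 (mul_ne_zero two_ne_zero h2)

lemma Dc_cont : Continuous Dc := by
  unfold Dc
  have h1 : Continuous (fun θ : ℝ => Real.cosh (Real.pi * Real.sin θ)) :=
    Real.continuous_cosh.comp (by fun_prop)
  exact (Complex.continuous_ofReal.comp h1).sub (by fun_prop)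

noncomputable def gJ (s : ℂ) (θ : ℝ) : ℂ :=
  (Real.exp (-(Real.pi/2) * Real.sin θ) : ℂ) *
    Complex.sin ((Real.pi : ℂ)/2 * (Real.cos θ : ℂ) + (s - 1) * (θ : ℂ)) / Dc θ

noncomputable def gP (s : ℂ) (θ : ℝ) : ℂ :=
  -Complex.I * (Complex.exp (Real.pi / 2 * Real.sin θ) *
    Complex.exp (Complex.I * (Real.pi / 2 * Real.cos θ - (s - 1) * θ))) / Dc θ

noncomputable def gQ (s : ℂ) (θ : ℝ) : ℂ :=
  Complex.I * (Complex.exp (-(Real.pi / 2 * Real.sin θ)) *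
    Complex.exp (-(Complex.I * (Real.pi / 2 * Real.cos θ + (s - 1) * θ)))) / Dc θ

lemma gP_cont (s : ℂ) : Continuous (gP s) := by
  unfold gP
  exact Continuous.div (by fun_prop) Dc_cont Dc_ne

lemma gQ_cont (s : ℂ) : Continuous (gQ s) := by
  unfold gQ
  exact Continuous.div (by fun_prop) Dc_cont Dc_ne

lemma Dc_neg (θ : ℝ) : Dc (-θ) = Dc θ := by
  simp [Dc]

lemma gPQ (s : ℂ) (θ : ℝ) : gP s (-θ) + gQ s θ = 2 * gJ s θ := by
  unfold gP gQ gJ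
  rw [Dc_neg, Real.sin_neg, Real.cos_neg, ← add_div, ← mul_div_assoc]
  congr 1
  rw [Complex.sin, Complex.ofReal_exp]
  push_cast
  have e1 : Complex.I * (Real.pi / 2 * Complex.cos θ - (s - 1) * -θ)
    = (Real.pi / 2 * Complex.cos θ + (s - 1) * θ) * Complex.I := by ring
  have e2 : -(Complex.I * (Real.pi / 2 * Complex.cos θ + (s - 1) * θ))
    = -(Real.pi / 2 * Complex.cos θ + (s - 1) * θ) * Complex.I := by ring
  have e3 : (Real.pi : ℂ) / 2 * -Complex.sin θ = -(Real.pi / 2) * Complex.sin θ := by ring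
  have e4 : -((Real.pi : ℂ) / 2 * Complex.sin θ) = -(Real.pi / 2) * Complex.sin θ := by ring
  rw [e1, e2, e3, e4]
  ring

lemma fw_PQ (s : ℂ) (θ : ℝ) : fw s (θ * Complex.I) = gP s θ + gQ s θ := by
  have hD := Dc_ne θ
  have hS : Complex.sin (Real.pi * Complex.exp (θ * Complex.I) / 2) ≠ 0 := fw_ne (by simp)
  have e : fw s (θ * Complex.I) = Complex.exp ((1 - s) * (θ * Complex.I)) *
    (2 * Complex.sin (Real.pi / 2 * Real.cos θ - Real.pi / 2 * Real.sin θ * Complex.I)) / Dc θ := by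
    rw [fw, div_eq_div_iff hS hD, Dc_eq]; ring
  rw [e, gP, gQ, ← add_div]
  congr 1
  rw [Complex.sin]
  generalize (Real.pi / 2 * Real.cos θ : ℂ) = X
  generalize (Real.pi / 2 * Real.sin θ : ℂ) = Y
  have a1 : (X - Y * Complex.I) * Complex.I = Y + Complex.I * X := by
    linear_combination -Y * Complex.I_mul_I
  have a2 : -(X - Y * Complex.I) * Complex.I = -Y + -(Complex.I * X) := by
    linear_combination Y * Complex.I_mul_I
  have a3 : Complex.I * (X - (s - 1) * θ) = Complex.I * X + (1 - s) * (θ * Complex.I) := by ring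
  have a4 : -(Complex.I * (X + (s - 1) * θ)) = -(Complex.I * X) + (1 - s) * (θ * Complex.I) := by
    ring
  rw [a1, a2, a3, a4]
  simp only [Complex.exp_add]
  ring

lemma J_eq (s : ℂ) : ∫ y in (-(Real.pi/2))..(Real.pi/2), fw s (y * Complex.I) =
    2 * ∫ θ in (-(Real.pi/2))..(Real.pi/2), gJ s θ := by
  have hP := (gP_cont s).intervalIntegrable (μ := volume) (-(Real.pi/2)) (Real.pi/2)
  have hP' := ((gP_cont s).comp continuous_neg).intervalIntegrable (μ := volume)
    (-(Real.pi/2)) (Real.pi/2)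
  have hQ := (gQ_cont s).intervalIntegrable (μ := volume) (-(Real.pi/2)) (Real.pi/2)
  simp_rw [fw_PQ]
  rw [← intervalIntegral.integral_const_mul, intervalIntegral.integral_add hP hQ]
  simp_rw [← gPQ]
  have h := intervalIntegral.integral_comp_neg (a := -(Real.pi/2)) (b := Real.pi/2) (gP s)
  rw [neg_neg] at h
  rw [← h]
  exact (intervalIntegral.integral_add hP' hQ).symm

lemma J_diff : Differentiable ℂ (fun s => ∫ θ in (-(Real.pi/2))..(Real.pi/2), gJ s θ) := by
  intro s
  let F' : ℂ → ℝ → ℂ := fun s θ => (Real.exp (-(Real.pi/2) * Real.sin θ) : ℂ) *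
    (Complex.cos ((Real.pi : ℂ)/2 * (Real.cos θ : ℂ) + (s - 1) * (θ : ℂ)) * θ) / Dc θ
  have hc1 : ∀ s, Continuous (gJ s) := by
    intro s
    unfold gJ
    exact Continuous.div (by fun_prop) Dc_cont Dc_ne
  have hc2 : Continuous (fun p : ℂ × ℝ => F' p.1 p.2) := by
    exact Continuous.div (by fun_prop) (Dc_cont.comp continuous_snd) (fun p => Dc_ne p.2)
  obtain ⟨C, hC⟩ := ((isCompact_closedBall s 1).prod
    (isCompact_uIcc (a := -(Real.pi/2)) (b := Real.pi/2))).exists_bound_of_continuousOn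
    hc2.continuousOn
  have := intervalIntegral.hasDerivAt_integral_of_dominated_loc_of_deriv_le (𝕜 := ℂ)
    (μ := volume) (F := gJ) (F' := F') (x₀ := s) (s := Metric.closedBall s 1)
    (a := -(Real.pi/2)) (b := Real.pi/2) (bound := fun _ => C)
    (Metric.closedBall_mem_nhds s one_pos)
    (Eventually.of_forall fun x => (hc1 x).aestronglyMeasurable)
    ((hc1 s).intervalIntegrable _ _)
    (hc2.comp (Continuous.prodMk_right s)).aestronglyMeasurable
    (Eventually.of_forall fun t ht x hx => hC (x, t) ⟨hx, Set.uIoc_subset_uIcc ht⟩)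
    intervalIntegrable_const
    (Eventually.of_forall fun t ht x hx => by
      have h1 : HasDerivAt (fun x : ℂ => (Real.pi : ℂ)/2 * (Real.cos t : ℂ) + (x - 1) * (t : ℂ))
        (t : ℂ) x := by
        simpa using (((hasDerivAt_id x).sub_const 1).mul_const (t : ℂ)).const_add
          ((Real.pi : ℂ)/2 * (Real.cos t : ℂ))
      exact (h1.csin.const_mul _).div_const _)
  exact this.2.differentiableAt

lemma main_neg {s : ℂ} (hs : s.re < 0) :
    (2 : ℂ) ^ (-s) * (1 - (2 : ℂ) ^ (1 - s)) * riemannZeta s =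
      -Complex.sin ((Real.pi : ℂ) * s / 2) * mellin hi (1 - s)
      + (1/2) * ∫ θ in (-(Real.pi/2))..(Real.pi/2), gJ s θ := by
  rw [zeta_side hs, hc_split hs]
  have h1 := arc hs
  rw [J_eq] at h1
  linear_combination (-1/4) * h1

lemma main_all {s : ℂ} (hs : s ≠ 1) :
    (2 : ℂ) ^ (-s) * (1 - (2 : ℂ) ^ (1 - s)) * riemannZeta s =
      -Complex.sin ((Real.pi : ℂ) * s / 2) * mellin hi (1 - s)
      + (1/2) * ∫ θ in (-(Real.pi/2))..(Real.pi/2), gJ s θ := by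
  have key := AnalyticOnNhd.eqOn_of_preconnected_of_eventuallyEq (𝕜 := ℂ) (U := {1}ᶜ)
    (f := fun s : ℂ => (2 : ℂ) ^ (-s) * (1 - (2 : ℂ) ^ (1 - s)) * riemannZeta s)
    (g := fun s : ℂ => -Complex.sin ((Real.pi : ℂ) * s / 2) * mellin hi (1 - s)
      + (1/2) * ∫ θ in (-(Real.pi/2))..(Real.pi/2), gJ s θ)
    (z₀ := -1) ?_ ?_
    (isConnected_compl_singleton_of_one_lt_rank (by simp) 1).isPreconnected
    (by simp; norm_num) ?_
  · exact key hs
  · refine DifferentiableOn.analyticOnNhd (fun z hz ↦ ?_) isOpen_compl_singleton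
    apply DifferentiableAt.differentiableWithinAt
    have hz' := differentiableAt_riemannZeta hz
    have h1 : DifferentiableAt ℂ (fun s : ℂ => (2 : ℂ) ^ (-s)) z :=
      (differentiableAt_id.neg).const_cpow (Or.inl two_ne_zero)
    have h2 : DifferentiableAt ℂ (fun s : ℂ => (2 : ℂ) ^ (1 - s)) z :=
      (differentiableAt_id.const_sub 1).const_cpow (Or.inl two_ne_zero)
    exact (h1.mul (h2.const_sub 1)).mul hz'
  · refine DifferentiableOn.analyticOnNhd (fun z hz ↦ ?_) isOpen_compl_singleton
    apply DifferentiableAt.differentiableWithinAt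
    have h1 : DifferentiableAt ℂ (fun s : ℂ => mellin hi (1 - s)) z :=
      (hi_diff (1 - z)).comp z (differentiableAt_id.const_sub 1)
    have h2 := J_diff z
    have h3 : DifferentiableAt ℂ (fun s : ℂ => -Complex.sin ((Real.pi : ℂ) * s / 2)) z := by
      fun_prop
    exact (h3.mul h1).add (h2.const_mul _)
  · refine eventually_of_mem ((isOpen_lt Complex.continuous_re continuous_const).mem_nhds ?_)
      (fun t (ht : t.re < 0) ↦ main_neg ht)
    simp

/-- For every complex `s ≠ 1`,
`2^{-s}(1 - 2^{1-s}) ζ(s) = -sin(πs/2) ∑_{k=0}^∞ E_s(π(k+1/2))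
  + (1/2) ∫_{-π/2}^{π/2} e^{-(π/2) sin θ} sin((π/2) cos θ + (s-1)θ)
      / (cosh(π sin θ) - cos(π cos θ)) dθ`,
where the series converges absolutely. -/
theorem stmt_11 (s : ℂ) (hs : s ≠ 1) :
    Summable (fun k : ℕ => expInt s ((Real.pi : ℂ) * ((k : ℂ) + 1/2))) ∧
    (2 : ℂ) ^ (-s) * (1 - (2 : ℂ) ^ (1 - s)) * riemannZeta s =
      -Complex.sin ((Real.pi : ℂ) * s / 2) *
          ∑' k : ℕ, expInt s ((Real.pi : ℂ) * ((k : ℂ) + 1/2))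
      + (1/2) * ∫ θ in (-(Real.pi/2))..(Real.pi/2),
          (Real.exp (-(Real.pi/2) * Real.sin θ) : ℂ) *
            Complex.sin ((Real.pi : ℂ)/2 * (Real.cos θ : ℂ) + (s - 1) * (θ : ℂ)) /
            ((Real.cosh (Real.pi * Real.sin θ) : ℂ) - (Real.cos (Real.pi * Real.cos θ) : ℂ)) := by
  have h := expInt_hasSum s
  refine ⟨h.summable, ?_⟩
  rw [h.tsum_eq]
  exact main_all hs
end

section
/- For every integer n ≥ 0, ∫_{−π/2}^{π/2} sin((π/2) cos θ + (2n−1)θ) · e^{−(π/2) sin θ} / (cosh(π sin θ) − cos(π cos θ)) dθ = (−1)^n B_{2n} π^{2n} (2^{1−2n} − 1)/Γ(2n+1). -/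
open Complex in
noncomputable def auxG (t : ℂ) : ℂ := Complex.exp ((1/2) * t) / dslope Complex.exp 0 t

noncomputable def auxT (f : ℂ → ℂ) : PowerSeries ℂ :=
  PowerSeries.mk fun n => iteratedDeriv n f 0 / (n.factorial : ℂ)

theorem auxT_mul {f g : ℂ → ℂ} (hf : AnalyticAt ℂ f 0) (hg : AnalyticAt ℂ g 0) :
    auxT (f * g) = auxT f * auxT g := by
  ext n
  rw [PowerSeries.coeff_mul, auxT, PowerSeries.coeff_mk,
    iteratedDeriv_mul hf.contDiffAt hg.contDiffAt, Finset.Nat.sum_antidiagonal_eq_sum_range_succ_mk,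
    Finset.sum_div]
  refine Finset.sum_congr rfl fun i hi => ?_
  simp only [auxT, PowerSeries.coeff_mk]
  have hi' : i ≤ n := by simpa [Nat.lt_succ_iff] using hi
  have h := Nat.choose_mul_factorial_mul_factorial hi'
  have h' : (n.choose i : ℂ) * i.factorial * (n - i).factorial = n.factorial := by exact_mod_cast h
  have h1 : (i.factorial : ℂ) ≠ 0 := by exact_mod_cast i.factorial_ne_zero
  have h2 : ((n-i).factorial : ℂ) ≠ 0 := by exact_mod_cast (n-i).factorial_ne_zero
  have h3 : (n.factorial : ℂ) ≠ 0 := by exact_mod_cast n.factorial_ne_zero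
  rw [div_mul_div_comm, div_eq_div_iff h3 (mul_ne_zero h1 h2), ← h']
  ring

theorem auxD_of_ne {t : ℂ} (ht : t ≠ 0) : dslope Complex.exp 0 t = (Complex.exp t - 1) / t := by
  rw [dslope_of_ne _ ht, slope_def_field]; simp

theorem auxD_ne_zero {t : ℂ} (ht : ‖t‖ < 2 * Real.pi) : dslope Complex.exp 0 t ≠ 0 := by
  by_cases h : t = 0
  · subst h; simp
  · rw [auxD_of_ne h]
    refine div_ne_zero ?_ h
    intro h0
    rw [sub_eq_zero, Complex.exp_eq_one_iff] at h0
    obtain ⟨n, rfl⟩ := h0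
    have hn : n ≠ 0 := by rintro rfl; simp at h
    have : (1:ℝ) ≤ |(n:ℝ)| := by exact_mod_cast Int.one_le_abs hn
    have e : ‖(n:ℂ) * (2 * Real.pi * Complex.I)‖ = |(n:ℝ)| * (2 * Real.pi) := by
      simp [abs_of_pos Real.pi_pos]
    rw [e] at ht
    nlinarith [Real.pi_pos]

theorem auxG_diff : DifferentiableOn ℂ auxG (Metric.ball 0 (2 * Real.pi)) := by
  unfold auxG
  refine DifferentiableOn.fun_div (by fun_prop) ?_ ?_
  · exact (Complex.differentiableOn_dslope
      (Metric.ball_mem_nhds _ (by positivity))).2 (by fun_prop)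
  · intro t ht
    exact auxD_ne_zero (by simpa using ht)

theorem auxG_of_ne {t : ℂ} (ht : t ≠ 0) (h : ‖t‖ < 2 * Real.pi) :
    auxG t * (Complex.exp t - 1) = t * Complex.exp ((1/2) * t) := by
  have := auxD_ne_zero h
  rw [auxG]
  rw [auxD_of_ne ht] at *
  have h2 : Complex.exp t - 1 ≠ 0 := by intro h; simp [h] at this
  field_simp

theorem auxT_G : auxT auxG = PowerSeries.C 2 * PowerSeries.rescale (1/2) (bernoulliPowerSeries ℂ)
    - bernoulliPowerSeries ℂ := by
  have hG : AnalyticAt ℂ auxG 0 := auxG_diff.analyticAt (Metric.ball_mem_nhds _ (by positivity))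
  have hE : AnalyticAt ℂ (fun t => Complex.exp t - 1) 0 := by fun_prop
  have hX : AnalyticAt ℂ (fun t : ℂ => t) 0 := by fun_prop
  have hE2 : AnalyticAt ℂ (fun t : ℂ => Complex.exp ((1/2) * t)) 0 := by fun_prop
  have key : auxT (auxG * fun t => Complex.exp t - 1)
      = auxT ((fun t : ℂ => t) * fun t => Complex.exp ((1/2) * t)) := by
    ext n
    simp only [auxT, PowerSeries.coeff_mk]
    congr 1
    apply Filter.EventuallyEq.iteratedDeriv_eq
    filter_upwards [Metric.ball_mem_nhds (0:ℂ) (show 0 < 2 * Real.pi by positivity)] with t ht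
    by_cases h0 : t = 0
    · simp [h0]
    · exact auxG_of_ne h0 (by simpa using ht)
  rw [auxT_mul hG hE, auxT_mul hX hE2] at key
  have e1 : auxT (fun t => Complex.exp t - 1) = PowerSeries.exp ℂ - 1 := by
    ext n
    have h := iteratedDeriv_cexp_const_mul n 1
    simp only [one_mul, one_pow] at h
    rw [auxT, PowerSeries.coeff_mk, iteratedDeriv_fun_sub (by fun_prop) (by fun_prop), h,
      iteratedDeriv_const]
    rcases n with _ | n <;> simp [PowerSeries.coeff_exp, PowerSeries.coeff_one]
  have e2 : auxT (fun t : ℂ => t) = PowerSeries.X := by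
    ext n
    rw [auxT, PowerSeries.coeff_mk, iteratedDeriv_fun_id_zero, PowerSeries.coeff_X]
    split_ifs with h <;> simp [h]
  have e3 : auxT (fun t : ℂ => Complex.exp ((1/2) * t))
      = PowerSeries.rescale (1/2) (PowerSeries.exp ℂ) := by
    ext n
    rw [auxT, PowerSeries.coeff_mk, iteratedDeriv_cexp_const_mul]
    simp [PowerSeries.coeff_exp, PowerSeries.coeff_rescale, div_eq_mul_inv]
  have e4 : PowerSeries.rescale (1/2) (PowerSeries.exp ℂ) * PowerSeries.rescale (1/2) (PowerSeries.exp ℂ)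
      = PowerSeries.exp ℂ := by
    rw [PowerSeries.exp_mul_exp_eq_exp_add]; norm_num [PowerSeries.rescale_one]
  have e5 := congrArg (PowerSeries.rescale (1/2 : ℂ)) (bernoulliPowerSeries_mul_exp_sub_one ℂ)
  rw [map_mul, map_sub, map_one, PowerSeries.rescale_X] at e5
  have e6 := bernoulliPowerSeries_mul_exp_sub_one ℂ
  have e7 : (PowerSeries.C (2:ℂ)) * PowerSeries.C (1/2) = 1 := by
    rw [← map_mul]; norm_num
  rw [e1, e2, e3] at key
  have hne : PowerSeries.exp ℂ - 1 ≠ 0 := by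
    intro h; rw [h, mul_zero] at e6; exact PowerSeries.X_ne_zero e6.symm
  apply mul_right_cancel₀ hne
  rw [key]
  generalize PowerSeries.rescale (1/2) (PowerSeries.exp ℂ) = E at *
  generalize PowerSeries.rescale (1/2) (bernoulliPowerSeries ℂ) = R at *
  rw [sub_mul, e6, ← e4]
  linear_combination (-(PowerSeries.C (2:ℂ)) * (E+1)) * e5 - (PowerSeries.X * (E+1)) * e7

theorem auxG_coeff (n : ℕ) : iteratedDeriv (2*n) auxG 0 / ((2*n).factorial : ℂ)
    = (((2:ℝ) ^ (1 - 2 * (n : ℤ)) - 1) * ((bernoulli (2*n) : ℚ) : ℝ) / (Nat.factorial (2*n) : ℝ) : ℝ) := by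
  have h := congrArg (PowerSeries.coeff (2*n)) auxT_G
  rw [auxT, PowerSeries.coeff_mk] at h
  rw [h, map_sub, PowerSeries.coeff_C_mul, PowerSeries.coeff_rescale, bernoulliPowerSeries,
    PowerSeries.coeff_mk]
  have : (2:ℂ) ^ (1 - 2 * (n : ℤ)) = 2 * (1/2)^(2*n) := by
    rw [zpow_sub₀ (by norm_num)]
    norm_cast
    simp [div_eq_mul_inv]
  simp
  rw [this]
  simp
  ring

theorem auxG_neg {t : ℂ} (ht : t ≠ 0) (h : ‖t‖ < 2 * Real.pi) : auxG (-t) = auxG t := by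
  have h1 := auxG_of_ne ht h
  have h2 := auxG_of_ne (neg_ne_zero.2 ht) (by simpa using h)
  have hne : Complex.exp t - 1 ≠ 0 := by
    have := auxD_ne_zero h
    rw [auxD_of_ne ht] at this
    intro h; simp [h] at this
  apply mul_right_cancel₀ hne
  rw [h1]
  have e0 : Complex.exp t * Complex.exp (-t) = 1 := by rw [← Complex.exp_add]; simp
  have e1 : Complex.exp (1/2 * -t) * Complex.exp t = Complex.exp (1/2 * t) := by
    rw [← Complex.exp_add]; congr 1; ring
  linear_combination (-Complex.exp t) * h2 + t * e1 + auxG (-t) * e0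

theorem aux_int (n : ℕ) :
    ∫ θ in (-(Real.pi/2))..(Real.pi/2), auxG (Real.pi * Complex.exp (((θ + Real.pi/2 : ℝ) : ℂ) * Complex.I)) /
      (Real.pi * Complex.exp (((θ + Real.pi/2 : ℝ) : ℂ) * Complex.I)) ^ (2*n)
    = Real.pi * (iteratedDeriv (2*n) auxG 0 / ((2*n).factorial : ℂ)) := by
  have hpi := Real.pi_pos
  set K : ℝ → ℂ := fun φ => auxG (Real.pi * Complex.exp ((φ : ℂ) * Complex.I)) /
      (Real.pi * Complex.exp ((φ : ℂ) * Complex.I)) ^ (2*n) with hK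
  have hnorm : ∀ φ : ℝ, ‖(Real.pi * Complex.exp ((φ : ℂ) * Complex.I))‖ = Real.pi := by
    intro φ; simp [Complex.norm_exp_ofReal_mul_I, abs_of_pos hpi]
  have hne : ∀ φ : ℝ, (Real.pi * Complex.exp ((φ : ℂ) * Complex.I)) ≠ 0 := by
    intro φ; simp [hpi.ne']
  have hc : Continuous K := by
    refine Continuous.div ?_ (by fun_prop) (fun φ => pow_ne_zero _ (hne φ))
    refine auxG_diff.continuousOn.comp_continuous (by fun_prop) ?_
    intro φ
    rw [mem_ball_zero_iff, hnorm]; linarith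
  have hper : Function.Periodic K Real.pi := by
    intro φ
    have : (Real.pi * Complex.exp (((φ + Real.pi : ℝ) : ℂ) * Complex.I))
        = -(Real.pi * Complex.exp ((φ : ℂ) * Complex.I)) := by
      push_cast
      rw [add_mul, Complex.exp_add, Complex.exp_pi_mul_I]; ring
    simp only [hK, this]
    rw [auxG_neg (hne φ) (by rw [hnorm]; linarith), Even.neg_pow (even_two_mul n)]
  have hcauchy := DifferentiableOn.circleIntegral_one_div_sub_center_pow_smul (c := 0) hpi (2*n)
    (auxG_diff.mono (Metric.closedBall_subset_ball (by linarith)))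
  have hL : (∮ z in C(0, Real.pi), (1 / (z - 0) ^ (2*n + 1)) • auxG z)
      = Complex.I * ∫ φ in (0:ℝ)..(2 * Real.pi), K φ := by
    rw [circleIntegral, ← intervalIntegral.integral_const_mul]
    refine intervalIntegral.integral_congr fun φ _ => ?_
    simp only [deriv_circleMap, circleMap, zero_add, sub_zero, smul_eq_mul, hK]
    have := hne φ
    rw [pow_succ]
    field_simp
  have hdbl : ∫ φ in (0:ℝ)..(2 * Real.pi), K φ = 2 * ∫ φ in (0:ℝ)..Real.pi, K φ := by
    rw [← intervalIntegral.integral_add_adjacent_intervals (b := Real.pi)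
      (hc.intervalIntegrable _ _) (hc.intervalIntegrable _ _)]
    have := hper.intervalIntegral_add_eq Real.pi 0
    rw [zero_add, ← two_mul] at this
    rw [this]; ring
  have hsh := intervalIntegral.integral_comp_add_right (a := -(Real.pi/2)) (b := Real.pi/2) K (Real.pi/2)
  rw [show -(Real.pi/2) + Real.pi/2 = 0 by ring, show (Real.pi/2) + Real.pi/2 = Real.pi by ring] at hsh
  rw [show (∫ θ in (-(Real.pi/2))..(Real.pi/2), auxG (Real.pi * Complex.exp (((θ + Real.pi/2 : ℝ) : ℂ) * Complex.I)) /
      (Real.pi * Complex.exp (((θ + Real.pi/2 : ℝ) : ℂ) * Complex.I)) ^ (2*n)) = _ from hsh]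
  rw [hL, hdbl, smul_eq_mul] at hcauchy
  have : (2 * Complex.I) ≠ 0 := by simp
  apply mul_left_cancel₀ this
  linear_combination hcauchy

theorem aux_den (θ : ℝ) :
    0 < Real.cosh (Real.pi * Real.sin θ) - Real.cos (Real.pi * Real.cos θ) := by
  have hpi := Real.pi_pos
  by_cases h : Real.sin θ = 0
  · have : Real.cos θ = 1 ∨ Real.cos θ = -1 := by
      have := Real.sin_sq_add_cos_sq θ
      rw [h] at this
      have h2 : (Real.cos θ - 1) * (Real.cos θ + 1) = 0 := by linear_combination this
      rcases mul_eq_zero.1 h2 with h3 | h3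
      · left; linarith
      · right; linarith
    rcases this with h' | h' <;> simp [h, h']
  · have := Real.one_lt_cosh.2 (mul_ne_zero hpi.ne' h)
    linarith [Real.cos_le_one (Real.pi * Real.cos θ)]

theorem aux_pt (n : ℕ) (θ : ℝ) :
    Real.sin (Real.pi/2 * Real.cos θ + (2 * (n : ℝ) - 1) * θ) *
          Real.exp (-(Real.pi/2) * Real.sin θ) /
          (Real.cosh (Real.pi * Real.sin θ) - Real.cos (Real.pi * Real.cos θ))
    + Real.sin (Real.pi/2 * Real.cos (-θ) + (2 * (n : ℝ) - 1) * (-θ)) *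
          Real.exp (-(Real.pi/2) * Real.sin (-θ)) /
          (Real.cosh (Real.pi * Real.sin (-θ)) - Real.cos (Real.pi * Real.cos (-θ)))
    = (-1)^n * Real.pi^(2*n) * (2 / Real.pi) * (auxG (Real.pi * Complex.exp (((θ + Real.pi/2 : ℝ) : ℂ) * Complex.I)) /
      (Real.pi * Complex.exp (((θ + Real.pi/2 : ℝ) : ℂ) * Complex.I)) ^ (2*n)).re := by
  have hpi := Real.pi_pos
  have hden := aux_den θ
  obtain ⟨x, hx⟩ : ∃ x, x = Real.pi/2 * Real.cos θ := ⟨_, rfl⟩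
  obtain ⟨y, hy⟩ : ∃ y, y = Real.pi/2 * Real.sin θ := ⟨_, rfl⟩
  obtain ⟨m, hm⟩ : ∃ m, m = (2 * (n : ℝ) - 1) * θ := ⟨_, rfl⟩
  have hx2 : Real.pi * Real.cos θ = 2 * x := by rw [hx]; ring
  have hy2 : Real.pi * Real.sin θ = 2 * y := by rw [hy]; ring
  have hN : Real.cosh (2 * y) - Real.cos (2 * x)
      = 2 * ((Real.sin x * Real.cosh y)^2 + (Real.cos x * Real.sinh y)^2) := by
    rw [Real.cosh_two_mul, Real.cos_two_mul]
    have h1 := Real.sin_sq_add_cos_sq x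
    have h2 := Real.cosh_sq y
    rw [mul_pow, mul_pow, h2]
    linear_combination (-2 * Real.sinh y ^ 2 - 2) * h1
  rw [Real.cos_neg, Real.sin_neg, mul_neg, mul_neg, mul_neg, Real.cosh_neg, neg_mul, neg_neg, hx2, hy2,
    ← hx, ← hy, ← hm]
  rw [hx2, hy2, hN] at hden
  rw [hN]
  set z : ℂ := Complex.exp ((θ : ℂ) * Complex.I) with hz
  have hzne : z ≠ 0 := Complex.exp_ne_zero _
  have ht : (Real.pi * Complex.exp (((θ + Real.pi/2 : ℝ) : ℂ) * Complex.I)) = Real.pi * Complex.I * z := by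
    push_cast
    rw [add_mul, Complex.exp_add, Complex.exp_pi_div_two_mul_I]; ring
  have hzn : ‖z‖ = 1 := Complex.norm_exp_ofReal_mul_I θ
  have hzxy : (Real.pi : ℂ) * z = 2 * (x + y * Complex.I) := by
    rw [hz, Complex.exp_mul_I, hx, hy]; push_cast; ring
  have hpc : (Real.pi : ℂ) ≠ 0 := by exact_mod_cast hpi.ne'
  have hG := auxG_of_ne (t := Real.pi * Complex.I * z) (by simp [hpc, hzne])
    (by simp [hzn, abs_of_pos hpi]; linarith)
  set w : ℂ := x + y * Complex.I with hw
  have hS : Complex.sin w = (Real.sin x * Real.cosh y : ℝ) + (Real.cos x * Real.sinh y : ℝ) * Complex.I := by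
    rw [hw, Complex.sin_add_mul_I]; push_cast; ring
  have hSn : Complex.normSq (Complex.sin w)
      = (Real.sin x * Real.cosh y)^2 + (Real.cos x * Real.sinh y)^2 := by
    rw [hS, Complex.normSq_add_mul_I]
  have hSne : Complex.sin w ≠ 0 := by
    intro h; rw [← Complex.normSq_eq_zero, hSn] at h; rw [h] at hden; simp at hden
  have hG2 : auxG (Real.pi * Complex.I * z) = Real.pi * z / (2 * Complex.sin w) := by
    rw [eq_div_iff (by simp [hSne])]
    have a1 : Real.pi * Complex.I * z = w * Complex.I + w * Complex.I := by
      linear_combination Complex.I * hzxy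
    have a2 : (1/2 : ℂ) * (Real.pi * Complex.I * z) = w * Complex.I := by
      linear_combination (1/2) * Complex.I * hzxy
    have a3 : Complex.exp (Real.pi * Complex.I * z) = Complex.exp (w * Complex.I) * Complex.exp (w * Complex.I) := by
      rw [a1, Complex.exp_add]
    have a4 : Complex.exp (-w * Complex.I) * Complex.exp (w * Complex.I) = 1 := by
      rw [← Complex.exp_add]; simp
    rw [a2, a3] at hG
    have hI := Complex.I_mul_I
    apply mul_right_cancel₀ (Complex.exp_ne_zero (w * Complex.I))
    unfold Complex.sin
    linear_combination (-Complex.I) * hG + auxG (Real.pi * Complex.I * z) * Complex.I * a4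
      - Real.pi * z * Complex.exp (w * Complex.I) * hI
  have hQ : (((-1)^n * Real.pi^(2*n) * (2 / Real.pi) : ℝ) : ℂ) *
      (auxG (Real.pi * Complex.I * z) / (Real.pi * Complex.I * z) ^ (2*n))
      = Complex.exp ((-m : ℝ) * Complex.I) / Complex.sin w := by
    have b1 : Complex.exp ((-m : ℝ) * Complex.I) * z ^ (2*n) = z := by
      rw [hz, ← Complex.exp_nat_mul, ← Complex.exp_add, hm]
      congr 1; push_cast; ring
    have b2 : (Real.pi * Complex.I * z) ^ (2*n) = (-1)^n * Real.pi^(2*n) * z^(2*n) := by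
      rw [mul_pow, mul_pow, pow_mul Complex.I, Complex.I_sq]; ring
    rw [hG2, b2]
    push_cast
    have b3 : ((-1 : ℂ))^n ≠ 0 := by simp
    push_cast at b1
    rw [neg_mul] at b1 ⊢
    field_simp
    linear_combination -b1
  have hQr := congrArg Complex.re hQ
  rw [Complex.re_ofReal_mul] at hQr
  rw [ht, hQr, Complex.div_re, hSn, Complex.exp_ofReal_mul_I_re, Complex.exp_ofReal_mul_I_im, hS]
  simp only [Complex.add_re, Complex.add_im, Complex.ofReal_re, Complex.ofReal_im, Complex.re_ofReal_mul,
    Complex.im_ofReal_mul, Complex.I_re, Complex.I_im, mul_zero, mul_one, add_zero, zero_add,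
    Real.cos_neg, Real.sin_neg, Real.sin_add]
  have hD : (Real.sin x * Real.cosh y)^2 + (Real.cos x * Real.sinh y)^2 ≠ 0 := by
    intro h; rw [h] at hden; simp at hden
  generalize (Real.sin x * Real.cosh y)^2 + (Real.cos x * Real.sinh y)^2 = D at *
  rw [Real.cosh_eq, Real.sinh_eq]
  field_simp
  ring

/-- For every `n ≥ 0`,
`∫_{-π/2}^{π/2} sin((π/2) cos θ + (2n-1)θ) e^{-(π/2) sin θ}
   / (cosh(π sin θ) - cos(π cos θ)) dθ = (-1)^n B_{2n} π^{2n} (2^{1-2n} - 1)/Γ(2n+1)`. -/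
theorem stmt_12 (n : ℕ) :
    ∫ θ in (-(Real.pi/2))..(Real.pi/2),
        Real.sin (Real.pi/2 * Real.cos θ + (2 * (n : ℝ) - 1) * θ) *
          Real.exp (-(Real.pi/2) * Real.sin θ) /
          (Real.cosh (Real.pi * Real.sin θ) - Real.cos (Real.pi * Real.cos θ))
      = (-1) ^ n * ((bernoulli (2*n) : ℚ) : ℝ) * Real.pi ^ (2*n) *
          ((2 : ℝ) ^ (1 - 2 * (n : ℤ)) - 1) / (Nat.factorial (2*n) : ℝ) := by
  have hc : Continuous fun θ : ℝ => Real.sin (Real.pi/2 * Real.cos θ + (2 * (n : ℝ) - 1) * θ) *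
          Real.exp (-(Real.pi/2) * Real.sin θ) /
          (Real.cosh (Real.pi * Real.sin θ) - Real.cos (Real.pi * Real.cos θ)) := by
    refine Continuous.div (by fun_prop) ?_ (fun θ => (aux_den θ).ne')
    exact (Real.continuous_cosh.comp (by fun_prop)).sub (by fun_prop)
  have hpt := aux_pt n
  have hint := aux_int n
  set F : ℝ → ℝ := fun θ : ℝ => Real.sin (Real.pi/2 * Real.cos θ + (2 * (n : ℝ) - 1) * θ) *
          Real.exp (-(Real.pi/2) * Real.sin θ) /
          (Real.cosh (Real.pi * Real.sin θ) - Real.cos (Real.pi * Real.cos θ)) with hF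
  set K : ℝ → ℂ := fun θ : ℝ => auxG (Real.pi * Complex.exp (((θ + Real.pi/2 : ℝ) : ℂ) * Complex.I)) /
      (Real.pi * Complex.exp (((θ + Real.pi/2 : ℝ) : ℂ) * Complex.I)) ^ (2*n) with hK
  have hpi := Real.pi_pos
  have hneg : ∫ θ in (-(Real.pi/2))..(Real.pi/2), F (-θ) = ∫ θ in (-(Real.pi/2))..(Real.pi/2), F θ := by
    rw [intervalIntegral.integral_comp_neg, neg_neg]
  have hsum : ∫ θ in (-(Real.pi/2))..(Real.pi/2), (F θ + F (-θ))
      = 2 * ∫ θ in (-(Real.pi/2))..(Real.pi/2), F θ := by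
    rw [intervalIntegral.integral_add (hc.intervalIntegrable _ _)
      (Continuous.intervalIntegrable (u := fun θ => F (-θ)) (hc.comp continuous_neg) _ _), hneg]; ring
  have hKc : Continuous K := by
    refine Continuous.div ?_ (by fun_prop) (fun φ => pow_ne_zero _ (by simp [hpi.ne']))
    refine auxG_diff.continuousOn.comp_continuous (by fun_prop) ?_
    intro φ
    rw [mem_ball_zero_iff, norm_mul, Complex.norm_exp_ofReal_mul_I]
    simp [abs_of_pos hpi]; linarith
  have hre : ∫ θ in (-(Real.pi/2))..(Real.pi/2), (K θ).re
      = (∫ θ in (-(Real.pi/2))..(Real.pi/2), K θ).re :=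
    intervalIntegral.intervalIntegral_re (hKc.intervalIntegrable _ _)
  have h2 : ∫ θ in (-(Real.pi/2))..(Real.pi/2), (F θ + F (-θ))
      = (-1)^n * Real.pi^(2*n) * (2 / Real.pi) * ∫ θ in (-(Real.pi/2))..(Real.pi/2), (K θ).re := by
    rw [← intervalIntegral.integral_const_mul]
    exact intervalIntegral.integral_congr fun θ _ => hpt θ
  rw [hsum, hre, show (∫ θ in (-(Real.pi/2))..(Real.pi/2), K θ) = _ from hint, auxG_coeff,
    Complex.re_ofReal_mul, Complex.ofReal_re] at h2
  change ∫ θ in (-(Real.pi/2))..(Real.pi/2), F θ = _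
  field_simp at h2 ⊢
  linear_combination h2
end
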